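/- arXiv:1611.02838 — 2 statements merged into one kernel-verified Lean document; each statement's English description precedes it below -/
import Mathlib

section
/- For 𝔽 ∈ {ℝ, ℂ} and integers n, m ≥ 2: (Vol S̃q_{𝒞_𝔽} / Vol B_{𝓜_{𝒞_𝔽}})^{1/D_{𝓜_{𝒞_𝔽}}} ≤ 2^{10+(3−dim_ℝ𝔽)/2}·√3·(nm−1)^{−1/2}, where dim_ℝ𝔽 = 1 for 𝔽 = ℝ and dim_ℝ𝔽 = 2 for 𝔽 = ℂ. -/
open MeasureTheory MvPolynomial

noncomputable section

namespace BiformPaper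

/-- The weight function on the variables: the `x`-variables get weight `(1,0)` and the
`y`-variables get weight `(0,1)`. -/
def bw (n m : ℕ) : Fin n ⊕ Fin m → ℕ × ℕ := Sum.elim (fun _ => (1, 0)) (fun _ => (0, 1))

/-- The set of biforms of bidegree `(k₁, k₂)`: real polynomials in
`x = (x₁, …, xₙ)` and `y = (y₁, …, y_m)`, homogeneous of degree `k₁` in `x` and of degree
`k₂` in `y`. -/
def Biform (n m k₁ k₂ : ℕ) : Set (MvPolynomial (Fin n ⊕ Fin m) ℝ) :=
  {f | MvPolynomial.IsWeightedHomogeneous (bw n m) f (k₁, k₂)}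

/-- Evaluation of a polynomial at a point `(x, y) ∈ ℝⁿ × ℝᵐ`. -/
def beval {n m : ℕ} (f : MvPolynomial (Fin n ⊕ Fin m) ℝ) (x : Fin n → ℝ) (y : Fin m → ℝ) : ℝ :=
  eval (Sum.elim x y) f

/-- The Euclidean unit sphere `S^{n-1}` in `ℝⁿ`. -/
def unitSphere (n : ℕ) : Set (Fin n → ℝ) := {x | ∑ i, x i ^ 2 = 1}

/-- `σ` is the normalized uniform measure on the unit sphere `S^{n-1} ⊆ ℝⁿ`, i.e., the
unique rotation-invariant Borel probability measure concentrated on the sphere. -/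
structure IsSphereMeasure (n : ℕ) (σ : Measure (Fin n → ℝ)) : Prop where
  prob : IsProbabilityMeasure σ
  onSphere : σ (unitSphere n)ᶜ = 0
  invariant : ∀ Q : Matrix (Fin n) (Fin n) ℝ, Q * Q.transpose = 1 → σ.map Q.mulVec = σ

/-- The average `∫_T f dσ` of `f` over `T = S^{n-1} × S^{m-1}` (with `σ` the product of the
normalized sphere measures `σ₁`, `σ₂`). -/
def bavg {n m : ℕ} (σ₁ : Measure (Fin n → ℝ)) (σ₂ : Measure (Fin m → ℝ))
    (f : MvPolynomial (Fin n ⊕ Fin m) ℝ) : ℝ :=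
  ∫ x, ∫ y, beval f x y ∂σ₂ ∂σ₁

/-- The `L²(σ)` inner product `⟨f, g⟩ = ∫_T f·g dσ` on biforms. -/
def bip {n m : ℕ} (σ₁ : Measure (Fin n → ℝ)) (σ₂ : Measure (Fin m → ℝ))
    (f g : MvPolynomial (Fin n ⊕ Fin m) ℝ) : ℝ :=
  ∫ x, ∫ y, beval f x y * beval g x y ∂σ₂ ∂σ₁

/-- The cone `Pos^{(n,m)}_{(2k₁,2k₂)}` of nonnegative biforms of bidegree `(2k₁, 2k₂)`. -/
def PosSet (n m k₁ k₂ : ℕ) : Set (MvPolynomial (Fin n ⊕ Fin m) ℝ) :=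
  {f | f ∈ Biform n m (2 * k₁) (2 * k₂) ∧ ∀ x y, 0 ≤ beval f x y}

/-- The cone `Sq^{(n,m)}_{(2k₁,2k₂)}` of finite sums of squares of biforms of bidegree
`(k₁, k₂)`. -/
def SqSet (n m k₁ k₂ : ℕ) : Set (MvPolynomial (Fin n ⊕ Fin m) ℝ) :=
  {f | ∃ (N : ℕ) (g : Fin N → MvPolynomial (Fin n ⊕ Fin m) ℝ),
      (∀ i, g i ∈ Biform n m k₁ k₂) ∧ f = ∑ i, g i ^ 2}

/-- The cone `Lf^{(n,m)}_{(2k₁,2k₂)}` of finite sums of products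
`ℓᵢ(x)^{2k₁} · ℓ′ᵢ(y)^{2k₂}` of even powers of linear forms. -/
def LfSet (n m k₁ k₂ : ℕ) : Set (MvPolynomial (Fin n ⊕ Fin m) ℝ) :=
  {f | ∃ (N : ℕ) (a : Fin N → Fin n → ℝ) (b : Fin N → Fin m → ℝ),
      f = ∑ r, (∑ i, C (a r i) * X (Sum.inl i)) ^ (2 * k₁) *
               (∑ j, C (b r j) * X (Sum.inr j)) ^ (2 * k₂)}

/-- The biform `q = (x₁² + ⋯ + xₙ²)^{k₁} · (y₁² + ⋯ + y_m²)^{k₂}`. -/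
def qpoly (n m k₁ k₂ : ℕ) : MvPolynomial (Fin n ⊕ Fin m) ℝ :=
  (∑ i : Fin n, X (Sum.inl i) ^ 2) ^ k₁ * (∑ j : Fin m, X (Sum.inr j) ^ 2) ^ k₂

/-- The hyperplane `𝓜` of biforms of bidegree `(2k₁, 2k₂)` with average `0` on `T`. -/
def MSet (n m k₁ k₂ : ℕ) (σ₁ : Measure (Fin n → ℝ)) (σ₂ : Measure (Fin m → ℝ)) :
    Set (MvPolynomial (Fin n ⊕ Fin m) ℝ) :=
  {f | f ∈ Biform n m (2 * k₁) (2 * k₂) ∧ bavg σ₁ σ₂ f = 0}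

/-- The translated section `K̃ = {f ∈ 𝓜 : f + q ∈ K}` of a cone `K`. -/
def tilde (n m k₁ k₂ : ℕ) (σ₁ : Measure (Fin n → ℝ)) (σ₂ : Measure (Fin m → ℝ))
    (K : Set (MvPolynomial (Fin n ⊕ Fin m) ℝ)) : Set (MvPolynomial (Fin n ⊕ Fin m) ℝ) :=
  {f | f ∈ MSet n m k₁ k₂ σ₁ σ₂ ∧ f + qpoly n m k₁ k₂ ∈ K}

/-- The unit ball `B_𝓜` of `𝓜` in the `L²(σ)` norm. -/
def bball (n m k₁ k₂ : ℕ) (σ₁ : Measure (Fin n → ℝ)) (σ₂ : Measure (Fin m → ℝ)) :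
    Set (MvPolynomial (Fin n ⊕ Fin m) ℝ) :=
  {f | f ∈ MSet n m k₁ k₂ σ₁ σ₂ ∧ bip σ₁ σ₂ f f ≤ 1}

/-- `ψ : ℝ^D → Mset` is a unitary isomorphism: an injective linear map with range `Mset`
carrying the standard inner product of `ℝ^D` to the `L²(σ)` inner product.  Volumes of
Borel subsets `E` of `Mset` are computed as the Lebesgue measure of `ψ ⁻¹' E`
(by Lemma 1.1 of the paper this does not depend on the choice of `ψ`). -/
structure IsUnitaryParam (n m D : ℕ) (σ₁ : Measure (Fin n → ℝ)) (σ₂ : Measure (Fin m → ℝ))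
    (Mset : Set (MvPolynomial (Fin n ⊕ Fin m) ℝ))
    (ψ : (Fin D → ℝ) →ₗ[ℝ] MvPolynomial (Fin n ⊕ Fin m) ℝ) : Prop where
  inj : Function.Injective ψ
  range : Set.range ψ = Mset
  ip : ∀ a b : Fin D → ℝ, bip σ₁ σ₂ (ψ a) (ψ b) = ∑ i, a i * b i

/-- The apolar inner product `⟨r, s⟩_d = D_r(s)` on biforms, where `D_r` is the
differential operator obtained from `r` by replacing each variable by the corresponding
partial derivative; its value on a pair of forms of the same bidegree is
`∑_α r_α · s_α · α!`. -/
def apolar {n m : ℕ} (r s : MvPolynomial (Fin n ⊕ Fin m) ℝ) : ℝ :=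
  ∑ α ∈ r.support, coeff α r * coeff α s * α.prod fun _ k => (k.factorial : ℝ)

end BiformPaper

namespace BiformPaper

/-! ### The complex/real multiform setting

Complex variables `z_j = x_j + i·x_{n+j}` (`1 ≤ j ≤ n`) and `w_k = y_k + i·y_{m+k}`
(`1 ≤ k ≤ m`) inside polynomials in the real variables `x = (x₁,…,x_{2n})`,
`y = (y₁,…,y_{2m})`. -/

/-- The real part `x_j` of the complex variable `z_j`. -/
def zRe (n m : ℕ) (i : Fin n) : MvPolynomial (Fin (2 * n) ⊕ Fin (2 * m)) ℂ :=
  X (Sum.inl ⟨i.1, by have := i.2; omega⟩)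

/-- The imaginary part `x_{n+j}` of the complex variable `z_j`. -/
def zIm (n m : ℕ) (i : Fin n) : MvPolynomial (Fin (2 * n) ⊕ Fin (2 * m)) ℂ :=
  X (Sum.inl ⟨n + i.1, by have := i.2; omega⟩)

/-- The real part `y_k` of the complex variable `w_k`. -/
def wRe (n m : ℕ) (k : Fin m) : MvPolynomial (Fin (2 * n) ⊕ Fin (2 * m)) ℂ :=
  X (Sum.inr ⟨k.1, by have := k.2; omega⟩)

/-- The imaginary part `y_{m+k}` of the complex variable `w_k`. -/
def wIm (n m : ℕ) (k : Fin m) : MvPolynomial (Fin (2 * n) ⊕ Fin (2 * m)) ℂ :=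
  X (Sum.inr ⟨m + k.1, by have := k.2; omega⟩)

/-- The complex variable `z_j = x_j + i·x_{n+j}` as a complex polynomial. -/
def Zv (n m : ℕ) (i : Fin n) : MvPolynomial (Fin (2 * n) ⊕ Fin (2 * m)) ℂ :=
  zRe n m i + C Complex.I * zIm n m i

/-- The conjugate variable `z̄_j = x_j − i·x_{n+j}`. -/
def Zc (n m : ℕ) (i : Fin n) : MvPolynomial (Fin (2 * n) ⊕ Fin (2 * m)) ℂ :=
  zRe n m i - C Complex.I * zIm n m i

/-- The complex variable `w_k = y_k + i·y_{m+k}`. -/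
def Wv (n m : ℕ) (k : Fin m) : MvPolynomial (Fin (2 * n) ⊕ Fin (2 * m)) ℂ :=
  wRe n m k + C Complex.I * wIm n m k

/-- The conjugate variable `w̄_k = y_k − i·y_{m+k}`. -/
def Wc (n m : ℕ) (k : Fin m) : MvPolynomial (Fin (2 * n) ⊕ Fin (2 * m)) ℂ :=
  wRe n m k - C Complex.I * wIm n m k

/-- The multiform `∑ a_{ijkl}·z̄ᵢ·zⱼ·w̄ₖ·w_l` determined by coefficients `a`. -/
def herm (n m : ℕ) (a : Fin n → Fin n → Fin m → Fin m → ℂ) :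
    MvPolynomial (Fin (2 * n) ⊕ Fin (2 * m)) ℂ :=
  ∑ i, ∑ j, ∑ k, ∑ l, C (a i j k l) * Zc n m i * Zv n m j * Wc n m k * Wv n m l

/-- The subspace `𝒞_𝔽 ⊆ ℝ[x,y]_{2,2}`: the image under the substitution
`z_j = x_j + i·x_{n+j}`, `w_k = y_k + i·y_{m+k}` of the real vector space
`Symm𝔽[z,z̄,w,w̄]_{1,1,1,1}` of symmetric multiforms of multidegree `(1,1,1,1)`
(`𝔽 = ℝ` corresponds to `isR = true`, `𝔽 = ℂ` to `isR = false`). -/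
def CF (n m : ℕ) (isR : Bool) : Set (MvPolynomial (Fin (2 * n) ⊕ Fin (2 * m)) ℝ) :=
  {f | ∃ a : Fin n → Fin n → Fin m → Fin m → ℂ,
    (∀ i j k l, a i j k l = (starRingEnd ℂ) (a j i l k)) ∧
    (isR = true → ∀ i j k l, (a i j k l).im = 0) ∧
    MvPolynomial.map (algebraMap ℝ ℂ) f = herm n m a}

/-- The cone `Pos_{𝒞_𝔽}` of nonnegative multiforms. -/
def PosCF (n m : ℕ) (isR : Bool) : Set (MvPolynomial (Fin (2 * n) ⊕ Fin (2 * m)) ℝ) :=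
  {f | f ∈ CF n m isR ∧ ∀ x y, 0 ≤ beval f x y}

/-- The cone `Sq_{𝒞_𝔽}`: images of finite sums `∑ f_r*·f_r` of hermitian squares with
`f_r ∈ 𝔽[z,w]_{1,1}` bilinear in `z` and `w`. -/
def SqCF (n m : ℕ) (isR : Bool) : Set (MvPolynomial (Fin (2 * n) ⊕ Fin (2 * m)) ℝ) :=
  {f | ∃ (N : ℕ) (b : Fin N → Fin n → Fin m → ℂ),
    (isR = true → ∀ r i j, (b r i j).im = 0) ∧
    MvPolynomial.map (algebraMap ℝ ℂ) f =
      ∑ r, (∑ i, ∑ j, C ((starRingEnd ℂ) (b r i j)) * Zc n m i * Wc n m j) *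
           (∑ i, ∑ j, C (b r i j) * Zv n m i * Wv n m j)}

/-- The cone `𝒫_{𝒞_ℝ}` of multiforms (for `𝔽 = ℝ`) that are nonnegative on the real
points `z ∈ ℝⁿ`, `w ∈ ℝᵐ`. -/
def PRSet (n m : ℕ) : Set (MvPolynomial (Fin (2 * n) ⊕ Fin (2 * m)) ℝ) :=
  {f | f ∈ CF n m true ∧ ∀ (z : Fin n → ℝ) (w : Fin m → ℝ),
    0 ≤ beval f (fun i => if h : (i : ℕ) < n then z ⟨i, h⟩ else 0)
                (fun j => if h : (j : ℕ) < m then w ⟨j, h⟩ else 0)}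

/-- The hyperplane `𝓜_{𝒞_𝔽}` of elements of `𝒞_𝔽` with average `0` on
`T = S^{2n−1} × S^{2m−1}`. -/
def MCF (n m : ℕ) (isR : Bool) (σ₁ : Measure (Fin (2 * n) → ℝ))
    (σ₂ : Measure (Fin (2 * m) → ℝ)) : Set (MvPolynomial (Fin (2 * n) ⊕ Fin (2 * m)) ℝ) :=
  {f | f ∈ CF n m isR ∧ bavg σ₁ σ₂ f = 0}

/-- The translated section `K̃ = {f ∈ 𝓜_{𝒞_𝔽} : f + q ∈ K}` where
`q = (x₁²+⋯+x_{2n}²)(y₁²+⋯+y_{2m}²)`. -/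
def tildeCF (n m : ℕ) (isR : Bool) (σ₁ : Measure (Fin (2 * n) → ℝ))
    (σ₂ : Measure (Fin (2 * m) → ℝ)) (K : Set (MvPolynomial (Fin (2 * n) ⊕ Fin (2 * m)) ℝ)) :
    Set (MvPolynomial (Fin (2 * n) ⊕ Fin (2 * m)) ℝ) :=
  {f | f ∈ MCF n m isR σ₁ σ₂ ∧ f + qpoly (2 * n) (2 * m) 1 1 ∈ K}

/-- The unit ball `B_{𝓜_{𝒞_𝔽}}` of `𝓜_{𝒞_𝔽}` in the `L²(σ)` norm. -/
def ballCF (n m : ℕ) (isR : Bool) (σ₁ : Measure (Fin (2 * n) → ℝ))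
    (σ₂ : Measure (Fin (2 * m) → ℝ)) : Set (MvPolynomial (Fin (2 * n) ⊕ Fin (2 * m)) ℝ) :=
  {f | f ∈ MCF n m isR σ₁ σ₂ ∧ bip σ₁ σ₂ f f ≤ 1}

/-- `D_{𝓜_{𝒞_𝔽}}`. -/
def DCF (n m : ℕ) (isR : Bool) : ℕ :=
  if isR then n * m * (n * m + 1) / 2 - 1 else n ^ 2 * m ^ 2 - 1

end BiformPaper

/-!
Hermitian squares are sums of two squares of real biforms of bidegree `(1, 1)`, so after adding `q`
the section consists of sums of squares of real biforms of average one. On a biform of bidegree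
`(1, 1)` the average of the square is a multiple of the squared length of the coefficient vector,
and a ball of radius `√d` in `ℝ^d` lies in the convex hull of at most `12 ^ d` lattice points of
length at most `2√d`. Hence such sums of squares lie in the convex hull of the at most `12 ^ (2d)`
products of biforms with those coefficient vectors, where `d = 4nm`, and the exact fourth moments of
the sphere bound the `L²` norm of each product by `12`. By Maurey's empirical method, that hull is
covered by `12 ^ (2dk)` balls of radius `12 / √(k + 1)`. As `D` is at least `(nm)² / 2`, the number
of balls stays below `12 ^ D` for `k` of order `nm`, so that the `D`-th root of the volume ratio is
`O(1 / √k)`.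
-/

namespace BiformPaper

section EmpiricalMethod

open Metric
open scoped NNReal ENNReal

variable {E : Type*} [SeminormedAddCommGroup E] [InnerProductSpace ℝ E]

theorem exists_inner_le_of_mem_convexHull {s : Set E} {x : E} (hx : x ∈ convexHull ℝ s) (e : E) :
    ∃ y ∈ s, inner ℝ e y ≤ inner ℝ e x :=
  ((innerₛₗ ℝ e).concaveOn convex_univ).exists_le_of_mem_convexHull (Set.subset_univ s) hx

-- Maurey's empirical method, derandomized: each new point is chosen greedily.
theorem exists_norm_sum_sub_smul_sq_le {s : Set E} {ρ : ℝ} (hs : ∀ y ∈ s, ‖y‖ ≤ ρ) {x : E}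
    (hx : x ∈ convexHull ℝ s) (k : ℕ) :
    ∃ t : Fin k → s, ‖∑ j, (t j : E) - ((k + 1 : ℕ) : ℝ) • x‖ ^ 2 ≤ (k + 1) * ρ ^ 2 := by
  induction k with
  | zero =>
    have hxρ : ‖x‖ ≤ ρ := by
      have hball : convexHull ℝ s ⊆ closedBall 0 ρ :=
        convexHull_min (fun y hy => by simpa using hs y hy) (convex_closedBall 0 ρ)
      simpa using hball hx
    refine ⟨Fin.elim0, ?_⟩
    simpa using pow_le_pow_left₀ (norm_nonneg x) hxρ 2
  | succ k ih =>
    obtain ⟨t, ht⟩ := ih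
    set e := ∑ j, (t j : E) - ((k + 1 : ℕ) : ℝ) • x with he
    obtain ⟨y, hy, hinner⟩ := exists_inner_le_of_mem_convexHull hx (e - x)
    refine ⟨Fin.snoc t ⟨y, hy⟩, ?_⟩
    have hsum : ∑ j, ((Fin.snoc t ⟨y, hy⟩ : Fin (k + 1) → s) j : E) -
        ((k + 1 + 1 : ℕ) : ℝ) • x = e - x + y := by
      simp only [Fin.sum_univ_castSucc, Fin.snoc_castSucc, Fin.snoc_last, he]
      push_cast
      module
    have hnorm : ‖e - x + y‖ ^ 2 = ‖e‖ ^ 2 - ‖x‖ ^ 2 + ‖y‖ ^ 2 +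
        2 * (inner ℝ (e - x) y - inner ℝ (e - x) x) := by
      rw [norm_add_sq_real, norm_sub_sq_real, inner_sub_left e x x, real_inner_self_eq_norm_sq]
      ring
    have hy2 : ‖y‖ ^ 2 ≤ ρ ^ 2 := pow_le_pow_left₀ (norm_nonneg y) (hs y hy) 2
    rw [hsum, hnorm]
    push_cast
    linarith [sq_nonneg ‖x‖]

theorem externalCoveringNumber_convexHull_le {s : Set E} {ρ : ℝ≥0} (hs : ∀ y ∈ s, ‖y‖ ≤ ρ)
    (k : ℕ) :
    externalCoveringNumber (ρ / NNReal.sqrt (k + 1)) (convexHull ℝ s) ≤ s.encard ^ k := by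
  let center (t : Fin k → s) : E := ((k + 1 : ℕ) : ℝ)⁻¹ • ∑ j, (t j : E)
  have hcover : IsCover (ρ / NNReal.sqrt (k + 1)) (convexHull ℝ s) (Set.range center) := by
    rw [isCover_iff_subset_iUnion_closedBall]
    intro x hx
    obtain ⟨t, ht⟩ := exists_norm_sum_sub_smul_sq_le hs hx k
    have hk : (0 : ℝ) < (k + 1 : ℕ) := by positivity
    have hdiff : center t - x =
        ((k + 1 : ℕ) : ℝ)⁻¹ • (∑ j, (t j : E) - ((k + 1 : ℕ) : ℝ) • x) := by
      rw [smul_sub, inv_smul_smul₀ hk.ne']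
    refine Set.mem_iUnion₂.2 ⟨center t, Set.mem_range_self t, ?_⟩
    rw [mem_closedBall', dist_eq_norm, hdiff, norm_smul, norm_inv, Real.norm_of_nonneg hk.le,
      inv_mul_le_iff₀ hk]
    refine (pow_le_pow_iff_left₀ (norm_nonneg _) (by positivity) two_ne_zero).1 (ht.trans_eq ?_)
    push_cast
    rw [mul_pow, div_pow, Real.sq_sqrt (by positivity)]
    field_simp
  calc externalCoveringNumber (ρ / NNReal.sqrt (k + 1)) (convexHull ℝ s)
      ≤ (Set.range center).encard := hcover.externalCoveringNumber_le_encard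
    _ ≤ ENat.card (Fin k → s) := by
      rw [← Set.image_univ, ← Set.encard_univ]
      exact Set.encard_image_le center Set.univ
    _ = s.encard ^ k := by simp [ENat.card_fun]

theorem addHaar_le_coveringNumber_mul {F : Type*} [NormedAddCommGroup F] [MeasurableSpace F]
    [BorelSpace F] (μ : Measure F) [μ.IsAddHaarMeasure] (K : Set F) {r : ℝ≥0} (hr : r ≠ 0) :
    μ K ≤ coveringNumber r K * μ (closedBall 0 r) := by
  rcases eq_or_ne (coveringNumber r K) ⊤ with htop | hfin
  · have hpos : μ (closedBall 0 r) ≠ 0 :=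
      (measure_closedBall_pos μ 0 (by positivity)).ne'
    simp [htop, ENNReal.top_mul hpos]
  obtain ⟨N, -, hNfin, hN, hcard⟩ := exists_set_encard_eq_coveringNumber hfin
  lift N to Finset F using hNfin
  calc μ K ≤ μ (⋃ c ∈ N, closedBall c r) :=
        measure_mono (by simpa using isCover_iff_subset_iUnion_closedBall.1 hN)
    _ ≤ ∑ c ∈ N, μ (closedBall c r) := measure_biUnion_finset_le N _
    _ = coveringNumber r K * μ (closedBall 0 r) := by
      rw [← hcard, Set.encard_coe_eq_coe_finsetCard]
      simp [Measure.addHaar_closedBall_center]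

theorem addHaar_le_of_mapsTo_convexHull {F : Type*} [NormedAddCommGroup F] [NormedSpace ℝ F]
    [FiniteDimensional ℝ F] [MeasurableSpace F] [BorelSpace F] (μ : Measure F)
    [μ.IsAddHaarMeasure] {s : Set E} {ρ : ℝ≥0} (hρ : ρ ≠ 0) (hs : ∀ y ∈ s, ‖y‖ ≤ ρ)
    {φ : F → E} (hφ : Isometry φ) {K : Set F} (hK : Set.MapsTo φ K (convexHull ℝ s)) (k : ℕ) :
    μ K ≤ (s.encard : ℝ≥0∞) ^ k *
      ENNReal.ofReal ((2 * ρ / √(k + 1)) ^ Module.finrank ℝ F) * μ (closedBall 0 1) := by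
  set r : ℝ≥0 := ρ / NNReal.sqrt (k + 1) with hr
  have hr0 : r ≠ 0 := by positivity
  have hcover : coveringNumber (2 * r) K ≤ s.encard ^ k := calc
    coveringNumber (2 * r) K = coveringNumber (2 * r) (φ '' K) := (hφ.coveringNumber_image).symm
    _ ≤ externalCoveringNumber r (φ '' K) := coveringNumber_two_mul_le_externalCoveringNumber r _
    _ ≤ externalCoveringNumber r (convexHull ℝ s) :=
      externalCoveringNumber_mono_set hK.image_subset
    _ ≤ s.encard ^ k := externalCoveringNumber_convexHull_le hs k
  have hball : μ (closedBall 0 ((2 * r : ℝ≥0) : ℝ)) =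
      ENNReal.ofReal ((2 * ρ / √(k + 1)) ^ Module.finrank ℝ F) * μ (closedBall 0 1) := by
    rw [Measure.addHaar_closedBall' μ 0 (NNReal.coe_nonneg _)]
    simp [hr, mul_div_assoc]
  rw [mul_assoc, ← hball]
  refine (addHaar_le_coveringNumber_mul μ K (mul_ne_zero two_ne_zero hr0)).trans ?_
  gcongr
  simpa using ENat.toENNReal_le.2 hcover

end EmpiricalMethod

section LatticeBall

variable (ι : Type*) [Fintype ι] [DecidableEq ι]

/-- The integer vectors of squared length at most `4 * card ι`; every vertex of a unit lattice cube
meeting the ball of radius `√(card ι)` is one of them. -/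
def latticeBall : Finset (ι → ℤ) :=
  (Fintype.piFinset fun _ => Finset.Icc (-(4 * Fintype.card ι : ℤ)) (4 * Fintype.card ι)).filter
    fun u => ∑ i, u i ^ 2 ≤ 4 * Fintype.card ι

variable {ι}

theorem mem_latticeBall {u : ι → ℤ} : u ∈ latticeBall ι ↔ ∑ i, u i ^ 2 ≤ 4 * Fintype.card ι := by
  rw [latticeBall, Finset.mem_filter, and_iff_right_iff_imp, Fintype.mem_piFinset]
  intro hu i
  have hle : |u i| ≤ 4 * Fintype.card ι := calc
    |u i| ≤ |u i| ^ 2 := Int.le_self_sq _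
    _ = u i ^ 2 := sq_abs _
    _ ≤ ∑ i, u i ^ 2 :=
      Finset.single_le_sum (f := fun i => u i ^ 2) (fun _ _ => sq_nonneg _) (Finset.mem_univ i)
    _ ≤ 4 * Fintype.card ι := hu
  exact Finset.mem_Icc.2 (abs_le.1 hle)

theorem hasSum_half_pow_natAbs : HasSum (fun j : ℤ => (1 / 2 : ℝ) ^ j.natAbs) 3 := by
  have hneg : HasSum (fun j : ℕ => (1 / 2 : ℝ) ^ (-((j : ℤ) + 1)).natAbs) 1 := by
    have habs (j : ℕ) : (-((j : ℤ) + 1)).natAbs = j + 1 := by omega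
    simp only [habs, pow_succ]
    simpa using hasSum_geometric_two.mul_right (1 / 2 : ℝ)
  have := HasSum.of_nat_of_neg_add_one (f := fun j : ℤ => (1 / 2 : ℝ) ^ j.natAbs)
    hasSum_geometric_two hneg
  norm_num at this ⊢
  exact this

-- The weight `2 ^ (-∑ |u i|)` has total mass `3 ^ card ι`, so this lower bound on it counts points.
theorem quarter_pow_le_of_mem_latticeBall {u : ι → ℤ} (hu : u ∈ latticeBall ι) :
    (1 / 4 : ℝ) ^ Fintype.card ι ≤ ∏ i, (1 / 2 : ℝ) ^ (u i).natAbs := by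
  have hterm (i : ι) : 4 * |u i| ≤ u i ^ 2 + 4 := by
    rw [← sq_abs]; linarith [sq_nonneg (|u i| - 2)]
  have hsum : 4 * ∑ i, |u i| ≤ ∑ i, u i ^ 2 + 4 * Fintype.card ι := by
    simpa [Finset.mul_sum, Finset.sum_add_distrib, mul_comm] using
      Finset.sum_le_sum fun i (_ : i ∈ Finset.univ) => hterm i
  have hexp : ∑ i, (u i).natAbs ≤ 2 * Fintype.card ι := by
    zify
    linarith [mem_latticeBall.1 hu]
  calc (1 / 4 : ℝ) ^ Fintype.card ι = (1 / 2) ^ (2 * Fintype.card ι) := by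
        rw [pow_mul]; norm_num
    _ ≤ (1 / 2) ^ ∑ i, (u i).natAbs := pow_le_pow_of_le_one (by norm_num) (by norm_num) hexp
    _ = ∏ i, (1 / 2 : ℝ) ^ (u i).natAbs := (Finset.prod_pow_eq_pow_sum _ _ _).symm

theorem card_latticeBall_le : (latticeBall ι).card ≤ 12 ^ Fintype.card ι := by
  have hupper : ∑ u ∈ latticeBall ι, ∏ i, (1 / 2 : ℝ) ^ (u i).natAbs ≤ 3 ^ Fintype.card ι := by
    set I := Finset.Icc (-(4 * Fintype.card ι : ℤ)) (4 * Fintype.card ι)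
    calc ∑ u ∈ latticeBall ι, ∏ i, (1 / 2 : ℝ) ^ (u i).natAbs
        ≤ ∑ u ∈ Fintype.piFinset fun _ : ι => I, ∏ i, (1 / 2 : ℝ) ^ (u i).natAbs :=
          Finset.sum_le_sum_of_subset_of_nonneg (Finset.filter_subset _ _)
            fun _ _ _ => by positivity
      _ = (∑ j ∈ I, (1 / 2 : ℝ) ^ j.natAbs) ^ Fintype.card ι := by
          rw [← Finset.prod_univ_sum (fun _ => I) fun _ j => (1 / 2 : ℝ) ^ j.natAbs,
            Finset.prod_const, Finset.card_univ]
      _ ≤ 3 ^ Fintype.card ι := by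
          gcongr
          exact sum_le_hasSum I (fun _ _ => by positivity) hasSum_half_pow_natAbs
  have hcard : (latticeBall ι).card * (1 / 4 : ℝ) ^ Fintype.card ι ≤ 3 ^ Fintype.card ι := by
    rw [← nsmul_eq_mul]
    exact (Finset.card_nsmul_le_sum _ _ _ fun _ => quarter_pow_le_of_mem_latticeBall).trans hupper
  rw [one_div, inv_pow, ← div_eq_mul_inv, div_le_iff₀ (by positivity), ← mul_pow] at hcard
  norm_num at hcard
  exact_mod_cast hcard

theorem mem_convexHull_latticeBall {x : ι → ℝ} (hx : ∑ i, x i ^ 2 ≤ Fintype.card ι) :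
    x ∈ convexHull ℝ ((fun (u : ι → ℤ) i => (u i : ℝ)) '' (latticeBall ι : Set (ι → ℤ))) := by
  have hcube : x ∈ convexHull ℝ (Set.univ.pi fun i => {(⌊x i⌋ : ℝ), (⌊x i⌋ : ℝ) + 1}) := by
    rw [convexHull_pi]
    intro i _
    beta_reduce
    rw [convexHull_pair, segment_eq_Icc (by linarith)]
    exact ⟨Int.floor_le _, (Int.lt_floor_add_one _).le⟩
  refine convexHull_mono (fun v hv => ?_) hcube
  have hvertex (i : ι) : ∃ u : ℤ, (u : ℝ) = v i ∧ (v i) ^ 2 ≤ 2 * x i ^ 2 + 2 := by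
    have hle := Int.floor_le (x i)
    have hlt := Int.lt_floor_add_one (x i)
    rcases hv i trivial with h | h
    · exact ⟨⌊x i⌋, h.symm, by rw [h]; nlinarith [sq_nonneg (2 * x i - ⌊x i⌋)]⟩
    · refine ⟨⌊x i⌋ + 1, by push_cast; exact h.symm, ?_⟩
      rw [h]; nlinarith [sq_nonneg (2 * x i - (⌊x i⌋ + 1))]
  choose u hu hle using hvertex
  refine ⟨u, mem_latticeBall.2 ?_, funext hu⟩
  have hsum : ∑ i, (u i : ℝ) ^ 2 ≤ 4 * Fintype.card ι := calc
    ∑ i, (u i : ℝ) ^ 2 ≤ ∑ i, (2 * x i ^ 2 + 2) :=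
      Finset.sum_le_sum fun i _ => (hu i).symm ▸ hle i
    _ = 2 * ∑ i, x i ^ 2 + 2 * Fintype.card ι := by
      simp [Finset.sum_add_distrib, Finset.mul_sum, mul_comm]
    _ ≤ 4 * Fintype.card ι := by linarith
  exact_mod_cast hsum

end LatticeBall

section Sphere

open Matrix

variable {n m : ℕ}

@[fun_prop]
theorem continuous_dotProduct (c : Fin n → ℝ) : Continuous fun x : Fin n → ℝ => c ⬝ᵥ x :=
  continuous_const.dotProduct continuous_id

theorem exists_orthogonal_mulVec_eq {c c' : Fin n → ℝ} (hc : c ⬝ᵥ c = c' ⬝ᵥ c') :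
    ∃ Q : Matrix (Fin n) (Fin n) ℝ, Q * Qᵀ = 1 ∧ Q *ᵥ c = c' := by
  have hnorm : ‖WithLp.toLp 2 c‖ = ‖WithLp.toLp 2 c'‖ := by
    simpa [EuclideanSpace.norm_eq, dotProduct, ← sq] using congrArg Real.sqrt hc
  let b := EuclideanSpace.basisFun (Fin n) ℝ
  let R := (ℝ ∙ (WithLp.toLp 2 c - WithLp.toLp 2 c'))ᗮ.reflection
  refine ⟨LinearMap.toMatrix b.toBasis b.toBasis R.toLinearEquiv.toLinearMap,
    mem_unitaryGroup_iff.1 (R.toMatrix_mem_unitaryGroup b b), ?_⟩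
  have hrepr := LinearMap.toMatrix_mulVec_repr b.toBasis b.toBasis
    R.toLinearEquiv.toLinearMap (WithLp.toLp 2 c)
  have hR : R (WithLp.toLp 2 c) = WithLp.toLp 2 c' := Submodule.reflection_sub hnorm
  have hcoord (c : Fin n → ℝ) : ⇑(b.toBasis.repr (WithLp.toLp 2 c)) = c := by ext; simp [b]
  simpa only [LinearEquiv.coe_coe, LinearIsometryEquiv.coe_toLinearEquiv, hR, hcoord] using hrepr

theorem isCompact_unitSphere (n : ℕ) : IsCompact (unitSphere n) := by
  have hcont : Continuous fun x : Fin n → ℝ => ∑ i, x i ^ 2 := by fun_prop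
  refine Metric.isCompact_of_isClosed_isBounded (isClosed_eq hcont continuous_const) ?_
  refine (Metric.isBounded_closedBall (x := (0 : Fin n → ℝ)) (r := 1)).subset fun x hx => ?_
  rw [mem_closedBall_zero_iff, pi_norm_le_iff_of_nonneg zero_le_one]
  intro i
  have hle : x i ^ 2 ≤ 1 := (Finset.single_le_sum (f := fun i => x i ^ 2)
    (fun _ _ => sq_nonneg _) (Finset.mem_univ i)).trans_eq hx
  exact (sq_le_one_iff_abs_le_one _).1 hle

theorem integrable_of_ae_mem_isCompact {X : Type*} [TopologicalSpace X]
    [T2Space X] [MeasurableSpace X] [OpensMeasurableSpace X] {μ : Measure X} [IsFiniteMeasure μ]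
    {s : Set X} (hs : IsCompact s) (hμ : ∀ᵐ x ∂μ, x ∈ s) {g : X → ℝ} (hg : Continuous g) :
    Integrable g μ := by
  rw [← Measure.restrict_eq_self_of_ae_mem hμ]
  exact hg.continuousOn.integrableOn_compact hs

namespace IsSphereMeasure

variable {σ : Measure (Fin n → ℝ)} {σ₁ : Measure (Fin n → ℝ)} {σ₂ : Measure (Fin m → ℝ)}

theorem ae_mem (h : IsSphereMeasure n σ) : ∀ᵐ x ∂σ, x ∈ unitSphere n := h.onSphere

theorem pos (h : IsSphereMeasure n σ) : 0 < n := by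
  have := h.prob
  obtain ⟨x, hx⟩ := h.ae_mem.exists
  rcases Nat.eq_zero_or_pos n with rfl | hn
  · simp [unitSphere] at hx
  · exact hn

theorem integrable (h : IsSphereMeasure n σ) {g : (Fin n → ℝ) → ℝ} (hg : Continuous g) :
    Integrable g σ :=
  have := h.prob
  integrable_of_ae_mem_isCompact (isCompact_unitSphere n) h.ae_mem hg

theorem ae_mem_prod (h₁ : IsSphereMeasure n σ₁) (h₂ : IsSphereMeasure m σ₂) :
    ∀ᵐ p ∂σ₁.prod σ₂, p ∈ unitSphere n ×ˢ unitSphere m := by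
  have := h₁.prob
  have := h₂.prob
  filter_upwards [Measure.quasiMeasurePreserving_fst.ae h₁.ae_mem,
    Measure.quasiMeasurePreserving_snd.ae h₂.ae_mem] with p hx hy using ⟨hx, hy⟩

theorem integrable_prod (h₁ : IsSphereMeasure n σ₁) (h₂ : IsSphereMeasure m σ₂)
    {g : (Fin n → ℝ) × (Fin m → ℝ) → ℝ} (hg : Continuous g) : Integrable g (σ₁.prod σ₂) :=
  have := h₁.prob
  have := h₂.prob
  integrable_of_ae_mem_isCompact ((isCompact_unitSphere n).prod (isCompact_unitSphere m))
    (h₁.ae_mem_prod h₂) hg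

theorem integral_sum_sq_mul (h : IsSphereMeasure n σ) {g : (Fin n → ℝ) → ℝ}
    (hg : Continuous g) : ∑ i, ∫ x, g x * x i ^ 2 ∂σ = ∫ x, g x ∂σ := by
  rw [← integral_finsetSum _ fun i _ => h.integrable (by fun_prop)]
  refine integral_congr_ae (h.ae_mem.mono fun x hx => ?_)
  have hx : ∑ i, x i ^ 2 = 1 := hx
  simp only [← Finset.mul_sum, hx, mul_one]

theorem integral_comp_dotProduct_eq (h : IsSphereMeasure n σ) {f : ℝ → ℝ} (hf : Continuous f)
    {c c' : Fin n → ℝ} (hc : c ⬝ᵥ c = c' ⬝ᵥ c') : ∫ x, f (c ⬝ᵥ x) ∂σ = ∫ x, f (c' ⬝ᵥ x) ∂σ := by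
  obtain ⟨Q, hQ, hQc⟩ := exists_orthogonal_mulVec_eq hc
  have hmeas : Measurable Q.mulVec :=
    (continuous_const.matrix_mulVec continuous_id).measurable
  have hdot (x : Fin n → ℝ) : c' ⬝ᵥ Q *ᵥ x = c ⬝ᵥ x := by
    rw [← hQc, dotProduct_mulVec, vecMul_mulVec, mul_eq_one_comm.1 hQ, vecMul_one]
  calc ∫ x, f (c ⬝ᵥ x) ∂σ = ∫ x, f (c' ⬝ᵥ Q *ᵥ x) ∂σ := by simp only [hdot]
    _ = ∫ x, f (c' ⬝ᵥ x) ∂σ.map Q.mulVec :=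
      (integral_map hmeas.aemeasurable
        (hf.comp (continuous_dotProduct c')).aestronglyMeasurable).symm
    _ = ∫ x, f (c' ⬝ᵥ x) ∂σ := by rw [h.invariant Q hQ]

theorem integral_dotProduct_pow (h : IsSphereMeasure n σ) (k : ℕ) (i : Fin n) (c : Fin n → ℝ) :
    ∫ x, (c ⬝ᵥ x) ^ (2 * k) ∂σ = (c ⬝ᵥ c) ^ k * ∫ x, x i ^ (2 * k) ∂σ := by
  have hc : 0 ≤ c ⬝ᵥ c := Finset.sum_nonneg fun _ _ => mul_self_nonneg _
  rw [h.integral_comp_dotProduct_eq (f := fun t => t ^ (2 * k)) (by fun_prop)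
    (c' := √(c ⬝ᵥ c) • Pi.single i 1) (by simp [Real.mul_self_sqrt hc]), ← integral_const_mul]
  simp [mul_pow, pow_mul √(c ⬝ᵥ c), Real.sq_sqrt hc]

theorem integral_dotProduct_sq (h : IsSphereMeasure n σ) (c : Fin n → ℝ) :
    ∫ x, (c ⬝ᵥ x) ^ 2 ∂σ = c ⬝ᵥ c / n := by
  have := h.prob
  have hn := h.pos
  have hcoord (i : Fin n) : ∫ x, (c ⬝ᵥ x) ^ 2 ∂σ = c ⬝ᵥ c * ∫ x, x i ^ 2 ∂σ := by
    simpa using h.integral_dotProduct_pow 1 i c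
  have hone : ∑ i, ∫ x, x i ^ 2 ∂σ = 1 := by
    simpa using h.integral_sum_sq_mul (g := fun _ => 1) continuous_const
  have hsum : n * ∫ x, (c ⬝ᵥ x) ^ 2 ∂σ = c ⬝ᵥ c := calc
    n * ∫ x, (c ⬝ᵥ x) ^ 2 ∂σ = ∑ i : Fin n, c ⬝ᵥ c * ∫ x, x i ^ 2 ∂σ := by simp [← hcoord]
    _ = c ⬝ᵥ c := by rw [← Finset.mul_sum, hone, mul_one]
  rw [eq_div_iff (by positivity), mul_comm, hsum]

-- The fourth moment of a linear form polarizes to the mixed moments of two forms.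
theorem integral_dotProduct_sq_mul_dotProduct_sq_eq_mul (h : IsSphereMeasure n σ) (i : Fin n)
    (a b : Fin n → ℝ) : ∫ x, (a ⬝ᵥ x) ^ 2 * (b ⬝ᵥ x) ^ 2 ∂σ =
      (∫ x, x i ^ 4 ∂σ) / 3 * (a ⬝ᵥ a * (b ⬝ᵥ b) + 2 * (a ⬝ᵥ b) ^ 2) := by
  have hpolar : ∫ x, ((a + b) ⬝ᵥ x) ^ 4 ∂σ + ∫ x, ((a - b) ⬝ᵥ x) ^ 4 ∂σ =
      2 * ∫ x, (a ⬝ᵥ x) ^ 4 ∂σ + 2 * ∫ x, (b ⬝ᵥ x) ^ 4 ∂σ +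
        12 * ∫ x, (a ⬝ᵥ x) ^ 2 * (b ⬝ᵥ x) ^ 2 ∂σ := by
    simp only [← integral_const_mul]
    rw [← integral_add (h.integrable (by fun_prop)) (h.integrable (by fun_prop)),
      ← integral_add (h.integrable (by fun_prop)) (h.integrable (by fun_prop)),
      ← integral_add (h.integrable (by fun_prop)) (h.integrable (by fun_prop))]
    congr with x
    simp only [add_dotProduct, sub_dotProduct]
    ring
  have hfour (c : Fin n → ℝ) : ∫ x, (c ⬝ᵥ x) ^ 4 ∂σ = (c ⬝ᵥ c) ^ 2 * ∫ x, x i ^ 4 ∂σ :=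
    h.integral_dotProduct_pow 2 i c
  simp only [hfour] at hpolar
  simp only [add_dotProduct, sub_dotProduct, dotProduct_add, dotProduct_sub,
    dotProduct_comm b a] at hpolar
  linear_combination -hpolar / 12

theorem integral_dotProduct_sq_mul_dotProduct_sq (h : IsSphereMeasure n σ) (a b : Fin n → ℝ) :
    ∫ x, (a ⬝ᵥ x) ^ 2 * (b ⬝ᵥ x) ^ 2 ∂σ =
      (a ⬝ᵥ a * (b ⬝ᵥ b) + 2 * (a ⬝ᵥ b) ^ 2) / (n * (n + 2)) := by
  have hn := h.pos
  let i : Fin n := ⟨0, hn⟩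
  set κ := ∫ x, x i ^ 4 ∂σ with hκ
  have hmixed (j : Fin n) : ∫ x, x i ^ 2 * x j ^ 2 ∂σ =
      κ / 3 * (1 + 2 * (Pi.single i (1 : ℝ) : Fin n → ℝ) j ^ 2) := by
    simpa using h.integral_dotProduct_sq_mul_dotProduct_sq_eq_mul i (Pi.single i 1) (Pi.single j 1)
  have hκn : κ / 3 * (n + 2) = 1 / n := calc
    κ / 3 * (n + 2) = ∑ j, ∫ x, x i ^ 2 * x j ^ 2 ∂σ := by
      simp only [hmixed, ← Finset.mul_sum, Finset.sum_add_distrib]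
      simp [Pi.single_apply]
    _ = ∫ x, x i ^ 2 ∂σ := h.integral_sum_sq_mul (g := fun x => x i ^ 2) (by fun_prop)
    _ = 1 / n := by simpa using h.integral_dotProduct_sq (Pi.single i 1)
  have hκ' : κ / 3 = 1 / (n * (n + 2)) := by
    field_simp at hκn ⊢
    linarith
  rw [h.integral_dotProduct_sq_mul_dotProduct_sq_eq_mul i, ← hκ, hκ']
  ring

theorem integral_dotProduct_sq_mul_dotProduct_sq_le (h : IsSphereMeasure n σ) (a b : Fin n → ℝ) :
    ∫ x, (a ⬝ᵥ x) ^ 2 * (b ⬝ᵥ x) ^ 2 ∂σ ≤ 3 / n ^ 2 * (a ⬝ᵥ a * (b ⬝ᵥ b)) := by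
  have hn := h.pos
  have hnonneg : 0 ≤ a ⬝ᵥ a * (b ⬝ᵥ b) :=
    mul_nonneg (Finset.sum_nonneg fun _ _ => mul_self_nonneg _)
      (Finset.sum_nonneg fun _ _ => mul_self_nonneg _)
  have hcs : (a ⬝ᵥ b) ^ 2 ≤ a ⬝ᵥ a * (b ⬝ᵥ b) := by
    simpa only [dotProduct, sq] using Finset.sum_mul_sq_le_sq_mul_sq Finset.univ a b
  rw [h.integral_dotProduct_sq_mul_dotProduct_sq, div_mul_eq_mul_div]
  exact div_le_div₀ (by positivity) (by linarith) (by positivity) (by nlinarith)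

end IsSphereMeasure

end Sphere

section Biforms

open Matrix

variable {n m : ℕ}

/-- The biform `∑ R (i, j) xᵢ yⱼ` of bidegree `(1, 1)` with coefficients `R`. -/
def bilin (n m : ℕ) : (Fin n × Fin m → ℝ) →ₗ[ℝ] MvPolynomial (Fin n ⊕ Fin m) ℝ :=
  Fintype.linearCombination ℝ fun p => X (Sum.inl p.1) * X (Sum.inr p.2)

theorem bilin_apply (R : Fin n × Fin m → ℝ) :
    bilin n m R = ∑ p, R p • (X (Sum.inl p.1) * X (Sum.inr p.2)) := rfl

theorem exists_eq_single_add_single_of_weight_bw {d : Fin n ⊕ Fin m →₀ ℕ}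
    (hd : Finsupp.weight (bw n m) d = (1, 1)) :
    ∃ i j, d = Finsupp.single (Sum.inl i) 1 + Finsupp.single (Sum.inr j) 1 := by
  obtain ⟨⟨d₁, d₂⟩, rfl⟩ := Finsupp.sumFinsuppEquivProdFinsupp.symm.surjective d
  simp only [Finsupp.weight_eq_sum, bw, Fintype.sum_sum_type, Prod.ext_iff] at hd
  have hd₁ : d₁.sum (fun _ k => k) = 1 := by
    simpa [Finsupp.sum_fintype, Prod.fst_sum] using hd.1
  have hd₂ : d₂.sum (fun _ k => k) = 1 := by
    simpa [Finsupp.sum_fintype, Prod.snd_sum] using hd.2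
  obtain ⟨i, rfl⟩ := (Finsupp.sum_eq_one_iff d₁).1 hd₁
  obtain ⟨j, rfl⟩ := (Finsupp.sum_eq_one_iff d₂).1 hd₂
  refine ⟨i, j, ?_⟩
  ext (k | k) <;> simp [Finsupp.single_apply]

theorem X_mul_X_mem_biform (i : Fin n) (j : Fin m) :
    (X (Sum.inl i) * X (Sum.inr j) : MvPolynomial (Fin n ⊕ Fin m) ℝ) ∈ Biform n m 1 1 :=
  (isWeightedHomogeneous_X ℝ (bw n m) (Sum.inl i)).mul
    (isWeightedHomogeneous_X ℝ (bw n m) (Sum.inr j))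

theorem mem_biform_one_one_iff {f : MvPolynomial (Fin n ⊕ Fin m) ℝ} :
    f ∈ Biform n m 1 1 ↔ ∃ R, bilin n m R = f := by
  constructor
  · intro hf
    suffices f ∈ LinearMap.range (bilin n m) from this
    rw [f.as_sum]
    refine Submodule.sum_mem _ fun d hd => ?_
    obtain ⟨i, j, rfl⟩ := exists_eq_single_add_single_of_weight_bw (hf (mem_support_iff.1 hd))
    refine ⟨Pi.single (i, j) (f.coeff (Finsupp.single (.inl i) 1 + Finsupp.single (.inr j) 1)), ?_⟩
    simp [bilin, X, monomial_mul, smul_monomial]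
  · rintro ⟨R, rfl⟩
    rw [bilin_apply]
    exact (weightedHomogeneousSubmodule ℝ (bw n m) (1, 1)).sum_mem fun p _ =>
      Submodule.smul_mem _ _ (X_mul_X_mem_biform p.1 p.2)

theorem beval_mul (f g : MvPolynomial (Fin n ⊕ Fin m) ℝ) (x y) :
    beval (f * g) x y = beval f x y * beval g x y := map_mul _ _ _

theorem beval_bilin (R : Fin n × Fin m → ℝ) (x y) :
    beval (bilin n m R) x y = (fun j => (fun i => R (i, j)) ⬝ᵥ x) ⬝ᵥ y := by
  simp only [beval, bilin_apply, dotProduct, map_sum, smul_eval, map_mul, eval_X, Sum.elim_inl,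
    Sum.elim_inr, Finset.sum_mul, Fintype.sum_prod_type_right, mul_assoc]

@[fun_prop]
theorem continuous_beval (f : MvPolynomial (Fin n ⊕ Fin m) ℝ) :
    Continuous fun p : (Fin n → ℝ) × (Fin m → ℝ) => beval f p.1 p.2 := by
  refine (MvPolynomial.continuous_eval f).comp (continuous_pi ?_)
  rintro (i | j)
  · exact (continuous_apply i).comp continuous_fst
  · exact (continuous_apply j).comp continuous_snd

variable {σ₁ : Measure (Fin n → ℝ)} {σ₂ : Measure (Fin m → ℝ)}

theorem memLp_beval (h₁ : IsSphereMeasure n σ₁) (h₂ : IsSphereMeasure m σ₂)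
    (f : MvPolynomial (Fin n ⊕ Fin m) ℝ) :
    MemLp (fun p => beval f p.1 p.2) 2 (σ₁.prod σ₂) :=
  (memLp_two_iff_integrable_sq (continuous_beval f).aestronglyMeasurable).2
    (h₁.integrable_prod h₂ (by fun_prop))

/-- A polynomial in `(x, y)` as an element of `L²(σ₁ × σ₂)`. -/
def toL2 (h₁ : IsSphereMeasure n σ₁) (h₂ : IsSphereMeasure m σ₂) :
    MvPolynomial (Fin n ⊕ Fin m) ℝ →ₗ[ℝ] Lp ℝ 2 (σ₁.prod σ₂) where
  toFun f := (memLp_beval h₁ h₂ f).toLp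
  map_add' f g := by
    rw [← MemLp.toLp_add]
    exact MemLp.toLp_congr _ _ (.of_forall fun p => map_add _ f g)
  map_smul' c f := by
    rw [RingHom.id_apply, ← MemLp.toLp_const_smul]
    exact MemLp.toLp_congr _ _ (.of_forall fun p => smul_eval _ f c)

theorem bip_eq_integral_prod (h₁ : IsSphereMeasure n σ₁) (h₂ : IsSphereMeasure m σ₂)
    (f g : MvPolynomial (Fin n ⊕ Fin m) ℝ) :
    bip σ₁ σ₂ f g = ∫ p, beval f p.1 p.2 * beval g p.1 p.2 ∂σ₁.prod σ₂ := by
  have := h₁.prob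
  have := h₂.prob
  exact (integral_prod _ (h₁.integrable_prod h₂
    (g := fun p => beval f p.1 p.2 * beval g p.1 p.2) (by fun_prop))).symm

theorem inner_toL2 (h₁ : IsSphereMeasure n σ₁) (h₂ : IsSphereMeasure m σ₂)
    (f g : MvPolynomial (Fin n ⊕ Fin m) ℝ) :
    inner ℝ (toL2 h₁ h₂ f) (toL2 h₁ h₂ g) = bip σ₁ σ₂ f g := by
  rw [bip_eq_integral_prod h₁ h₂, L2.inner_def]
  refine integral_congr_ae ?_
  filter_upwards [(memLp_beval h₁ h₂ f).coeFn_toLp, (memLp_beval h₁ h₂ g).coeFn_toLp] with p hf hg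
  rw [show toL2 h₁ h₂ f p = beval f p.1 p.2 from hf, show toL2 h₁ h₂ g p = beval g p.1 p.2 from hg]
  exact mul_comm _ _

theorem bavg_eq_inner (h₁ : IsSphereMeasure n σ₁) (h₂ : IsSphereMeasure m σ₂)
    (f : MvPolynomial (Fin n ⊕ Fin m) ℝ) :
    bavg σ₁ σ₂ f = inner ℝ (toL2 h₁ h₂ f) (toL2 h₁ h₂ 1) := by
  simp [inner_toL2, bip, bavg, beval]

theorem bavg_add (h₁ : IsSphereMeasure n σ₁) (h₂ : IsSphereMeasure m σ₂)
    (f g : MvPolynomial (Fin n ⊕ Fin m) ℝ) :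
    bavg σ₁ σ₂ (f + g) = bavg σ₁ σ₂ f + bavg σ₁ σ₂ g := by
  simp only [bavg_eq_inner h₁ h₂, map_add, inner_add_left]

theorem bavg_sum (h₁ : IsSphereMeasure n σ₁) (h₂ : IsSphereMeasure m σ₂) {ι : Type*}
    (s : Finset ι) (f : ι → MvPolynomial (Fin n ⊕ Fin m) ℝ) :
    bavg σ₁ σ₂ (∑ i ∈ s, f i) = ∑ i ∈ s, bavg σ₁ σ₂ (f i) := by
  simp only [bavg_eq_inner h₁ h₂, map_sum, sum_inner]

theorem bavg_qpoly (h₁ : IsSphereMeasure n σ₁) (h₂ : IsSphereMeasure m σ₂) (k₁ k₂ : ℕ) :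
    bavg σ₁ σ₂ (qpoly n m k₁ k₂) = 1 := by
  have := h₁.prob
  have := h₂.prob
  have hone : ∀ᵐ x ∂σ₁, ∫ y, beval (qpoly n m k₁ k₂) x y ∂σ₂ = 1 := by
    filter_upwards [h₁.ae_mem] with x (hx : ∑ i, x i ^ 2 = 1)
    have hy : ∀ᵐ y ∂σ₂, beval (qpoly n m k₁ k₂) x y = 1 := by
      filter_upwards [h₂.ae_mem] with y (hy : ∑ j, y j ^ 2 = 1)
      simp [beval, qpoly, hx, hy]
    simp [integral_congr_ae hy]
  simp [bavg, integral_congr_ae hone]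

theorem sum_column_dotProduct_self (R : Fin n × Fin m → ℝ) :
    ∑ j, (fun i => R (i, j)) ⬝ᵥ (fun i => R (i, j)) = ∑ p, R p ^ 2 := by
  simp only [Fintype.sum_prod_type_right, dotProduct, sq]

theorem bavg_bilin_sq (h₁ : IsSphereMeasure n σ₁) (h₂ : IsSphereMeasure m σ₂)
    (R : Fin n × Fin m → ℝ) : bavg σ₁ σ₂ (bilin n m R ^ 2) = (∑ p, R p ^ 2) / (n * m) := by
  have hsq (x y) :
      beval (bilin n m R ^ 2) x y = ((fun j => (fun i => R (i, j)) ⬝ᵥ x) ⬝ᵥ y) ^ 2 := by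
    rw [sq, beval_mul, beval_bilin, ← sq]
  have hdot (c : Fin m → ℝ) : c ⬝ᵥ c = ∑ j, c j ^ 2 := by simp only [dotProduct, sq]
  calc bavg σ₁ σ₂ (bilin n m R ^ 2)
      = ∫ x, (∑ j, ((fun i => R (i, j)) ⬝ᵥ x) ^ 2) / m ∂σ₁ := by
        simp only [bavg, hsq, h₂.integral_dotProduct_sq, hdot]
    _ = (∑ j, ∫ x, ((fun i => R (i, j)) ⬝ᵥ x) ^ 2 ∂σ₁) / m := by
        rw [integral_div, integral_finsetSum _ fun j _ => h₁.integrable (by fun_prop)]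
    _ = (∑ p, R p ^ 2) / (n * m) := by
        simp only [h₁.integral_dotProduct_sq, ← Finset.sum_div, sum_column_dotProduct_self, div_div]

theorem bip_bilin_mul_bilin_self_le (h₁ : IsSphereMeasure n σ₁) (h₂ : IsSphereMeasure m σ₂)
    (R S : Fin n × Fin m → ℝ) :
    bip σ₁ σ₂ (bilin n m R * bilin n m S) (bilin n m R * bilin n m S) ≤
      9 / (n * m) ^ 2 * ((∑ p, R p ^ 2) * ∑ p, S p ^ 2) := by
  let r (x : Fin n → ℝ) (j : Fin m) : ℝ := (fun i => R (i, j)) ⬝ᵥ x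
  let s (x : Fin n → ℝ) (j : Fin m) : ℝ := (fun i => S (i, j)) ⬝ᵥ x
  have hr (j : Fin m) : Continuous fun x => r x j := continuous_dotProduct _
  have hs (j : Fin m) : Continuous fun x => s x j := continuous_dotProduct _
  have hinner (x : Fin n → ℝ) : ∫ y, (r x ⬝ᵥ y) ^ 2 * (s x ⬝ᵥ y) ^ 2 ∂σ₂ ≤
      3 / m ^ 2 * ∑ j, ∑ k, r x j ^ 2 * s x k ^ 2 := by
    refine (h₂.integral_dotProduct_sq_mul_dotProduct_sq_le (r x) (s x)).trans_eq ?_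
    simp only [dotProduct, Finset.sum_mul_sum, sq]
  have hint : Integrable (fun x => ∫ y, (r x ⬝ᵥ y) ^ 2 * (s x ⬝ᵥ y) ^ 2 ∂σ₂) σ₁ := by
    simp only [h₂.integral_dotProduct_sq_mul_dotProduct_sq]
    refine h₁.integrable ?_
    simp only [dotProduct]
    fun_prop
  calc bip σ₁ σ₂ (bilin n m R * bilin n m S) (bilin n m R * bilin n m S)
      = ∫ x, ∫ y, (r x ⬝ᵥ y) ^ 2 * (s x ⬝ᵥ y) ^ 2 ∂σ₂ ∂σ₁ := by
        simp only [bip, beval_mul, beval_bilin, r, s, mul_mul_mul_comm, sq]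
    _ ≤ ∫ x, 3 / m ^ 2 * ∑ j, ∑ k, r x j ^ 2 * s x k ^ 2 ∂σ₁ :=
        integral_mono hint (h₁.integrable (by fun_prop)) hinner
    _ = 3 / m ^ 2 * ∑ j, ∑ k, ∫ x, r x j ^ 2 * s x k ^ 2 ∂σ₁ := by
        rw [integral_const_mul, integral_finsetSum _ fun j _ => h₁.integrable (by fun_prop)]
        congr with j
        rw [integral_finsetSum _ fun k _ => h₁.integrable (by fun_prop)]
    _ ≤ 3 / m ^ 2 * ∑ j, ∑ k, 3 / n ^ 2 * ((fun i => R (i, j)) ⬝ᵥ (fun i => R (i, j)) *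
          ((fun i => S (i, k)) ⬝ᵥ (fun i => S (i, k)))) := by
        gcongr
        exact h₁.integral_dotProduct_sq_mul_dotProduct_sq_le _ _
    _ = 9 / (n * m) ^ 2 * ((∑ p, R p ^ 2) * ∑ p, S p ^ 2) := by
        simp only [← Finset.mul_sum, ← Finset.sum_mul, sum_column_dotProduct_self]
        ring

end Biforms

section LatticeProducts

open Metric
open scoped ENNReal

theorem apply_mem_convexHull_image2 {U V W : Type*} [AddCommGroup U] [Module ℝ U]
    [AddCommGroup V] [Module ℝ V] [AddCommGroup W] [Module ℝ W] (Φ : U →ₗ[ℝ] V →ₗ[ℝ] W)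
    {s : Set U} {t : Set V} {u : U} {v : V} (hu : u ∈ convexHull ℝ s) (hv : v ∈ convexHull ℝ t) :
    Φ u v ∈ convexHull ℝ (Set.image2 (fun u v => Φ u v) s t) := by
  set K := convexHull ℝ (Set.image2 (fun u v => Φ u v) s t)
  have hright {a : U} (ha : a ∈ s) : t ⊆ Φ a ⁻¹' K := fun b hb =>
    subset_convexHull ℝ _ (Set.mem_image2_of_mem ha hb)
  have hleft : s ⊆ Φ.flip v ⁻¹' K := fun a ha =>
    convexHull_min (hright ha) ((convex_convexHull ℝ _).linear_preimage (Φ a)) hv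
  exact convexHull_min hleft ((convex_convexHull ℝ _).linear_preimage (Φ.flip v)) hu

variable {n m : ℕ}

/-- The products of two biforms of bidegree `(1, 1)` whose coefficient vectors lie in the lattice
ball: a finite set whose convex hull contains every sum of squares of average one. -/
def latticeProducts (n m : ℕ) : Set (MvPolynomial (Fin n ⊕ Fin m) ℝ) :=
  let coeffs := (fun (u : Fin n × Fin m → ℤ) p => (u p : ℝ)) '' latticeBall (Fin n × Fin m)
  Set.image2 (fun R S => bilin n m R * bilin n m S) coeffs coeffs

theorem encard_latticeProducts_le : (latticeProducts n m).encard ≤ 12 ^ (2 * (n * m)) := by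
  have hball : (latticeBall (Fin n × Fin m) : Set (Fin n × Fin m → ℤ)).encard ≤ 12 ^ (n * m) := by
    rw [Set.encard_coe_eq_coe_finsetCard]
    exact_mod_cast (card_latticeBall_le (ι := Fin n × Fin m)).trans_eq (by simp)
  have hcoeffs := (Set.encard_image_le (fun (u : Fin n × Fin m → ℤ) p => (u p : ℝ)) _).trans hball
  rw [latticeProducts, ← Set.image_prod]
  refine (Set.encard_image_le _ _).trans ?_
  rw [Set.encard_prod, two_mul, pow_add]
  exact mul_le_mul' hcoeffs hcoeffs

variable {σ₁ : Measure (Fin n → ℝ)} {σ₂ : Measure (Fin m → ℝ)}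

theorem norm_toL2_le_of_mem_latticeProducts (h₁ : IsSphereMeasure n σ₁)
    (h₂ : IsSphereMeasure m σ₂) {f : MvPolynomial (Fin n ⊕ Fin m) ℝ}
    (hf : f ∈ latticeProducts n m) : ‖toL2 h₁ h₂ f‖ ≤ 12 := by
  have hn := h₁.pos
  have hm := h₂.pos
  obtain ⟨_, ⟨u, hu, rfl⟩, _, ⟨v, hv, rfl⟩, rfl⟩ := hf
  have hnorm {u : Fin n × Fin m → ℤ} (hu : u ∈ latticeBall (Fin n × Fin m)) :
      ∑ p, (u p : ℝ) ^ 2 ≤ 4 * (n * m) := by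
    have := mem_latticeBall.1 hu
    simp only [Fintype.card_prod, Fintype.card_fin] at this
    exact_mod_cast this
  refine (pow_le_pow_iff_left₀ (norm_nonneg _) (by norm_num) two_ne_zero).1 ?_
  rw [← real_inner_self_eq_norm_sq, inner_toL2]
  calc _ ≤ 9 / (n * m : ℝ) ^ 2 * ((∑ p, (u p : ℝ) ^ 2) * ∑ p, (v p : ℝ) ^ 2) :=
        bip_bilin_mul_bilin_self_le h₁ h₂ _ _
    _ ≤ 9 / (n * m : ℝ) ^ 2 * ((4 * (n * m)) * (4 * (n * m))) := by
        gcongr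
        exacts [hnorm hu, hnorm hv]
    _ = 12 ^ 2 := by field_simp; norm_num

theorem exists_bilin_sq_eq_bavg_smul (h₁ : IsSphereMeasure n σ₁) (h₂ : IsSphereMeasure m σ₂)
    (R : Fin n × Fin m → ℝ) : ∃ f ∈ convexHull ℝ (latticeProducts n m),
      bilin n m R ^ 2 = bavg σ₁ σ₂ (bilin n m R ^ 2) • f := by
  have hn := h₁.pos
  have hm := h₂.pos
  set w := bavg σ₁ σ₂ (bilin n m R ^ 2) with hw
  have hR : ∑ p, R p ^ 2 = w * (n * m) := by rw [hw, bavg_bilin_sq h₁ h₂]; field_simp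
  have hw0 : 0 ≤ w := by rw [hw, bavg_bilin_sq h₁ h₂]; positivity
  let S : Fin n × Fin m → ℝ := (√w)⁻¹ • R
  have hRS : R = √w • S := by
    rcases hw0.eq_or_lt with h0 | h0
    · rw [← h0, zero_mul, Finset.sum_eq_zero_iff_of_nonneg fun p _ => sq_nonneg (R p)] at hR
      ext p
      simpa [← h0] using hR p (Finset.mem_univ p)
    · exact (smul_inv_smul₀ (Real.sqrt_pos.2 h0).ne' R).symm
  have hS : ∑ p, S p ^ 2 ≤ Fintype.card (Fin n × Fin m) := by
    simp only [S, Pi.smul_apply, smul_eq_mul, mul_pow, inv_pow, Real.sq_sqrt hw0,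
      ← Finset.mul_sum, hR, Fintype.card_prod, Fintype.card_fin, Nat.cast_mul]
    rw [← mul_assoc]
    exact mul_le_of_le_one_left (by positivity) inv_mul_le_one
  refine ⟨bilin n m S * bilin n m S, ?_, ?_⟩
  · exact apply_mem_convexHull_image2 ((LinearMap.mul ℝ _).compl₁₂ (bilin n m) (bilin n m))
      (mem_convexHull_latticeBall hS) (mem_convexHull_latticeBall hS)
  · conv_lhs => rw [hRS]
    rw [map_smul, sq, smul_mul_smul_comm, Real.mul_self_sqrt hw0]

theorem mem_convexHull_latticeProducts (h₁ : IsSphereMeasure n σ₁) (h₂ : IsSphereMeasure m σ₂)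
    {f : MvPolynomial (Fin n ⊕ Fin m) ℝ} (hf : f ∈ SqSet n m 1 1) (havg : bavg σ₁ σ₂ f = 1) :
    f ∈ convexHull ℝ (latticeProducts n m) := by
  obtain ⟨N, g, hg, rfl⟩ := hf
  choose R hR using fun s => mem_biform_one_one_iff.1 (hg s)
  obtain rfl := funext hR
  choose z hz hRz using fun s => exists_bilin_sq_eq_bavg_smul h₁ h₂ (R s)
  have hnonneg (s : Fin N) : 0 ≤ bavg σ₁ σ₂ (bilin n m (R s) ^ 2) := by
    rw [bavg_bilin_sq h₁ h₂]
    positivity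
  rw [bavg_sum h₁ h₂] at havg
  rw [Finset.sum_congr rfl fun s _ => hRz s]
  exact (convex_convexHull ℝ _).sum_mem (fun s _ => hnonneg s) havg fun s _ => hz s

theorem volume_preimage_sqSet_le (h₁ : IsSphereMeasure n σ₁) (h₂ : IsSphereMeasure m σ₂) {D : ℕ}
    {ψ : (Fin D → ℝ) →ₗ[ℝ] MvPolynomial (Fin n ⊕ Fin m) ℝ}
    (hψ : ∀ a b, bip σ₁ σ₂ (ψ a) (ψ b) = ∑ i, a i * b i)
    (g : MvPolynomial (Fin n ⊕ Fin m) ℝ) (k : ℕ) :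
    volume {a | ψ a + g ∈ SqSet n m 1 1 ∧ bavg σ₁ σ₂ (ψ a + g) = 1} ≤
      12 ^ (2 * (n * m) * k) * ENNReal.ofReal ((24 / √(k + 1)) ^ D) *
        volume {a : Fin D → ℝ | ∑ i, a i ^ 2 ≤ 1} := by
  have hvolume (A : Set (Fin D → ℝ)) :
      volume ((MeasurableEquiv.toLp 2 (Fin D → ℝ)).symm ⁻¹' A) = volume A :=
    (PiLp.volume_preserving_ofLp (Fin D)).measure_preimage_equiv A
  have hball : (MeasurableEquiv.toLp 2 (Fin D → ℝ)).symm ⁻¹' {a | ∑ i, a i ^ 2 ≤ 1} =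
      closedBall (0 : EuclideanSpace ℝ (Fin D)) 1 := by
    ext a
    simp [EuclideanSpace.norm_eq]
  let φ (a : EuclideanSpace ℝ (Fin D)) : Lp ℝ 2 (σ₁.prod σ₂) := toL2 h₁ h₂ (ψ a.ofLp + g)
  have hφ : Isometry φ := by
    refine Isometry.of_dist_eq fun a b => ?_
    have hdiff : φ a - φ b = toL2 h₁ h₂ (ψ (a - b).ofLp) := by
      simp [φ]
    rw [dist_eq_norm, dist_eq_norm, hdiff, ← sq_eq_sq₀ (norm_nonneg _) (norm_nonneg _),
      ← real_inner_self_eq_norm_sq, inner_toL2, hψ, EuclideanSpace.real_norm_sq_eq]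
    simp only [sq]
  have hs : ∀ y ∈ toL2 h₁ h₂ '' latticeProducts n m, ‖y‖ ≤ (12 : NNReal) := by
    rintro _ ⟨f, hf, rfl⟩
    exact norm_toL2_le_of_mem_latticeProducts h₁ h₂ hf
  have hmaps : Set.MapsTo φ ((MeasurableEquiv.toLp 2 (Fin D → ℝ)).symm ⁻¹'
      {a | ψ a + g ∈ SqSet n m 1 1 ∧ bavg σ₁ σ₂ (ψ a + g) = 1})
      (convexHull ℝ (toL2 h₁ h₂ '' latticeProducts n m)) := by
    rintro a ⟨hsq, havg⟩
    rw [← LinearMap.image_convexHull]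
    exact Set.mem_image_of_mem _ (mem_convexHull_latticeProducts h₁ h₂ hsq havg)
  have hcard : ((toL2 h₁ h₂ '' latticeProducts n m).encard : ℝ≥0∞) ≤ 12 ^ (2 * (n * m)) := by
    exact_mod_cast ENat.toENNReal_le.2 ((Set.encard_image_le _ _).trans encard_latticeProducts_le)
  rw [← hvolume, ← hvolume {a | ∑ i, a i ^ 2 ≤ 1}, hball, pow_mul]
  refine (addHaar_le_of_mapsTo_convexHull volume (by norm_num) hs hφ hmaps k).trans ?_
  rw [finrank_euclideanSpace_fin]
  gcongr
  norm_num

theorem rpow_volume_preimage_sqSet_div_le (h₁ : IsSphereMeasure n σ₁) (h₂ : IsSphereMeasure m σ₂)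
    {D : ℕ} (hD : D ≠ 0) {ψ : (Fin D → ℝ) →ₗ[ℝ] MvPolynomial (Fin n ⊕ Fin m) ℝ}
    (hψ : ∀ a b, bip σ₁ σ₂ (ψ a) (ψ b) = ∑ i, a i * b i)
    (g : MvPolynomial (Fin n ⊕ Fin m) ℝ) {k : ℕ} (hk : 2 * (n * m) * k ≤ D) :
    (volume {a | ψ a + g ∈ SqSet n m 1 1 ∧ bavg σ₁ σ₂ (ψ a + g) = 1} /
      volume {a : Fin D → ℝ | ∑ i, a i ^ 2 ≤ 1}) ^ (1 / D : ℝ) ≤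
      ENNReal.ofReal (288 / √(k + 1)) := by
  rw [one_div, ENNReal.rpow_inv_le_iff (by positivity), ENNReal.rpow_natCast]
  refine ENNReal.div_le_of_le_mul ((volume_preimage_sqSet_le h₁ h₂ hψ g k).trans ?_)
  gcongr
  calc (12 : ℝ≥0∞) ^ (2 * (n * m) * k) * ENNReal.ofReal ((24 / √(k + 1)) ^ D)
      ≤ 12 ^ D * ENNReal.ofReal ((24 / √(k + 1)) ^ D) := by gcongr; norm_num
    _ = ENNReal.ofReal ((12 * (24 / √(k + 1))) ^ D) := by
        rw [mul_pow, ENNReal.ofReal_mul (by positivity)]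
        norm_num [ENNReal.ofReal_pow]
    _ = ENNReal.ofReal (288 / √(k + 1)) ^ D := by
        rw [← ENNReal.ofReal_pow (by positivity), ← mul_div_assoc]
        norm_num

end LatticeProducts

section Multiforms

variable {n m : ℕ}

theorem exists_monomial_eq_map_add_I_mul_map (b : ℂ) (i : Fin n) (j : Fin m) :
    ∃ A ∈ Biform (2 * n) (2 * m) 1 1, ∃ B ∈ Biform (2 * n) (2 * m) 1 1,
      C b * Zv n m i * Wv n m j = map (algebraMap ℝ ℂ) A + C Complex.I * map (algebraMap ℝ ℂ) B ∧
        C ((starRingEnd ℂ) b) * Zc n m i * Wc n m j =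
          map (algebraMap ℝ ℂ) A - C Complex.I * map (algebraMap ℝ ℂ) B := by
  let W := weightedHomogeneousSubmodule ℝ (bw (2 * n) (2 * m)) (1, 1)
  let xy (i : Fin (2 * n)) (j : Fin (2 * m)) : MvPolynomial (Fin (2 * n) ⊕ Fin (2 * m)) ℝ :=
    X (Sum.inl i) * X (Sum.inr j)
  have hxy (i j) : xy i j ∈ W := X_mul_X_mem_biform i j
  let zwRe := xy ⟨i, by omega⟩ ⟨j, by omega⟩ - xy ⟨n + i, by omega⟩ ⟨m + j, by omega⟩
  let zwIm := xy ⟨i, by omega⟩ ⟨m + j, by omega⟩ + xy ⟨n + i, by omega⟩ ⟨j, by omega⟩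
  have hRe : zwRe ∈ W := W.sub_mem (hxy _ _) (hxy _ _)
  have hIm : zwIm ∈ W := W.add_mem (hxy _ _) (hxy _ _)
  have hmapRe : map (algebraMap ℝ ℂ) zwRe = zRe n m i * wRe n m j - zIm n m i * wIm n m j := by
    simp only [zwRe, xy, map_sub, map_mul, map_X, zRe, zIm, wRe, wIm]
  have hmapIm : map (algebraMap ℝ ℂ) zwIm = zRe n m i * wIm n m j + zIm n m i * wRe n m j := by
    simp only [zwIm, xy, map_add, map_mul, map_X, zRe, zIm, wRe, wIm]
  have hI : (C Complex.I : MvPolynomial (Fin (2 * n) ⊕ Fin (2 * m)) ℂ) ^ 2 = -1 := by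
    simp [← C_pow]
  have hb : (C b : MvPolynomial (Fin (2 * n) ⊕ Fin (2 * m)) ℂ) =
      C (b.re : ℂ) + C Complex.I * C (b.im : ℂ) := by
    rw [← C_mul, ← C_add, mul_comm Complex.I, Complex.re_add_im]
  have hb' : (C ((starRingEnd ℂ) b) : MvPolynomial (Fin (2 * n) ⊕ Fin (2 * m)) ℂ) =
      C (b.re : ℂ) - C Complex.I * C (b.im : ℂ) := by
    rw [← C_mul, ← C_sub]
    exact congrArg C (by apply Complex.ext <;> simp)
  refine ⟨b.re • zwRe - b.im • zwIm, W.sub_mem (W.smul_mem _ hRe) (W.smul_mem _ hIm),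
    b.re • zwIm + b.im • zwRe, W.add_mem (W.smul_mem _ hIm) (W.smul_mem _ hRe), ?_, ?_⟩ <;>
  simp only [hb, hb', Zv, Zc, Wv, Wc, smul_eq_C_mul, map_add, map_sub, map_mul, map_C, hmapRe,
    hmapIm, Complex.coe_algebraMap]
  · linear_combination (C (b.re : ℂ) * (zIm n m i * wIm n m j) + C (b.im : ℂ) *
      (zRe n m i * wIm n m j + zIm n m i * wRe n m j) +
      C Complex.I * C (b.im : ℂ) * (zIm n m i * wIm n m j)) * hI
  · linear_combination (C (b.re : ℂ) * (zIm n m i * wIm n m j) + C (b.im : ℂ) *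
      (zRe n m i * wIm n m j + zIm n m i * wRe n m j) -
      C Complex.I * C (b.im : ℂ) * (zIm n m i * wIm n m j)) * hI

theorem exists_bilinear_eq_map_add_I_mul_map (b : Fin n → Fin m → ℂ) :
    ∃ A ∈ Biform (2 * n) (2 * m) 1 1, ∃ B ∈ Biform (2 * n) (2 * m) 1 1,
      ∑ i, ∑ j, C (b i j) * Zv n m i * Wv n m j =
          map (algebraMap ℝ ℂ) A + C Complex.I * map (algebraMap ℝ ℂ) B ∧
        ∑ i, ∑ j, C ((starRingEnd ℂ) (b i j)) * Zc n m i * Wc n m j =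
          map (algebraMap ℝ ℂ) A - C Complex.I * map (algebraMap ℝ ℂ) B := by
  let W := weightedHomogeneousSubmodule ℝ (bw (2 * n) (2 * m)) (1, 1)
  choose A hA B hB hAB hAB' using fun i j => exists_monomial_eq_map_add_I_mul_map (b i j) i j
  refine ⟨∑ i, ∑ j, A i j, W.sum_mem fun i _ => W.sum_mem fun j _ => hA i j,
    ∑ i, ∑ j, B i j, W.sum_mem fun i _ => W.sum_mem fun j _ => hB i j, ?_, ?_⟩ <;>
  simp only [hAB, hAB', map_sum, Finset.mul_sum, Finset.sum_add_distrib, Finset.sum_sub_distrib]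

theorem SqCF_subset_SqSet (isR : Bool) : SqCF n m isR ⊆ SqSet (2 * n) (2 * m) 1 1 := by
  rintro f ⟨N, b, -, hf⟩
  choose A hA B hB hAB hAB' using fun r => exists_bilinear_eq_map_add_I_mul_map (b r)
  have hmem (r : Fin (N + N)) : Fin.append A B r ∈ Biform (2 * n) (2 * m) 1 1 := by
    induction r using Fin.addCases with
    | left r => exact (Fin.append_left A B r).symm ▸ hA r
    | right r => exact (Fin.append_right A B r).symm ▸ hB r
  refine ⟨N + N, Fin.append A B, hmem, ?_⟩
  have hI : (C Complex.I : MvPolynomial (Fin (2 * n) ⊕ Fin (2 * m)) ℂ) ^ 2 = -1 := by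
    simp [← C_pow]
  apply map_injective _ (algebraMap ℝ ℂ).injective
  rw [hf, Fin.sum_univ_add]
  simp only [Fin.append_left, Fin.append_right, map_add, map_sum, map_pow, hAB, hAB',
    ← Finset.sum_add_distrib]
  refine Finset.sum_congr rfl fun r _ => ?_
  linear_combination (-map (algebraMap ℝ ℂ) (B r) ^ 2) * hI

theorem sq_le_two_mul_DCF (isR : Bool) (h : 2 ≤ n * m) : (n * m) ^ 2 ≤ 2 * DCF n m isR := by
  cases isR
  · have hfour : 2 ^ 2 ≤ (n * m) ^ 2 := Nat.pow_le_pow_left h 2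
    simp only [DCF, Bool.false_eq_true, if_false, ← mul_pow]
    omega
  · have hdvd : 2 ∣ n * m * (n * m + 1) := (Nat.even_mul_succ_self _).two_dvd
    simp only [DCF, if_true]
    have : n * m * (n * m + 1) = (n * m) ^ 2 + n * m := by ring
    omega

theorem preimage_ballCF {isR : Bool} {D : ℕ} {σ₁ : Measure (Fin (2 * n) → ℝ)}
    {σ₂ : Measure (Fin (2 * m) → ℝ)}
    {ψ : (Fin D → ℝ) →ₗ[ℝ] MvPolynomial (Fin (2 * n) ⊕ Fin (2 * m)) ℝ}
    (hψ : IsUnitaryParam (2 * n) (2 * m) D σ₁ σ₂ (MCF n m isR σ₁ σ₂) ψ) :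
    ψ ⁻¹' ballCF n m isR σ₁ σ₂ = {a | ∑ i, a i ^ 2 ≤ 1} := by
  ext a
  have hmem : ψ a ∈ MCF n m isR σ₁ σ₂ := hψ.range ▸ Set.mem_range_self a
  simp only [Set.mem_preimage, ballCF, Set.mem_ofPred_eq, hmem, true_and, hψ.ip, sq]

theorem tildeCF_SqCF_subset (isR : Bool) {σ₁ : Measure (Fin (2 * n) → ℝ)}
    {σ₂ : Measure (Fin (2 * m) → ℝ)} (hσ₁ : IsSphereMeasure (2 * n) σ₁)
    (hσ₂ : IsSphereMeasure (2 * m) σ₂) :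
    tildeCF n m isR σ₁ σ₂ (SqCF n m isR) ⊆ {f | f + qpoly (2 * n) (2 * m) 1 1 ∈
      SqSet (2 * n) (2 * m) 1 1 ∧ bavg σ₁ σ₂ (f + qpoly (2 * n) (2 * m) 1 1) = 1} := by
  rintro f ⟨⟨-, havg⟩, hsq⟩
  refine ⟨SqCF_subset_SqSet isR hsq, ?_⟩
  rw [bavg_add hσ₁ hσ₂, havg, bavg_qpoly hσ₁ hσ₂, zero_add]

theorem div_sqrt_le_two_rpow_mul (isR : Bool) {N : ℝ} (hN : 1 < N) :
    1152 / √N ≤ (2 : ℝ) ^ ((10 : ℝ) + (3 - (if isR then (1 : ℝ) else 2)) / 2) *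
      √3 * (N - 1) ^ (-(1 : ℝ) / 2) := by
  have hconst : (1152 : ℝ) ≤ 2 ^ 10 * √3 := by
    refine abs_le_of_sq_le_sq' ?_ (by positivity) |>.2
    rw [mul_pow, Real.sq_sqrt (by norm_num)]
    norm_num
  have hexp : (2 : ℝ) ^ 10 ≤ 2 ^ ((10 : ℝ) + (3 - (if isR then (1 : ℝ) else 2)) / 2) := by
    rw [← Real.rpow_natCast]
    refine Real.rpow_le_rpow_of_exponent_le (by norm_num) ?_
    cases isR <;> norm_num
  have hsqrt : (√N)⁻¹ ≤ (N - 1) ^ (-(1 : ℝ) / 2) := by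
    rw [neg_div, Real.rpow_neg (by linarith), ← Real.sqrt_eq_rpow]
    gcongr
    linarith
  rw [div_eq_mul_inv]
  exact mul_le_mul (hconst.trans (by gcongr)) hsqrt (by positivity) (by positivity)

theorem statement7_general (isR : Bool) (n m : ℕ) (hnm : 2 ≤ n * m)
    (D : ℕ) (hD : D = DCF n m isR)
    (σ₁ : Measure (Fin (2 * n) → ℝ)) (σ₂ : Measure (Fin (2 * m) → ℝ))
    (hσ₁ : IsSphereMeasure (2 * n) σ₁) (hσ₂ : IsSphereMeasure (2 * m) σ₂)
    (ψ : (Fin D → ℝ) →ₗ[ℝ] MvPolynomial (Fin (2 * n) ⊕ Fin (2 * m)) ℝ)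
    (hψ : IsUnitaryParam (2 * n) (2 * m) D σ₁ σ₂ (MCF n m isR σ₁ σ₂) ψ) :
    (volume (⇑ψ ⁻¹' tildeCF n m isR σ₁ σ₂ (SqCF n m isR)) /
        volume (⇑ψ ⁻¹' ballCF n m isR σ₁ σ₂)) ^ ((1 : ℝ) / (D : ℝ)) ≤
      ENNReal.ofReal (1152 / √(n * m)) := by
  have hDN : (n * m) ^ 2 ≤ 2 * D := hD ▸ sq_le_two_mul_DCF isR hnm
  set k := n * m / 16
  have hkD : 2 * (2 * n * (2 * m)) * k ≤ D := by
    have : 16 * k ≤ n * m := Nat.mul_div_le _ _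
    nlinarith
  have hsqrt : √(n * m) ≤ 4 * √(k + 1) := by
    have hlt : n * m ≤ 4 ^ 2 * (k + 1) := (Nat.lt_mul_div_succ _ (by norm_num)).le
    refine Real.sqrt_le_iff.2 ⟨by positivity, ?_⟩
    rw [mul_pow, Real.sq_sqrt (by positivity)]
    exact_mod_cast hlt
  have hpos : 0 < √(n * m : ℝ) := Real.sqrt_pos.2 (by exact_mod_cast (by omega : 0 < n * m))
  rw [preimage_ballCF hψ]
  calc _ ≤ _ := ENNReal.rpow_le_rpow (ENNReal.div_le_div_right
          (measure_mono (Set.preimage_mono (tildeCF_SqCF_subset isR hσ₁ hσ₂))) _) (by positivity)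
    _ ≤ ENNReal.ofReal (288 / √(k + 1)) := by
        exact rpow_volume_preimage_sqSet_div_le hσ₁ hσ₂ (by nlinarith) hψ.ip
          (qpoly (2 * n) (2 * m) 1 1) hkD
    _ ≤ ENNReal.ofReal (1152 / √(n * m)) := by
        refine ENNReal.ofReal_le_ofReal ?_
        rw [div_le_div_iff₀ (by positivity) hpos]
        linarith

end Multiforms

end BiformPaper

open BiformPaper in
/-- **Theorem (upper bound for the volume of the section `S̃q_{𝒞_𝔽}`).**  For
`𝔽 ∈ {ℝ, ℂ}` (`isR = true` for `𝔽 = ℝ`, `isR = false` for `𝔽 = ℂ`) and integers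
`n, m ≥ 2`:
`(Vol S̃q_{𝒞_𝔽} / Vol B_{𝓜_{𝒞_𝔽}})^{1/D} ≤ 2^{10+(3−dim_ℝ𝔽)/2}·√3·(nm−1)^{−1/2}`. -/
theorem statement7 (isR : Bool) (n m : ℕ) (hn : 2 ≤ n) (hm : 2 ≤ m)
    (D : ℕ) (hD : D = DCF n m isR)
    (σ₁ : Measure (Fin (2 * n) → ℝ)) (σ₂ : Measure (Fin (2 * m) → ℝ))
    (hσ₁ : IsSphereMeasure (2 * n) σ₁) (hσ₂ : IsSphereMeasure (2 * m) σ₂)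
    (ψ : (Fin D → ℝ) →ₗ[ℝ] MvPolynomial (Fin (2 * n) ⊕ Fin (2 * m)) ℝ)
    (hψ : IsUnitaryParam (2 * n) (2 * m) D σ₁ σ₂ (MCF n m isR σ₁ σ₂) ψ) :
    (volume (⇑ψ ⁻¹' tildeCF n m isR σ₁ σ₂ (SqCF n m isR)) /
        volume (⇑ψ ⁻¹' ballCF n m isR σ₁ σ₂)) ^ ((1 : ℝ) / (D : ℝ)) ≤
      ENNReal.ofReal ((2 : ℝ) ^ ((10 : ℝ) + (3 - (if isR then (1 : ℝ) else 2)) / 2) *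
        Real.sqrt 3 * ((n : ℝ) * (m : ℝ) - 1) ^ (-(1 : ℝ) / 2)) := by
  have hnm : 2 * 2 ≤ n * m := Nat.mul_le_mul hn hm
  exact (statement7_general isR n m (by omega) D hD σ₁ σ₂ hσ₁ hσ₂ ψ hψ).trans
    (ENNReal.ofReal_le_ofReal (div_sqrt_le_two_rpow_mul isR (by norm_cast; omega)))
end
end

section
/- For 𝔽 ∈ {ℝ, ℂ} and integers n, m ≥ 3, the probability p^𝔽_{n,m} that a random positive map Φ : M_n(𝔽) → M_m(𝔽) is completely positive satisfies p^𝔽_{n,m} ≤ Vol S̃q_{𝒞_𝔽} / Vol P̃os_{𝒞_𝔽} < ( (2^{28−dim_ℝ𝔽})^{1/2} · 3^{−5/2} · 5² · 10^{2/9} / √(min(n,m) − 1/2) )^{D_{𝓜_{𝒞_𝔽}}}, where dim_ℝ𝔽 = 1 for 𝔽 = ℝ, dim_ℝ𝔽 = 2 for 𝔽 = ℂ, and D_{𝓜_{𝒞_𝔽}} = n²m² − 1 if 𝔽 = ℂ and nm(nm+1)/2 − 1 if 𝔽 = ℝ. -/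
open MeasureTheory MvPolynomial

noncomputable section

/-!
Identify a biform with its Hermitian coefficient tensor. A sum of Hermitian squares is then a sum
of rank one tensors `v ⊗ v̄`, and normalizing its mean over the spheres normalizes its trace. Hence,
up to the factor `N = n * m` and a shift by `q`, `S̃q` lies in the bipolar of the rank one tensors
of unit vectors, while `P̃os` contains the polar of the rank one tensors of product vectors.

These two sets are compared by averaging over Gaussian translates: if a symmetric set `L` has
Gaussian measure at least `1 / 2`, every set `T` of radius `R` meets some translate of `L` in at
least a proportion `exp (-R ^ 2 / 2) / 2` of its volume. Bounds on the expected supremum of the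
Gaussian processes indexed by unit balls show that this applies to the polar of the rank one tensors
scaled by `O(√N)`, and to the polar of the product tensors scaled by `O(√(n + m))`.

Two points of the bipolar lying in a common translate of a small multiple of the polar are close to
each other. So translates of the first polar cut from the bipolar a subset of half the squared
diameter, and after about `log₂ N` halvings, which cost a factor `exp (O(N ^ 2))`, the squared
diameter is `O(1 / N)`. A translate of the second polar, scaled by `O(√((n + m) / N) / N)`, then
catches a proportion `exp (-O(N ^ 2))` of what is left. As the dimension is at least `N ^ 2 / 2`,
all exponential factors go into the constant, and `√((n + m) / N)` is at most `√(2 / min n m)`.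
-/

namespace PositiveMaps

open Metric Set ProbabilityTheory
open scoped Pointwise RealInnerProductSpace

section Polar

variable {E : Type*} [NormedAddCommGroup E] [InnerProductSpace ℝ E] {A : Set E} {x y : E} {r s : ℝ}

lemma mem_smul_polar_innerₗ (hr : 0 < r) :
    x ∈ r • (innerₗ E).polar A ↔ ∀ a ∈ A, |⟪a, x⟫| ≤ r := by
  rw [mem_smul_set_iff_inv_smul_mem₀ hr.ne', LinearMap.polar_mem_iff]
  refine forall₂_congr fun a _ => ?_
  rw [innerₗ_apply_apply, real_inner_smul_right, norm_mul, Real.norm_of_nonneg (inv_pos.2 hr).le,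
    inv_mul_le_one₀ hr, Real.norm_eq_abs]

lemma isClosed_polar_innerₗ (A : Set E) : IsClosed ((innerₗ E).polar A) := by
  rw [LinearMap.polar_eq_iInter]
  refine isClosed_biInter fun a _ => isClosed_le ?_ continuous_const
  simp only [innerₗ_apply_apply]
  fun_prop

lemma neg_polar_innerₗ (A : Set E) : -(innerₗ E).polar A = (innerₗ E).polar A := by
  ext x
  simp only [mem_neg, LinearMap.polar_mem_iff, map_neg, norm_neg]

lemma abs_inner_le_of_mem_smul_polar (hr : 0 < r) (hs : 0 < s) (hx : x ∈ r • (innerₗ E).polar A)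
    (hy : y ∈ s • (innerₗ E).polar ((innerₗ E).polar A)) : |⟪x, y⟫| ≤ r * s := by
  obtain ⟨a, ha, rfl⟩ := hx
  rw [real_inner_smul_left, abs_mul, abs_of_pos hr]
  gcongr
  exact (mem_smul_polar_innerₗ hs).1 hy a ha

lemma norm_le_of_mem_smul_bipolar (hA : A ⊆ closedBall 0 1) (hr : 0 < r)
    (hx : x ∈ r • (innerₗ E).polar ((innerₗ E).polar A)) : ‖x‖ ≤ r := by
  rcases eq_or_ne x 0 with rfl | hx₀
  · simpa using hr.le
  have hmem : x ∈ ‖x‖ • (innerₗ E).polar A := by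
    refine (mem_smul_polar_innerₗ (norm_pos_iff.2 hx₀)).2 fun a ha => ?_
    have := abs_real_inner_le_norm a x
    nlinarith [norm_nonneg x, mem_closedBall_zero_iff.1 (hA ha)]
  have h := abs_inner_le_of_mem_smul_polar (norm_pos_iff.2 hx₀) hr hmem hx
  rw [real_inner_self_eq_norm_sq, abs_of_nonneg (sq_nonneg _), sq] at h
  exact le_of_mul_le_mul_left h (norm_pos_iff.2 hx₀)

lemma norm_sub_sq_le_of_mem_smul_bipolar (hr : 0 < r) (hs : 0 < s) {z : E}
    (hx : x ∈ r • (innerₗ E).polar ((innerₗ E).polar A))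
    (hy : y ∈ r • (innerₗ E).polar ((innerₗ E).polar A))
    (hxz : x ∈ z +ᵥ s • (innerₗ E).polar A) (hyz : y ∈ z +ᵥ s • (innerₗ E).polar A) :
    ‖x - y‖ ^ 2 ≤ 4 * r * s := by
  rw [mem_vadd_set_iff_neg_vadd_mem, mem_smul_polar_innerₗ hs] at hxz hyz
  have hsub : x - y ∈ (2 * s) • (innerₗ E).polar A := by
    refine (mem_smul_polar_innerₗ (by positivity)).2 fun a ha => ?_
    have h := (abs_sub _ _).trans (add_le_add (hxz a ha) (hyz a ha))
    rwa [← inner_sub_right, vadd_eq_add, vadd_eq_add, add_sub_add_left_eq_sub, ← two_mul] at h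
  have hinner {w : E} (hw : w ∈ r • (innerₗ E).polar ((innerₗ E).polar A)) :=
    abs_le.1 (abs_inner_le_of_mem_smul_polar (by positivity) hr hsub hw)
  rw [← real_inner_self_eq_norm_sq, inner_sub_right]
  linarith [hinner hx, hinner hy]

end Polar

section Gaussian

lemma mem_vadd_comm_of_neg_eq {G : Type*} [AddCommGroup G] {L : Set G} (hsymm : -L = L) {x y : G} :
    x ∈ y +ᵥ L ↔ y ∈ x +ᵥ L := by
  rw [mem_vadd_set_iff_neg_vadd_mem, mem_vadd_set_iff_neg_vadd_mem, ← neg_mem_neg, hsymm,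
    vadd_eq_add, vadd_eq_add, neg_add_rev, neg_neg, add_comm]

variable {E : Type*} [NormedAddCommGroup E] [InnerProductSpace ℝ E]

variable (E) in
/-- The density of the standard Gaussian measure of `E` with respect to the volume, with its
normalizing constant written as in `GaussianFourier.integral_rexp_neg_mul_sq_norm`. -/
def gaussianDensity (x : E) : ℝ :=
  ((Real.pi / (1 / 2)) ^ (Module.finrank ℝ E / 2 : ℝ))⁻¹ * Real.exp (-(1 / 2) * ‖x‖ ^ 2)

lemma gaussianDensity_pos (x : E) : 0 < gaussianDensity E x := by
  unfold gaussianDensity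
  positivity

@[fun_prop]
lemma continuous_gaussianDensity : Continuous (gaussianDensity E) := by
  unfold gaussianDensity
  fun_prop

lemma gaussianDensity_add (x₀ x : E) : gaussianDensity E (x₀ + x) =
    gaussianDensity E x * Real.exp (-⟪x₀, x⟫ - ‖x₀‖ ^ 2 / 2) := by
  simp only [gaussianDensity]
  rw [mul_assoc, ← Real.exp_add, norm_add_sq_real]
  ring_nf

variable [FiniteDimensional ℝ E] [MeasurableSpace E] [BorelSpace E]

lemma integral_gaussianDensity : ∫ x, gaussianDensity E x = 1 := by
  simp only [gaussianDensity]
  rw [integral_const_mul, GaussianFourier.integral_rexp_neg_mul_sq_norm one_half_pos,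
    inv_mul_cancel₀ (by positivity)]

variable (E) in
lemma integrable_gaussianDensity : Integrable (gaussianDensity E) :=
  .of_integral_ne_zero (by rw [integral_gaussianDensity]; exact one_ne_zero)

lemma integral_gaussianDensity_mul_cexp (t : E) :
    ∫ x, (gaussianDensity E x : ℂ) * Complex.exp (⟪x, t⟫ * Complex.I) =
      Complex.exp (-‖t‖ ^ 2 / 2) := by
  have hnorm : ((Real.pi / ((1 / 2 : ℝ) : ℂ)) ^ (Module.finrank ℝ E / 2 : ℂ)) =
      (((Real.pi / (1 / 2)) ^ (Module.finrank ℝ E / 2 : ℝ) : ℝ) : ℂ) := by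
    rw [Complex.ofReal_cpow (by positivity)]
    push_cast
    rfl
  have hfourier := GaussianFourier.integral_cexp_neg_mul_sq_norm_add (V := E)
    (b := ((1 / 2 : ℝ) : ℂ)) (by simp) Complex.I t
  calc ∫ x, (gaussianDensity E x : ℂ) * Complex.exp (⟪x, t⟫ * Complex.I)
      = (((Real.pi / (1 / 2)) ^ (Module.finrank ℝ E / 2 : ℝ) : ℝ) : ℂ)⁻¹ *
        ∫ x : E, Complex.exp (-((1 / 2 : ℝ) : ℂ) * ‖x‖ ^ 2 + Complex.I * ⟪t, x⟫) := by
        rw [← integral_const_mul]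
        refine integral_congr_ae (.of_forall fun x => ?_)
        simp only [gaussianDensity, Complex.exp_add, real_inner_comm, mul_comm Complex.I]
        push_cast
        ring
    _ = Complex.exp (Complex.I ^ 2 * ‖t‖ ^ 2 / (4 * ((1 / 2 : ℝ) : ℂ))) := by
        rw [hfourier, hnorm, inv_mul_cancel_left₀ (Complex.ofReal_ne_zero.2 (by positivity))]
    _ = Complex.exp (-‖t‖ ^ 2 / 2) := by
        rw [Complex.I_sq]
        push_cast
        ring_nf

variable (E) in
theorem stdGaussian_eq_withDensity :
    stdGaussian E = volume.withDensity fun x => ENNReal.ofReal (gaussianDensity E x) := by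
  have := isFiniteMeasure_withDensity_ofReal (integrable_gaussianDensity E).2
  refine Measure.ext_of_charFun (funext fun t => ?_)
  rw [charFun_stdGaussian, charFun_apply, ← integral_gaussianDensity_mul_cexp,
    integral_withDensity_eq_integral_toReal_smul (by fun_prop) (by simp)]
  simp only [ENNReal.toReal_ofReal (gaussianDensity_pos _).le, Complex.real_smul]

theorem stdGaussian_vadd (x₀ : E) {L : Set E} (hL : MeasurableSet L) :
    stdGaussian E (x₀ +ᵥ L) =
      ∫⁻ x in L, ENNReal.ofReal (Real.exp (-⟪x₀, x⟫ - ‖x₀‖ ^ 2 / 2)) ∂stdGaussian E := by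
  have hpre : (x₀ + ·) ⁻¹' (x₀ +ᵥ L) = L := preimage_vadd x₀ _ |>.trans (by simp)
  simp only [stdGaussian_eq_withDensity]
  rw [withDensity_apply _ (hL.const_vadd x₀), setLIntegral_withDensity_eq_setLIntegral_mul _
    (by fun_prop) (by fun_prop) hL, ← (measurePreserving_add_left volume
    x₀).setLIntegral_comp_preimage_emb (measurableEmbedding_addLeft x₀), hpre]
  simp only [gaussianDensity_add, Pi.mul_apply, ENNReal.ofReal_mul (gaussianDensity_pos _).le]

lemma stdGaussian_neg (L : Set E) : stdGaussian E (-L) = stdGaussian E L := by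
  conv_rhs => rw [← stdGaussian_map (LinearIsometryEquiv.neg ℝ (E := E))]
  exact ((LinearIsometryEquiv.neg ℝ (E := E)).toHomeomorph.measurableEmbedding.map_apply _ L).symm

lemma exp_neg_mul_stdGaussian_le_stdGaussian_vadd {L : Set E} (hL : MeasurableSet L)
    (hsymm : -L = L) (x₀ : E) :
    ENNReal.ofReal (Real.exp (-‖x₀‖ ^ 2 / 2)) * stdGaussian E L ≤ stdGaussian E (x₀ +ᵥ L) := by
  set κ := ENNReal.ofReal (Real.exp (-‖x₀‖ ^ 2 / 2))
  have hneg : stdGaussian E (-x₀ +ᵥ L) = stdGaussian E (x₀ +ᵥ L) := by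
    rw [← stdGaussian_neg]
    congr 1
    ext x
    rw [mem_neg, mem_vadd_set_iff_neg_vadd_mem, mem_vadd_set_iff_neg_vadd_mem, neg_neg,
      ← neg_mem_neg, hsymm, vadd_eq_add, vadd_eq_add, neg_add_rev, neg_neg, add_comm]
  have hexp (x : E) : 2 * κ ≤ ENNReal.ofReal (Real.exp (-⟪x₀, x⟫ - ‖x₀‖ ^ 2 / 2)) +
      ENNReal.ofReal (Real.exp (-⟪-x₀, x⟫ - ‖-x₀‖ ^ 2 / 2)) := by
    rw [← ENNReal.ofReal_add (Real.exp_nonneg _) (Real.exp_nonneg _), ← ENNReal.ofReal_ofNat,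
      ← ENNReal.ofReal_mul zero_le_two]
    refine ENNReal.ofReal_le_ofReal ?_
    have h := Real.one_le_cosh ⟪x₀, x⟫
    rw [Real.cosh_eq] at h
    simp only [inner_neg_left, norm_neg, neg_neg, sub_eq_add_neg, Real.exp_add, ← neg_div]
    nlinarith [Real.exp_pos (-‖x₀‖ ^ 2 / 2)]
  have htwo : 2 * (κ * stdGaussian E L) ≤ 2 * stdGaussian E (x₀ +ᵥ L) :=
    calc 2 * (κ * stdGaussian E L) = ∫⁻ x in L, 2 * κ ∂stdGaussian E := by
          rw [setLIntegral_const, mul_assoc]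
      _ ≤ stdGaussian E (x₀ +ᵥ L) + stdGaussian E (-x₀ +ᵥ L) := by
          rw [stdGaussian_vadd _ hL, stdGaussian_vadd _ hL, ← lintegral_add_left (by fun_prop)]
          exact lintegral_mono hexp
      _ = 2 * stdGaussian E (x₀ +ᵥ L) := by rw [hneg, two_mul]
  exact (ENNReal.mul_le_mul_iff_right two_ne_zero ENNReal.ofNat_ne_top).1 htwo

lemma map_inner_stdGaussian (h : E) :
    (stdGaussian E).map (fun x => ⟪h, x⟫) = gaussianReal 0 (‖h‖₊ ^ 2) := by
  have hmap := IsGaussian.map_eq_gaussianReal (μ := stdGaussian E) (innerSL ℝ h)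
  rw [integral_strongDual_stdGaussian, variance_dual_stdGaussian, innerSL_apply_norm] at hmap
  rwa [show ‖h‖₊ ^ 2 = (‖h‖ ^ 2).toNNReal from NNReal.eq (by simp)]

lemma hasSubgaussianMGF_inner_stdGaussian {h : E} {s : NNReal} (hs : ‖h‖ ≤ s) :
    HasSubgaussianMGF (fun x => ⟪h, x⟫) (s ^ 2) (stdGaussian E) where
  integrable_exp_mul t := by
    rw [← mgf_pos_iff, mgf_gaussianReal (map_inner_stdGaussian h)]
    exact Real.exp_pos _
  mgf_le t := by
    rw [mgf_gaussianReal (map_inner_stdGaussian h), zero_mul, zero_add]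
    gcongr
    exact hs

lemma stdGaussian_lt_abs_inner_le {h : E} {s t : ℝ} (hs : ‖h‖ ≤ s) (ht : 0 ≤ t) :
    stdGaussian E {x | t < |⟪h, x⟫|} ≤ ENNReal.ofReal (2 * Real.exp (-t ^ 2 / (2 * s ^ 2))) := by
  lift s to NNReal using (norm_nonneg h).trans hs
  have hX := hasSubgaussianMGF_inner_stdGaussian hs
  have hsub : {x | t < |⟪h, x⟫|} ⊆ {x | t ≤ ⟪h, x⟫} ∪ {x | t ≤ (-fun x => ⟪h, x⟫) x} :=
    fun x hx => (lt_abs.1 (mem_ofPred_eq ▸ hx)).imp le_of_lt fun hneg => le_of_lt hneg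
  rw [← ofReal_measureReal]
  refine ENNReal.ofReal_le_ofReal ?_
  calc (stdGaussian E).real {x | t < |⟪h, x⟫|}
      ≤ (stdGaussian E).real {x | t ≤ ⟪h, x⟫} +
        (stdGaussian E).real {x | t ≤ (-fun x => ⟪h, x⟫) x} :=
        (measureReal_mono hsub).trans (measureReal_union_le _ _)
    _ ≤ 2 * Real.exp (-t ^ 2 / (2 * s ^ 2)) := by
        rw [two_mul]
        exact add_le_add (hX.measure_ge_le ht) (hX.neg.measure_ge_le ht)

lemma lintegral_volume_inter_vadd (μ : Measure E) [SFinite μ] (T : Set E) {L : Set E}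
    (hL : MeasurableSet L) (hsymm : -L = L) :
    ∫⁻ y, volume (T ∩ (y +ᵥ L)) ∂μ = ∫⁻ x in T, μ (x +ᵥ L) := by
  have hS : MeasurableSet {p : E × E | p.1 ∈ p.2 +ᵥ L} := by
    simp only [mem_vadd_set_iff_neg_vadd_mem]
    exact (by fun_prop : Measurable fun p : E × E => -p.2 +ᵥ p.1) hL
  calc ∫⁻ y, volume (T ∩ (y +ᵥ L)) ∂μ
      = ((volume.restrict T).prod μ) {p | p.1 ∈ p.2 +ᵥ L} := by
        rw [Measure.prod_apply_symm hS]
        refine lintegral_congr fun y => ?_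
        rw [Measure.restrict_apply (measurable_prodMk_right hS), inter_comm]
        rfl
    _ = ∫⁻ x in T, μ (x +ᵥ L) := by
        rw [Measure.prod_apply hS]
        refine lintegral_congr fun x => congrArg μ (ext fun y => ?_)
        exact mem_vadd_comm_of_neg_eq hsymm

/-- Averaging over a random translate: the Gaussian centre `y` near `x₀` hits `x + L` with
probability at least `exp (-R ^ 2 / 2) / 2`, for every `x ∈ T`. -/
theorem exists_volume_le_volume_inter_vadd {T L : Set E} (hT : MeasurableSet T)
    (hL : MeasurableSet L) (hsymm : -L = L) (hγ : 1 / 2 ≤ stdGaussian E L) {x₀ : E} {R : ℝ}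
    (hTR : T ⊆ closedBall x₀ R) :
    ∃ y : E, volume T ≤ ENNReal.ofReal (2 * Real.exp (R ^ 2 / 2)) * volume (T ∩ (y +ᵥ L)) := by
  set μ := (stdGaussian E).map (x₀ + ·)
  have : IsProbabilityMeasure μ := Measure.isProbabilityMeasure_map (by fun_prop)
  have hμ {x : E} (hx : x ∈ T) :
      ENNReal.ofReal (Real.exp (-R ^ 2 / 2)) * (1 / 2) ≤ μ (x +ᵥ L) := by
    have hpre : (x₀ + ·) ⁻¹' (x +ᵥ L) = (x - x₀ : E) +ᵥ L := by
      ext z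
      simp only [mem_preimage, mem_vadd_set_iff_neg_vadd_mem, vadd_eq_add]
      rw [← add_assoc, neg_sub, sub_eq_neg_add]
    have hxR : ‖x - x₀‖ ^ 2 ≤ R ^ 2 := by
      have := mem_closedBall_iff_norm.1 (hTR hx)
      gcongr
    rw [Measure.map_apply (by fun_prop) (hL.const_vadd x), hpre]
    refine le_trans ?_ (exp_neg_mul_stdGaussian_le_stdGaussian_vadd hL hsymm (x - x₀))
    gcongr
  have hTfin : ∫⁻ y, volume (T ∩ (y +ᵥ L)) ∂μ ≠ ⊤ := by
    refine ne_top_of_le_ne_top ?_ (lintegral_mono fun y => measure_mono inter_subset_left)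
    rw [lintegral_const, measure_univ, mul_one]
    exact ((measure_mono hTR).trans_lt measure_closedBall_lt_top).ne
  obtain ⟨y, hy⟩ := exists_lintegral_le hTfin
  refine ⟨y, ?_⟩
  calc volume T
      = ENNReal.ofReal (2 * Real.exp (R ^ 2 / 2)) *
          (ENNReal.ofReal (Real.exp (-R ^ 2 / 2)) * (1 / 2) * volume T) := by
        rw [← mul_assoc, ← mul_assoc, ← ENNReal.ofReal_mul (by positivity), mul_assoc 2,
          ← Real.exp_add, neg_div, add_neg_cancel, Real.exp_zero, mul_one, ENNReal.ofReal_ofNat,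
          one_div, ENNReal.mul_inv_cancel two_ne_zero ENNReal.ofNat_ne_top, one_mul]
    _ = ENNReal.ofReal (2 * Real.exp (R ^ 2 / 2)) *
          ∫⁻ _ in T, ENNReal.ofReal (Real.exp (-R ^ 2 / 2)) * (1 / 2) := by
        rw [setLIntegral_const]
    _ ≤ ENNReal.ofReal (2 * Real.exp (R ^ 2 / 2)) * ∫⁻ x in T, μ (x +ᵥ L) := by
        gcongr _ * ?_
        exact setLIntegral_mono' hT fun x hx => hμ hx
    _ ≤ _ := by
        rw [← lintegral_volume_inter_vadd μ T hL hsymm]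
        gcongr

theorem exists_volume_le_volume_inter_vadd_smul {T K : Set E} (hT : MeasurableSet T)
    (hK : MeasurableSet K) (hsymm : -K = K) {M : ℝ} (hM : 0 < M)
    (hγ : 1 / 2 ≤ stdGaussian E (M • K)) {x₀ : E} {R : ℝ} (hTR : T ⊆ closedBall x₀ R)
    {c : ℝ} (hc : 0 < c) :
    ∃ y : E, volume T ≤ ENNReal.ofReal (2 * Real.exp ((c * R) ^ 2 / 2)) *
      volume (T ∩ (y +ᵥ (M / c) • K)) := by
  have hcT : c • T ⊆ closedBall (c • x₀) (c * R) := by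
    rintro _ ⟨x, hx, rfl⟩
    rw [mem_closedBall, dist_smul₀, Real.norm_of_nonneg hc.le]
    exact mul_le_mul_of_nonneg_left (hTR hx) hc.le
  obtain ⟨y, hy⟩ := exists_volume_le_volume_inter_vadd (hT.const_smul₀ c)
    (hK.const_smul₀ M) (by rw [← smul_set_neg, hsymm]) hγ hcT
  refine ⟨c⁻¹ • y, ?_⟩
  have hinter : (c • T) ∩ (y +ᵥ M • K) = c • (T ∩ ((c⁻¹ • y : E) +ᵥ (M / c) • K)) := by
    rw [smul_set_inter₀ hc.ne']
    congr 1
    ext x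
    simp only [mem_smul_set_iff_inv_smul_mem₀ hc.ne', mem_vadd_set_iff_neg_vadd_mem,
      mem_smul_set_iff_inv_smul_mem₀ hM.ne', mem_smul_set_iff_inv_smul_mem₀ (div_pos hM hc).ne',
      vadd_eq_add, ← smul_neg, ← smul_add, smul_smul]
    rw [inv_div, div_mul_eq_mul_div, mul_inv_cancel₀ hc.ne', one_div]
  have hpow : ENNReal.ofReal |c ^ Module.finrank ℝ E| ≠ 0 := by simp [hc.ne']
  rw [hinter, Measure.addHaar_smul, Measure.addHaar_smul, mul_left_comm] at hy
  exact (ENNReal.mul_le_mul_iff_right hpow ENNReal.ofReal_ne_top).1 hy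

end Gaussian

section Supremum

variable {E : Type*} [NormedAddCommGroup E] [InnerProductSpace ℝ E]
  {V : Type*} [NormedAddCommGroup V]

/-- A continuous family of vectors indexed by a normed space whose pairings with any fixed vector
vary slowly relative to their supremum over the unit ball. Every such pairing which is large
somewhere on the unit ball is large on a ball of radius `1 / 10`, so Gaussian suprema over the
unit ball are controlled by averages. The exponent `4` allows for biquadratic families. -/
structure IsTameFamily (h : V → E) : Prop where
  continuous : Continuous h
  norm_le : ∀ v, ‖v‖ ≤ 11 / 10 → ‖h v‖ ≤ (11 / 10) ^ 4
  abs_inner_sub_inner_le : ∀ (x : E) (M : ℝ), (∀ v, ‖v‖ ≤ 1 → |⟪h v, x⟫| ≤ M) →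
    ∀ v₀ v, ‖v₀‖ ≤ 1 → ‖v - v₀‖ ≤ 1 / 10 → |⟪h v, x⟫ - ⟪h v₀, x⟫| ≤ M / 2

lemma IsTameFamily.closedBall_subset [NormedSpace ℝ V] [FiniteDimensional ℝ V] {h : V → E}
    (hh : IsTameFamily h) {x : E} {M : ℝ} (hx : ∃ v, ‖v‖ ≤ 1 ∧ M < |⟪h v, x⟫|) :
    ∃ v₀, closedBall v₀ (1 / 10) ⊆ closedBall 0 (11 / 10) ∩ {v | M / 2 < |⟪h v, x⟫|} := by
  have hcont := hh.continuous
  obtain ⟨v₁, hv₁, hM⟩ := hx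
  obtain ⟨v₀, hv₀, hmax⟩ := (isCompact_closedBall (0 : V) 1).exists_isMaxOn
    ⟨v₁, by simpa using hv₁⟩ (by fun_prop : Continuous fun v => |⟪h v, x⟫|).continuousOn
  rw [mem_closedBall_zero_iff] at hv₀
  have hle (v : V) (hv : ‖v‖ ≤ 1) : |⟪h v, x⟫| ≤ |⟪h v₀, x⟫| :=
    hmax (mem_closedBall_zero_iff.2 hv)
  refine ⟨v₀, fun v hv => ⟨?_, ?_⟩⟩
  · have := norm_le_norm_add_norm_sub' v v₀
    rw [mem_closedBall_iff_norm] at hv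
    rw [mem_closedBall_zero_iff]
    linarith
  · have hsub := hh.abs_inner_sub_inner_le x _ hle v₀ v hv₀ (mem_closedBall_iff_norm.1 hv)
    have := abs_sub_abs_le_abs_sub ⟪h v₀, x⟫ ⟪h v, x⟫
    rw [abs_sub_comm] at this
    rw [mem_ofPred_eq]
    linarith [hM.trans_le (hle v₁ hv₁)]

variable [FiniteDimensional ℝ E] [MeasurableSpace E] [BorelSpace E]

lemma IsTameFamily.lintegral_measure_le [MeasurableSpace V] [BorelSpace V]
    [SecondCountableTopology V] (ν : Measure V) [SFinite ν] {h : V → E} (hh : IsTameFamily h)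
    {t : ℝ} (ht : 0 ≤ t) :
    ∫⁻ x, ν (closedBall 0 (11 / 10) ∩ {v | t < |⟪h v, x⟫|}) ∂stdGaussian E ≤
      ENNReal.ofReal (2 * Real.exp (-t ^ 2 / (2 * ((11 / 10) ^ 4) ^ 2))) *
        ν (closedBall 0 (11 / 10)) := by
  have hcont := hh.continuous
  have hS : MeasurableSet {p : E × V | t < |⟪h p.2, p.1⟫|} :=
    (isOpen_lt continuous_const (by fun_prop)).measurableSet
  calc ∫⁻ x, ν (closedBall 0 (11 / 10) ∩ {v | t < |⟪h v, x⟫|}) ∂stdGaussian E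
      = ((stdGaussian E).prod (ν.restrict (closedBall 0 (11 / 10))))
          {p | t < |⟪h p.2, p.1⟫|} := by
        rw [Measure.prod_apply hS]
        refine lintegral_congr fun x => ?_
        rw [Measure.restrict_apply (measurable_prodMk_left hS), inter_comm]
        rfl
    _ = ∫⁻ v in closedBall 0 (11 / 10), stdGaussian E {x | t < |⟪h v, x⟫|} ∂ν :=
        Measure.prod_apply_symm hS
    _ ≤ ∫⁻ _ in closedBall 0 (11 / 10),
          ENNReal.ofReal (2 * Real.exp (-t ^ 2 / (2 * ((11 / 10) ^ 4) ^ 2))) ∂ν :=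
        setLIntegral_mono' measurableSet_closedBall fun v hv =>
          stdGaussian_lt_abs_inner_le (hh.norm_le v (mem_closedBall_zero_iff.1 hv)) ht
    _ = _ := setLIntegral_const _ _

lemma eleven_pow_mul_exp_le {d : ℕ} (hd : 12 ≤ d) :
    2 * Real.exp (-(√(45 * d) / 2) ^ 2 / (2 * ((11 / 10) ^ 4) ^ 2)) * 11 ^ d ≤ 1 / 2 := by
  have hd' : (12 : ℝ) ≤ d := by exact_mod_cast hd
  have hfour : (4 : ℝ) ≤ Real.exp 2 := by
    rw [show (2 : ℝ) = (2 : ℕ) * 1 by norm_num, Real.exp_nat_mul]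
    nlinarith [Real.exp_one_gt_d9]
  have heleven : (11 : ℝ) ^ d ≤ Real.exp (d * (12 / 5)) := by
    rw [Real.exp_nat_mul]
    gcongr
    refine le_of_pow_le_pow_left₀ (n := 5) (by norm_num) (Real.exp_nonneg _) ?_
    calc (11 : ℝ) ^ 5 ≤ 2.7182818283 ^ 12 := by norm_num
      _ ≤ Real.exp 1 ^ 12 := by gcongr; exact Real.exp_one_gt_d9.le
      _ = Real.exp (12 / 5) ^ 5 := by rw [← Real.exp_nat_mul, ← Real.exp_nat_mul]; norm_num
  have hexponent : 2 + d * (12 / 5) + -(√(45 * d) / 2) ^ 2 / (2 * ((11 / 10 : ℝ) ^ 4) ^ 2) ≤ 0 := by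
    rw [div_pow, Real.sq_sqrt (by positivity)]
    norm_num
    linarith
  have hprod := mul_le_mul hfour heleven (by positivity) (by positivity)
  rw [← Real.exp_add] at hprod
  have := mul_le_mul_of_nonneg_right hprod (Real.exp_nonneg
    (-(√(45 * d) / 2) ^ 2 / (2 * ((11 / 10 : ℝ) ^ 4) ^ 2)))
  rw [← Real.exp_add] at this
  linarith [Real.exp_le_one_iff.2 hexponent]

/-- Where the supremum exceeds `√(45 * d)`, the process exceeds half of that on a `11 ^ (-d)`
fraction of the ball of radius `11 / 10`, which the Gaussian tail makes unlikely. -/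
theorem IsTameFamily.one_half_le_stdGaussian [NormedSpace ℝ V] [FiniteDimensional ℝ V]
    {h : V → E} (hh : IsTameFamily h) (hd : 12 ≤ Module.finrank ℝ V) :
    1 / 2 ≤ stdGaussian E
      (√(45 * Module.finrank ℝ V) • (innerₗ E).polar (h '' closedBall 0 1)) := by
  borelize V
  set M := √(45 * Module.finrank ℝ V)
  set K := M • (innerₗ E).polar (h '' closedBall 0 1)
  have hM : 0 < M := Real.sqrt_pos.2 (by norm_cast; omega)
  have hK : MeasurableSet K := (isClosed_polar_innerₗ _).measurableSet.const_smul₀ M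
  let ν : Measure V := Measure.addHaar
  have hball (v : V) : ν (closedBall v (1 / 10)) = ν (closedBall 0 (1 / 10)) :=
    Measure.addHaar_closedBall_center ν v _
  have hν : ν (closedBall 0 (11 / 10)) =
      ENNReal.ofReal (11 ^ Module.finrank ℝ V) * ν (closedBall 0 (1 / 10)) := by
    rw [← Measure.addHaar_closedBall_mul_of_pos ν 0 (by norm_num)]
    norm_num
  have hν0 : ν (closedBall 0 (1 / 10)) ≠ 0 := (measure_closedBall_pos ν 0 (by norm_num)).ne'
  have hνtop : ν (closedBall (0 : V) (1 / 10)) ≠ ⊤ := measure_closedBall_lt_top.ne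
  have hlow {x : E} (hx : x ∈ Kᶜ) : ν (closedBall 0 (1 / 10)) ≤
      ν (closedBall 0 (11 / 10) ∩ {v | M / 2 < |⟪h v, x⟫|}) := by
    obtain ⟨v₀, hv₀⟩ := hh.closedBall_subset (x := x) (M := M)
      (by simpa [K, mem_smul_polar_innerₗ hM] using hx)
    rw [← hball v₀]
    exact measure_mono hv₀
  have hcompl : stdGaussian E Kᶜ ≤ 1 / 2 := by
    refine (ENNReal.mul_le_mul_iff_right hν0 hνtop).1 ?_
    calc ν (closedBall 0 (1 / 10)) * stdGaussian E Kᶜ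
        = ∫⁻ _ in Kᶜ, ν (closedBall 0 (1 / 10)) ∂stdGaussian E := (setLIntegral_const _ _).symm
      _ ≤ ∫⁻ x, ν (closedBall 0 (11 / 10) ∩ {v | M / 2 < |⟪h v, x⟫|}) ∂stdGaussian E :=
          (setLIntegral_mono' hK.compl fun x hx => hlow hx).trans (setLIntegral_le_lintegral _ _)
      _ ≤ _ := hh.lintegral_measure_le ν (half_pos hM).le
      _ = ν (closedBall 0 (1 / 10)) * ENNReal.ofReal _ := by
          rw [hν, ← mul_assoc, ← ENNReal.ofReal_mul (by positivity), mul_comm]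
      _ ≤ _ := by
          gcongr
          exact (ENNReal.ofReal_le_ofReal (eleven_pow_mul_exp_le hd)).trans_eq (by simp)
  rw [prob_compl_eq_one_sub hK, tsub_le_iff_right, ← tsub_le_iff_left] at hcompl
  simpa only [one_div, ENNReal.one_sub_inv_two] using hcompl

end Supremum

section VolumeComparison

lemma exists_subset_closedBall_sqrt {E : Type*} [NormedAddCommGroup E] {T : Set E} {r : ℝ}
    (hT : ∀ x ∈ T, ∀ y ∈ T, ‖x - y‖ ^ 2 ≤ r) : ∃ x₀, T ⊆ closedBall x₀ √r := by
  rcases T.eq_empty_or_nonempty with rfl | ⟨x₀, hx₀⟩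
  · exact ⟨0, empty_subset _⟩
  · exact ⟨x₀, fun x hx => mem_closedBall_iff_norm.2 (Real.le_sqrt_of_sq_le (hT x hx x₀ hx₀))⟩

variable {E : Type*} [NormedAddCommGroup E] [InnerProductSpace ℝ E] [FiniteDimensional ℝ E]
  [MeasurableSpace E] [BorelSpace E] {A B : Set E} {M L : ℝ}

/-- Two points of the bipolar which lie in a common translate of a small multiple of the polar are
close to each other, so intersecting with such a translate shrinks the diameter. -/
lemma exists_subset_norm_sub_sq_le_half {T : Set E} (hT : MeasurableSet T)
    (hTA : T ⊆ (innerₗ E).polar ((innerₗ E).polar A)) (hM : 0 < M)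
    (hγ : 1 / 2 ≤ stdGaussian E (M • (innerₗ E).polar A)) {r : ℝ} (hr : 0 < r)
    (hdiam : ∀ x ∈ T, ∀ y ∈ T, ‖x - y‖ ^ 2 ≤ r) :
    ∃ T' ⊆ T, MeasurableSet T' ∧ (∀ x ∈ T', ∀ y ∈ T', ‖x - y‖ ^ 2 ≤ r / 2) ∧
      volume T ≤ ENNReal.ofReal (2 * Real.exp (32 * M ^ 2 / r)) * volume T' := by
  obtain ⟨x₀, hx₀⟩ := exists_subset_closedBall_sqrt hdiam
  have hK := (isClosed_polar_innerₗ A).measurableSet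
  obtain ⟨y, hy⟩ := exists_volume_le_volume_inter_vadd_smul hT hK (neg_polar_innerₗ A) hM hγ hx₀
    (c := M / (r / 8)) (by positivity)
  rw [div_div_cancel₀ hM.ne'] at hy
  refine ⟨_, inter_subset_left, hT.inter ((hK.const_smul₀ (r / 8)).const_vadd y),
    fun x hx x' hx' => ?_, ?_⟩
  · refine (norm_sub_sq_le_of_mem_smul_bipolar one_pos (by positivity)
      (by simpa only [one_smul] using hTA hx.1) (by simpa only [one_smul] using hTA hx'.1)
      hx.2 hx'.2).trans_eq ?_
    ring
  · have hexponent : (M / (r / 8) * √r) ^ 2 / 2 = 32 * M ^ 2 / r := by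
      rw [mul_pow, Real.sq_sqrt hr.le]
      field_simp
      norm_num
    rwa [hexponent] at hy

lemma exists_subset_bipolar_norm_sub_sq_le (hA : A ⊆ closedBall 0 1) (hM : 1 ≤ M)
    (hγ : 1 / 2 ≤ stdGaussian E (M • (innerₗ E).polar A)) (j : ℕ) :
    ∃ T ⊆ (innerₗ E).polar ((innerₗ E).polar A), MeasurableSet T ∧
      (∀ x ∈ T, ∀ y ∈ T, ‖x - y‖ ^ 2 ≤ 4 / 2 ^ j) ∧
      volume ((innerₗ E).polar ((innerₗ E).polar A)) ≤
        ENNReal.ofReal (Real.exp (9 * M ^ 2 * (2 ^ j - 1))) * volume T := by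
  induction j with
  | zero =>
    refine ⟨_, subset_rfl, (isClosed_polar_innerₗ _).measurableSet, fun x hx y hy => ?_, by simp⟩
    rw [← one_smul ℝ ((innerₗ E).polar _)] at hx hy
    have := norm_le_of_mem_smul_bipolar hA one_pos hx
    have := norm_le_of_mem_smul_bipolar hA one_pos hy
    have := norm_sub_le x y
    rw [pow_zero]
    nlinarith [norm_nonneg (x - y)]
  | succ j ih =>
    obtain ⟨T, hTA, hT, hdiam, hvol⟩ := ih
    obtain ⟨T', hT'T, hT', hdiam', hvol'⟩ := exists_subset_norm_sub_sq_le_half hT hTA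
      (one_pos.trans_le hM) hγ (by positivity) hdiam
    refine ⟨T', hT'T.trans hTA, hT', by simpa only [pow_succ, div_div] using hdiam', ?_⟩
    have hone : 1 ≤ M ^ 2 * 2 ^ j :=
      one_le_mul_of_one_le_of_one_le (one_le_pow₀ hM) (one_le_pow₀ one_le_two)
    have hexponent : 9 * M ^ 2 * (2 ^ j - 1) + (1 + 32 * M ^ 2 / (4 / 2 ^ j)) ≤
        9 * M ^ 2 * (2 ^ (j + 1) - 1) := by
      rw [pow_succ 2 j, div_div_eq_mul_div]
      linarith
    refine (hvol.trans (mul_le_mul_right hvol' _)).trans ?_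
    rw [← mul_assoc, ← ENNReal.ofReal_mul (Real.exp_nonneg _)]
    gcongr
    refine le_trans ?_ (Real.exp_le_exp.2 hexponent)
    rw [Real.exp_add, Real.exp_add]
    gcongr
    linarith [Real.exp_one_gt_d9]

theorem volume_bipolar_le_volume_polar (hA : A ⊆ closedBall 0 1) (hM : 1 ≤ M)
    (hγA : 1 / 2 ≤ stdGaussian E (M • (innerₗ E).polar A)) (hL : 0 < L)
    (hγB : 1 / 2 ≤ stdGaussian E (L • (innerₗ E).polar B)) (hE : 0 < Module.finrank ℝ E) (j : ℕ) :
    volume ((innerₗ E).polar ((innerₗ E).polar A)) ≤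
      ENNReal.ofReal (2 * Real.exp (9 * M ^ 2 * (2 ^ j - 1) + Module.finrank ℝ E / 2) *
        √(4 * L ^ 2 / (2 ^ j * Module.finrank ℝ E)) ^ Module.finrank ℝ E) *
        volume ((innerₗ E).polar B) := by
  set D := Module.finrank ℝ E
  have : (0 : ℝ) < D := by exact_mod_cast hE
  obtain ⟨T, -, hT, hdiam, hvol⟩ := exists_subset_bipolar_norm_sub_sq_le hA hM hγA j
  obtain ⟨x₀, hx₀⟩ := exists_subset_closedBall_sqrt hdiam
  obtain ⟨y, hy⟩ := exists_volume_le_volume_inter_vadd_smul hT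
    (isClosed_polar_innerₗ B).measurableSet (neg_polar_innerₗ B) hL hγB hx₀
    (c := √(2 ^ j * D / 4)) (by positivity)
  have hexp : (√(2 ^ j * D / 4) * √(4 / 2 ^ j)) ^ 2 / 2 = D / 2 := by
    rw [mul_pow, Real.sq_sqrt (by positivity), Real.sq_sqrt (by positivity)]
    field_simp
  have hscale : L / √(2 ^ j * D / 4) = √(4 * L ^ 2 / (2 ^ j * D)) := by
    rw [eq_comm, Real.sqrt_eq_iff_eq_sq (by positivity) (by positivity), div_pow,
      Real.sq_sqrt (by positivity)]
    field_simp
  have hinter : volume (T ∩ (y +ᵥ (L / √(2 ^ j * D / 4)) • (innerₗ E).polar B)) ≤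
      ENNReal.ofReal (√(4 * L ^ 2 / (2 ^ j * D)) ^ D) * volume ((innerₗ E).polar B) := by
    refine (measure_mono inter_subset_right).trans_eq ?_
    rw [measure_vadd, Measure.addHaar_smul, hscale, abs_of_nonneg (by positivity)]
  calc volume ((innerₗ E).polar ((innerₗ E).polar A))
      ≤ ENNReal.ofReal (Real.exp (9 * M ^ 2 * (2 ^ j - 1))) *
          (ENNReal.ofReal (2 * Real.exp (D / 2)) *
            (ENNReal.ofReal (√(4 * L ^ 2 / (2 ^ j * D)) ^ D) * volume ((innerₗ E).polar B))) := by
        rw [hexp] at hy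
        exact hvol.trans (mul_le_mul_right (hy.trans (mul_le_mul_right hinter _)) _)
    _ = _ := by
        rw [← mul_assoc, ← mul_assoc, ← ENNReal.ofReal_mul (by positivity),
          ← ENNReal.ofReal_mul (by positivity), Real.exp_add]
        ring_nf

/-- The number of halvings is chosen so that `2 ^ j` is comparable to `N / 4096`. -/
lemma exists_two_mul_exp_mul_sqrt_pow_mul_pow_le {N μ d : ℝ} {D : ℕ} (hN : 9 ≤ N) (hμ : 0 < μ)
    (hd₀ : 0 ≤ d) (hd : d * μ ≤ 4 * N) (hND : N ^ 2 ≤ 2 * D) :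
    ∃ j : ℕ, 2 * Real.exp (9 * (90 * N) * (2 ^ j - 1) + D / 2) *
        √(4 * (45 * d) / (2 ^ j * D)) ^ D * N ^ D ≤ (10 ^ 4 / √μ) ^ D := by
  obtain ⟨j, hj, hj'⟩ := exists_nat_pow_near (x := N / 4096 + 1) (by linarith) one_lt_two
  refine ⟨j, ?_⟩
  have hD : (40 : ℝ) ≤ D := by nlinarith
  have hexp : 2 * Real.exp (9 * (90 * N) * (2 ^ j - 1) + D / 2) ≤ Real.exp 1 ^ D := by
    have hexponent : 1 + (9 * (90 * N) * (2 ^ j - 1) + D / 2) ≤ D * 1 := by nlinarith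
    rw [← Real.exp_nat_mul]
    refine le_trans ?_ (Real.exp_le_exp.2 hexponent)
    rw [Real.exp_add 1]
    gcongr
    linarith [Real.exp_one_gt_d9]
  have hsqrt : √(4 * (45 * d) / (2 ^ j * D)) * N ≤ 3435 / √μ := by
    rw [le_div_iff₀ (Real.sqrt_pos.2 hμ)]
    refine le_of_sq_le_sq ?_ (by norm_num)
    have hNj : N ≤ 8192 * 2 ^ j := by
      rw [pow_succ] at hj'
      linarith
    rw [mul_pow, mul_pow, Real.sq_sqrt (by positivity), Real.sq_sqrt hμ.le, div_mul_eq_mul_div,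
      div_mul_eq_mul_div, div_le_iff₀ (by positivity)]
    calc 4 * (45 * d) * N ^ 2 * μ = 180 * (d * μ) * N ^ 2 := by ring
      _ ≤ 180 * (4 * (8192 * 2 ^ j)) * (2 * (D : ℝ)) := by
        gcongr ?_ * ?_
        linarith
      _ ≤ 3435 ^ 2 * (2 ^ j * (D : ℝ)) := by nlinarith [show (0 : ℝ) < 2 ^ j * D by positivity]
  calc 2 * Real.exp (9 * (90 * N) * (2 ^ j - 1) + D / 2) *
        √(4 * (45 * d) / (2 ^ j * D)) ^ D * N ^ D
      ≤ Real.exp 1 ^ D * (√(4 * (45 * d) / (2 ^ j * D)) * N) ^ D := by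
        rw [mul_assoc, ← mul_pow]
        gcongr
    _ ≤ Real.exp 1 ^ D * (3435 / √μ) ^ D := by gcongr
    _ ≤ (10 ^ 4 / √μ) ^ D := by
        rw [← mul_pow, mul_div_assoc']
        gcongr
        linarith [Real.exp_one_lt_d9]

theorem IsTameFamily.volume_smul_bipolar_le {V W : Type*} [NormedAddCommGroup V]
    [NormedSpace ℝ V] [FiniteDimensional ℝ V] [NormedAddCommGroup W] [NormedSpace ℝ W]
    [FiniteDimensional ℝ W] {h : V → E} {g : W → E} (hh : IsTameFamily h) (hg : IsTameFamily g)
    (hball : h '' closedBall 0 1 ⊆ closedBall 0 1) {N : ℕ} {μ : ℝ} (hN : 9 ≤ N) (hμ : 0 < μ)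
    (hV : Module.finrank ℝ V = 2 * N) (hW : 12 ≤ Module.finrank ℝ W)
    (hWμ : Module.finrank ℝ W * μ ≤ 4 * N) (hE : N ^ 2 ≤ 2 * Module.finrank ℝ E) :
    volume ((N : ℝ) • (innerₗ E).polar ((innerₗ E).polar (h '' closedBall 0 1))) ≤
      ENNReal.ofReal ((10 ^ 4 / √μ) ^ Module.finrank ℝ E) *
        volume ((innerₗ E).polar (g '' closedBall 0 1)) := by
  have hN' : (9 : ℝ) ≤ N := by exact_mod_cast hN
  have hV' : √(45 * Module.finrank ℝ V) ^ 2 = 90 * N := by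
    rw [Real.sq_sqrt (by positivity), hV]
    push_cast
    ring
  have hW' : √(45 * Module.finrank ℝ W) ^ 2 = 45 * Module.finrank ℝ W :=
    Real.sq_sqrt (by positivity)
  obtain ⟨j, hj⟩ := exists_two_mul_exp_mul_sqrt_pow_mul_pow_le hN' hμ (by positivity) hWμ
    (by exact_mod_cast hE)
  have hpolar := volume_bipolar_le_volume_polar hball
    (Real.one_le_sqrt.2 (by rw [hV]; norm_cast; omega)) (hh.one_half_le_stdGaussian (by omega))
    (Real.sqrt_pos.2 (by norm_cast; omega)) (hg.one_half_le_stdGaussian hW) (by nlinarith) j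
  rw [hV', hW'] at hpolar
  rw [Measure.addHaar_smul_of_nonneg _ (by positivity)]
  refine (mul_le_mul_right hpolar _).trans ?_
  rw [← mul_assoc, ← ENNReal.ofReal_mul (by positivity), mul_comm ((N : ℝ) ^ _)]
  gcongr

end VolumeComparison

section QuadraticFamily

variable {V : Type*} [NormedAddCommGroup V] [InnerProductSpace ℝ V]

lemma abs_quadraticForm_le {Q : QuadraticForm ℝ V} {M : ℝ} (hM : ∀ v, ‖v‖ ≤ 1 → |Q v| ≤ M)
    (v : V) : |Q v| ≤ M * ‖v‖ ^ 2 := by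
  rcases eq_or_ne v 0 with rfl | hv
  · simp
  have hpos : 0 < ‖v‖ := norm_pos_iff.2 hv
  have hunit := hM (‖v‖⁻¹ • v) (by rw [norm_smul, norm_inv, norm_norm, inv_mul_cancel₀ hpos.ne'])
  rwa [QuadraticMap.map_smul, smul_eq_mul, abs_mul, abs_of_nonneg (by positivity), ← mul_inv,
    inv_mul_le_iff₀ (by positivity), ← sq, mul_comm] at hunit

/-- Polarization along `u = 10 • (v - v₀)` and the parallelogram law bound the increment by
`1 / 20 * 4 * M + 1 / 100 * M`. -/
lemma abs_quadraticForm_sub_le {Q : QuadraticForm ℝ V} {M : ℝ} (hM : ∀ v, ‖v‖ ≤ 1 → |Q v| ≤ M)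
    {v₀ v : V} (hv₀ : ‖v₀‖ ≤ 1) (hv : ‖v - v₀‖ ≤ 1 / 10) : |Q v - Q v₀| ≤ 21 / 100 * M := by
  have hM₀ : 0 ≤ M := (abs_nonneg _).trans (hM 0 (by simp))
  obtain ⟨u, hu, rfl⟩ : ∃ u, ‖u‖ ≤ 1 ∧ v = v₀ + (1 / 10 : ℝ) • u := by
    refine ⟨(10 : ℝ) • (v - v₀), ?_, by simp [smul_smul]⟩
    rw [norm_smul, Real.norm_of_nonneg (by norm_num)]
    linarith
  have hneg : Q (v₀ - u) = Q v₀ + Q u - QuadraticMap.polar Q v₀ u := by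
    rw [sub_eq_add_neg, QuadraticMap.map_add Q, QuadraticMap.map_neg,
      QuadraticMap.polar_neg_right, sub_eq_add_neg]
  have hexpand : Q (v₀ + (1 / 10 : ℝ) • u) - Q v₀ =
      1 / 20 * (Q (v₀ + u) - Q (v₀ - u)) + 1 / 100 * Q u := by
    rw [hneg, QuadraticMap.map_add Q v₀ ((1 / 10 : ℝ) • u), QuadraticMap.map_add Q v₀ u,
      QuadraticMap.map_smul, QuadraticMap.polar_smul_right, smul_eq_mul, smul_eq_mul]
    ring
  have hparallelogram : M * ‖v₀ + u‖ ^ 2 + M * ‖v₀ - u‖ ^ 2 ≤ 4 * M := by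
    have := parallelogram_law_with_norm ℝ v₀ u
    have : ‖v₀‖ * ‖v₀‖ + ‖u‖ * ‖u‖ ≤ 2 := by nlinarith [norm_nonneg v₀, norm_nonneg u]
    nlinarith
  have hadd := abs_le.1 (abs_quadraticForm_le hM (v₀ + u))
  have hsub := abs_le.1 (abs_quadraticForm_le hM (v₀ - u))
  have hu' := abs_le.1 (hM u hu)
  rw [hexpand, abs_le]
  constructor <;> linarith [hadd.1, hadd.2, hsub.1, hsub.2, hu'.1, hu'.2]

variable {E : Type*} [NormedAddCommGroup E] [InnerProductSpace ℝ E]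

lemma isTameFamily_quadraticMap {Q : QuadraticMap ℝ V E} (hQ : Continuous Q)
    (hle : ∀ v, ‖Q v‖ ≤ ‖v‖ ^ 2) : IsTameFamily Q where
  continuous := hQ
  norm_le v hv := calc
    ‖Q v‖ ≤ ‖v‖ ^ 2 := hle v
    _ ≤ (11 / 10) ^ 2 := by gcongr
    _ ≤ (11 / 10) ^ 4 := by norm_num
  abs_inner_sub_inner_le x M hM v₀ v hv₀ hv := by
    have hM₀ : 0 ≤ M := (abs_nonneg _).trans (hM 0 (by simp))
    have := abs_quadraticForm_sub_le (Q := ((innerₗ E).flip x).compQuadraticMap Q) hM hv₀ hv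
    exact this.trans (by linarith)

variable {V₁ V₂ : Type*} [NormedAddCommGroup V₁] [InnerProductSpace ℝ V₁]
  [NormedAddCommGroup V₂] [InnerProductSpace ℝ V₂]

lemma isTameFamily_quadraticMap_bilinear {Q : QuadraticMap ℝ V E} (hQ : Continuous Q)
    (hQle : ∀ v, ‖Q v‖ ≤ ‖v‖ ^ 2) {β : V₁ →ₗ[ℝ] V₂ →ₗ[ℝ] V}
    (hβ : Continuous fun p : V₁ × V₂ => β p.1 p.2) (hβle : ∀ z w, ‖β z w‖ ≤ ‖z‖ * ‖w‖) :
    IsTameFamily fun p : V₁ × V₂ => Q (β p.1 p.2) where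
  continuous := hQ.comp hβ
  norm_le p hp := calc
    ‖Q (β p.1 p.2)‖ ≤ (‖p.1‖ * ‖p.2‖) ^ 2 := (hQle _).trans (by gcongr; exact hβle _ _)
    _ ≤ (11 / 10 * (11 / 10)) ^ 2 := by
      gcongr
      exacts [(norm_fst_le p).trans hp, (norm_snd_le p).trans hp]
    _ = (11 / 10) ^ 4 := by norm_num
  abs_inner_sub_inner_le x M hM p₀ p hp₀ hp := by
    obtain ⟨z₀, w₀⟩ := p₀
    obtain ⟨z, w⟩ := p
    have hM₀ : 0 ≤ M := (abs_nonneg _).trans (hM 0 (by simp))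
    rw [Prod.norm_mk, max_le_iff] at hp₀
    rw [Prod.mk_sub_mk, Prod.norm_mk, max_le_iff] at hp
    let Qx : QuadraticForm ℝ V := ((innerₗ E).flip x).compQuadraticMap Q
    have hsnd (z : V₁) (hz : ‖z‖ ≤ 1) (w : V₂) (hw : ‖w‖ ≤ 1) : |Qx (β z w)| ≤ M :=
      hM (z, w) (by rw [Prod.norm_mk]; exact max_le hz hw)
    have hw : ‖w‖ ≤ 11 / 10 := by linarith [norm_le_norm_add_norm_sub' w w₀, hp.2, hp₀.2]
    have hfst (z : V₁) (hz : ‖z‖ ≤ 1) : |Qx (β z w)| ≤ (11 / 10) ^ 2 * M := by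
      refine (abs_quadraticForm_le (Q := Qx.comp (β z)) (hsnd z hz) w).trans ?_
      rw [mul_comm]
      gcongr
    have hincr_snd := abs_quadraticForm_sub_le (Q := Qx.comp (β z₀)) (hsnd z₀ hp₀.1) hp₀.2 hp.2
    have hincr_fst := abs_quadraticForm_sub_le (Q := Qx.comp (β.flip w)) hfst hp₀.1 hp.1
    refine (abs_sub_le _ (Qx (β z₀ w)) _).trans ((add_le_add hincr_fst hincr_snd).trans ?_)
    linarith

end QuadraticFamily

section Tensor

/-- The space of coefficient tensors `a_{ijkl}`, as a real inner product space. -/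
abbrev Coeffs (n m : ℕ) : Type := EuclideanSpace ℂ (Fin n × Fin n × Fin m × Fin m)

variable {n m : ℕ}

/-- The quadratic map sending `v` to the rank one coefficient tensor `v_{ik} * conj v_{jl}`. -/
def rankOne : QuadraticMap ℝ (EuclideanSpace ℂ (Fin n × Fin m)) (Coeffs n m) :=
  LinearMap.BilinMap.toQuadraticMap <| LinearMap.mk₂ ℝ
    (fun v u => WithLp.toLp 2 fun p => v (p.1, p.2.2.1) * (starRingEnd ℂ) (u (p.2.1, p.2.2.2)))
    (fun v v' u => by ext p; simp [add_mul])
    (fun t v u => by ext p; simp [mul_assoc])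
    (fun v u u' => by ext p; simp [mul_add])
    (fun t v u => by ext p; simp; ring)

/-- The bilinear map sending `(z, w)` to the product vector `z_i * w_k`. -/
def tensor : EuclideanSpace ℂ (Fin n) →ₗ[ℝ] EuclideanSpace ℂ (Fin m) →ₗ[ℝ]
    EuclideanSpace ℂ (Fin n × Fin m) :=
  LinearMap.mk₂ ℝ (fun z w => WithLp.toLp 2 fun q => z q.1 * w q.2)
    (fun z z' w => by ext q; simp [add_mul])
    (fun t z w => by ext q; simp [mul_assoc])
    (fun z w w' => by ext q; simp [mul_add])
    (fun t z w => by ext q; simp; ring)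

lemma rankOne_apply (v : EuclideanSpace ℂ (Fin n × Fin m)) (p : Fin n × Fin n × Fin m × Fin m) :
    rankOne v p = v (p.1, p.2.2.1) * (starRingEnd ℂ) (v (p.2.1, p.2.2.2)) := rfl

lemma tensor_apply (z : EuclideanSpace ℂ (Fin n)) (w : EuclideanSpace ℂ (Fin m))
    (q : Fin n × Fin m) : tensor z w q = z q.1 * w q.2 := rfl

lemma sum_prod_four {ι₁ ι₂ ι₃ ι₄ M : Type*} [Fintype ι₁] [Fintype ι₂] [Fintype ι₃] [Fintype ι₄]
    [AddCommMonoid M] (f : ι₁ → ι₂ → ι₃ → ι₄ → M) :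
    ∑ p : ι₁ × ι₂ × ι₃ × ι₄, f p.1 p.2.1 p.2.2.1 p.2.2.2 =
      ∑ i, ∑ j, ∑ k, ∑ l, f i j k l := by
  simp only [Fintype.sum_prod_type]

lemma norm_rankOne (v : EuclideanSpace ℂ (Fin n × Fin m)) : ‖rankOne v‖ = ‖v‖ ^ 2 := by
  rw [← Real.sqrt_sq (sq_nonneg ‖v‖), EuclideanSpace.norm_eq, EuclideanSpace.norm_sq_eq]
  simp only [rankOne_apply, norm_mul, RCLike.norm_conj, mul_pow]
  rw [sum_prod_four fun i j k l => ‖v (i, k)‖ ^ 2 * ‖v (j, l)‖ ^ 2, sq, Fintype.sum_prod_type,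
    Finset.sum_mul_sum]
  simp only [Finset.sum_mul_sum]

lemma norm_tensor (z : EuclideanSpace ℂ (Fin n)) (w : EuclideanSpace ℂ (Fin m)) :
    ‖tensor z w‖ = ‖z‖ * ‖w‖ := by
  rw [← Real.sqrt_sq (mul_nonneg (norm_nonneg z) (norm_nonneg w)), EuclideanSpace.norm_eq,
    mul_pow, EuclideanSpace.norm_sq_eq, EuclideanSpace.norm_sq_eq, Finset.sum_mul_sum,
    Fintype.sum_prod_type]
  simp only [tensor_apply, norm_mul, mul_pow]

lemma continuous_rankOne : Continuous (rankOne (n := n) (m := m)) := by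
  change Continuous fun v : EuclideanSpace ℂ (Fin n × Fin m) =>
    (WithLp.toLp 2 fun p => v (p.1, p.2.2.1) * (starRingEnd ℂ) (v (p.2.1, p.2.2.2)) : Coeffs n m)
  fun_prop

lemma continuous_tensor : Continuous fun p : EuclideanSpace ℂ (Fin n) × EuclideanSpace ℂ (Fin m) =>
    tensor p.1 p.2 := by
  change Continuous fun p : EuclideanSpace ℂ (Fin n) × EuclideanSpace ℂ (Fin m) =>
    (WithLp.toLp 2 fun q => p.1 q.1 * p.2 q.2 : EuclideanSpace ℂ (Fin n × Fin m))
  fun_prop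

lemma inner_rankOne (g : Coeffs n m) (v : EuclideanSpace ℂ (Fin n × Fin m)) :
    ⟪g, rankOne v⟫ = (∑ i, ∑ j, ∑ k, ∑ l,
      g (i, j, k, l) * (starRingEnd ℂ) (v (i, k)) * v (j, l)).re := by
  rw [PiLp.inner_apply, ← sum_prod_four fun i j k l =>
    g (i, j, k, l) * (starRingEnd ℂ) (v (i, k)) * v (j, l), Complex.re_sum]
  refine Finset.sum_congr rfl fun p _ => ?_
  simp only [Complex.inner, rankOne_apply, Complex.mul_re, Complex.mul_im, Complex.conj_re,
    Complex.conj_im]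
  ring

lemma abs_inner_rankOne_tensor_le {g : Coeffs n m} {M : ℝ}
    (hM : ∀ z w, ‖z‖ ≤ 1 → ‖w‖ ≤ 1 → |⟪g, rankOne (tensor z w)⟫| ≤ M)
    (z : EuclideanSpace ℂ (Fin n)) (w : EuclideanSpace ℂ (Fin m)) :
    |⟪g, rankOne (tensor z w)⟫| ≤ M * ‖z‖ ^ 2 * ‖w‖ ^ 2 := by
  let Qg : QuadraticForm ℝ (EuclideanSpace ℂ (Fin n × Fin m)) :=
    (innerₗ _ g).compQuadraticMap rankOne
  exact abs_quadraticForm_le (Q := Qg.comp (tensor z)) (v := w) fun w hw =>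
    (abs_quadraticForm_le (Q := Qg.comp (tensor.flip w)) (v := z) fun z hz => hM z w hz hw)

lemma finrank_real_euclideanSpace (ι : Type*) [Fintype ι] :
    Module.finrank ℝ (EuclideanSpace ℂ ι) = 2 * Fintype.card ι := by
  rw [(WithLp.linearEquiv 2 ℝ (ι → ℂ)).finrank_eq, Module.finrank_pi_fintype]
  simp [Complex.finrank_real_complex, mul_comm]

end Tensor

open BiformPaper

section Polynomials

variable {n m : ℕ}

lemma sum_fin_two_mul {M : Type*} [AddCommMonoid M] (f : Fin (2 * n) → M) :
    ∑ p, f p = ∑ i : Fin n, (f ⟨i, by omega⟩ + f ⟨n + i, by omega⟩) := by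
  rw [← Fin.sum_congr' f (two_mul n).symm, Fin.sum_univ_add, ← Finset.sum_add_distrib]
  rfl

/-- The point of `ℂ²ⁿ` at which the variables `z̄` and `z` take the independent values `c` and `v`.
Evaluating a multiform at such points separates its coefficients. -/
def splitPoint (c v : Fin n → ℂ) (p : Fin (2 * n)) : ℂ :=
  if h : (p : ℕ) < n then (v ⟨p, h⟩ + c ⟨p, h⟩) / 2
  else -Complex.I * (v ⟨p - n, by omega⟩ - c ⟨p - n, by omega⟩) / 2

lemma splitPoint_left (c v : Fin n → ℂ) (i : Fin n) :
    splitPoint c v ⟨i, by omega⟩ = (v i + c i) / 2 := by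
  simp [splitPoint]

lemma splitPoint_right (c v : Fin n → ℂ) (i : Fin n) :
    splitPoint c v ⟨n + i, by omega⟩ = -Complex.I * (v i - c i) / 2 := by
  simp [splitPoint]

section Eval

variable (zc zv : Fin n → ℂ) (wc wv : Fin m → ℂ)

lemma eval_splitPoint_Zv (i : Fin n) :
    eval (Sum.elim (splitPoint zc zv) (splitPoint wc wv)) (Zv n m i) = zv i := by
  simp only [Zv, zRe, zIm, map_add, map_mul, eval_X, eval_C, Sum.elim_inl, splitPoint_left,
    splitPoint_right]
  linear_combination (-(zv i - zc i) / 2) * Complex.I_mul_I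

lemma eval_splitPoint_Zc (i : Fin n) :
    eval (Sum.elim (splitPoint zc zv) (splitPoint wc wv)) (Zc n m i) = zc i := by
  simp only [Zc, zRe, zIm, map_sub, map_mul, eval_X, eval_C, Sum.elim_inl, splitPoint_left,
    splitPoint_right]
  linear_combination ((zv i - zc i) / 2) * Complex.I_mul_I

lemma eval_splitPoint_Wv (k : Fin m) :
    eval (Sum.elim (splitPoint zc zv) (splitPoint wc wv)) (Wv n m k) = wv k := by
  simp only [Wv, wRe, wIm, map_add, map_mul, eval_X, eval_C, Sum.elim_inr, splitPoint_left,
    splitPoint_right]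
  linear_combination (-(wv k - wc k) / 2) * Complex.I_mul_I

lemma eval_splitPoint_Wc (k : Fin m) :
    eval (Sum.elim (splitPoint zc zv) (splitPoint wc wv)) (Wc n m k) = wc k := by
  simp only [Wc, wRe, wIm, map_sub, map_mul, eval_X, eval_C, Sum.elim_inr, splitPoint_left,
    splitPoint_right]
  linear_combination ((wv k - wc k) / 2) * Complex.I_mul_I

lemma eval_splitPoint_herm (a : Fin n → Fin n → Fin m → Fin m → ℂ) :
    eval (Sum.elim (splitPoint zc zv) (splitPoint wc wv)) (herm n m a) =
      ∑ i, ∑ j, ∑ k, ∑ l, a i j k l * zc i * zv j * wc k * wv l := by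
  simp only [herm, map_sum, map_mul, eval_C, eval_splitPoint_Zc, eval_splitPoint_Zv,
    eval_splitPoint_Wc, eval_splitPoint_Wv]

end Eval

/-- The vector `z = x' + i x''` of `ℂⁿ`, where `x'` and `x''` are the two halves of `x`. -/
def toComplex (x : Fin (2 * n) → ℝ) (i : Fin n) : ℂ :=
  x ⟨i, by omega⟩ + Complex.I * x ⟨n + i, by omega⟩

lemma splitPoint_toComplex (x : Fin (2 * n) → ℝ) :
    splitPoint (fun i => (starRingEnd ℂ) (toComplex x i)) (toComplex x) =
      fun p => (x p : ℂ) := by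
  funext p
  by_cases h : (p : ℕ) < n
  · simp only [splitPoint, h, toComplex, dif_pos, map_add, map_mul, Complex.conj_ofReal,
      Complex.conj_I]
    ring
  · have hp : (⟨n + (p - n), by omega⟩ : Fin (2 * n)) = p := Fin.ext (by simp only; omega)
    simp only [splitPoint, h, toComplex, hp, dif_neg, not_false_iff, map_add, map_mul,
      Complex.conj_ofReal, Complex.conj_I]
    linear_combination (-(x p : ℂ)) * Complex.I_mul_I

lemma norm_sq_toComplex (x : Fin (2 * n) → ℝ) (i : Fin n) :
    ‖toComplex x i‖ ^ 2 = x ⟨i, by omega⟩ ^ 2 + x ⟨n + i, by omega⟩ ^ 2 := by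
  rw [toComplex, mul_comm Complex.I, ← Complex.normSq_eq_norm_sq, Complex.normSq_add_mul_I]

lemma norm_toLp_toComplex_sq (x : Fin (2 * n) → ℝ) :
    ‖(WithLp.toLp 2 (toComplex x) : EuclideanSpace ℂ (Fin n))‖ ^ 2 = ∑ p, x p ^ 2 := by
  rw [EuclideanSpace.norm_sq_eq, sum_fin_two_mul]
  exact Finset.sum_congr rfl fun i _ => norm_sq_toComplex x i

variable {f g : MvPolynomial (Fin (2 * n) ⊕ Fin (2 * m)) ℝ} {isR : Bool}

lemma ofReal_beval (f : MvPolynomial (Fin (2 * n) ⊕ Fin (2 * m)) ℝ) (x : Fin (2 * n) → ℝ)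
    (y : Fin (2 * m) → ℝ) :
    (beval f x y : ℂ) = eval (Sum.elim
      (splitPoint (fun i => (starRingEnd ℂ) (toComplex x i)) (toComplex x))
      (splitPoint (fun i => (starRingEnd ℂ) (toComplex y i)) (toComplex y)))
      (MvPolynomial.map (algebraMap ℝ ℂ) f) := by
  have hsum : (Sum.elim (fun p => (x p : ℂ)) fun p => (y p : ℂ)) =
      fun s => algebraMap ℝ ℂ (Sum.elim x y s) := by
    funext s
    cases s <;> rfl
  rw [splitPoint_toComplex, splitPoint_toComplex, eval_map, hsum]
  exact eval₂_comp_left (algebraMap ℝ ℂ) (RingHom.id ℝ) (Sum.elim x y) f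

/-- The linear map reading off the coefficients of a multiform. -/
def coeffMap (n m : ℕ) : MvPolynomial (Fin (2 * n) ⊕ Fin (2 * m)) ℝ →ₗ[ℝ] Coeffs n m where
  toFun f := WithLp.toLp 2 fun p => eval (Sum.elim
    (splitPoint (Pi.single p.1 1) (Pi.single p.2.1 1))
    (splitPoint (Pi.single p.2.2.1 1) (Pi.single p.2.2.2 1))) (MvPolynomial.map (algebraMap ℝ ℂ) f)
  map_add' f g := by
    ext p
    simp
  map_smul' t f := by
    ext p
    simp [smul_eq_C_mul]

lemma coeffMap_apply (f : MvPolynomial (Fin (2 * n) ⊕ Fin (2 * m)) ℝ)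
    (p : Fin n × Fin n × Fin m × Fin m) : coeffMap n m f p = eval (Sum.elim
    (splitPoint (Pi.single p.1 1) (Pi.single p.2.1 1))
    (splitPoint (Pi.single p.2.2.1 1) (Pi.single p.2.2.2 1)))
    (MvPolynomial.map (algebraMap ℝ ℂ) f) := rfl

lemma coeffMap_of_map_eq_herm {a : Fin n → Fin n → Fin m → Fin m → ℂ}
    (h : MvPolynomial.map (algebraMap ℝ ℂ) f = herm n m a) (i j : Fin n) (k l : Fin m) :
    coeffMap n m f (i, j, k, l) = a i j k l := by
  rw [coeffMap_apply, h, eval_splitPoint_herm]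
  simp [Pi.single_apply]

lemma coeffMap_of_map_eq_sum {N : ℕ} {b : Fin N → Fin n → Fin m → ℂ}
    (h : MvPolynomial.map (algebraMap ℝ ℂ) f =
      ∑ r, (∑ i, ∑ j, C ((starRingEnd ℂ) (b r i j)) * Zc n m i * Wc n m j) *
           (∑ i, ∑ j, C (b r i j) * Zv n m i * Wv n m j)) :
    coeffMap n m f =
      ∑ r, rankOne (WithLp.toLp 2 fun q : Fin n × Fin m => (starRingEnd ℂ) (b r q.1 q.2)) := by
  ext p
  rw [coeffMap_apply, h]
  simp only [map_sum, map_mul, eval_C, eval_splitPoint_Zc, eval_splitPoint_Zv,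
    eval_splitPoint_Wc, eval_splitPoint_Wv, Pi.single_apply]
  simp [rankOne_apply]

lemma map_eq_herm_coeffMap (hf : f ∈ CF n m isR) : MvPolynomial.map (algebraMap ℝ ℂ) f =
    herm n m fun i j k l => coeffMap n m f (i, j, k, l) := by
  obtain ⟨a, -, -, h⟩ := hf
  simp only [coeffMap_of_map_eq_herm h, h]

lemma coeffMap_injOn (isR : Bool) : Set.InjOn (coeffMap n m) (CF n m isR) :=
  fun f hf g hg h => map_injective _ (algebraMap ℝ ℂ).injective <| by
    rw [map_eq_herm_coeffMap hf, map_eq_herm_coeffMap hg, h]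

lemma add_mem_CF (hf : f ∈ CF n m isR) (hg : g ∈ CF n m isR) : f + g ∈ CF n m isR := by
  obtain ⟨a, ha, haR, hfa⟩ := hf
  obtain ⟨b, hb, hbR, hgb⟩ := hg
  refine ⟨fun i j k l => a i j k l + b i j k l, fun i j k l => ?_, fun h i j k l => ?_, ?_⟩
  · simp only [ha i, hb i, map_add]
  · rw [Complex.add_im, haR h, hbR h, add_zero]
  · rw [map_add, hfa, hgb]
    simp only [herm, ← Finset.sum_add_distrib, map_add, add_mul]

lemma C_I_mul_C_I {σ : Type*} : (C Complex.I : MvPolynomial σ ℂ) * C Complex.I = -1 := by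
  rw [← map_mul, Complex.I_mul_I, map_neg, map_one]

lemma Zc_mul_Zv (i : Fin n) : Zc n m i * Zv n m i = zRe n m i ^ 2 + zIm n m i ^ 2 := by
  rw [Zc, Zv]
  linear_combination (-zIm n m i ^ 2) * C_I_mul_C_I

lemma Wc_mul_Wv (k : Fin m) : Wc n m k * Wv n m k = wRe n m k ^ 2 + wIm n m k ^ 2 := by
  rw [Wc, Wv]
  linear_combination (-wIm n m k ^ 2) * C_I_mul_C_I

lemma map_qpoly : MvPolynomial.map (algebraMap ℝ ℂ) (qpoly (2 * n) (2 * m) 1 1) =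
    herm n m fun i j k l => if i = j ∧ k = l then 1 else 0 := by
  calc MvPolynomial.map (algebraMap ℝ ℂ) (qpoly (2 * n) (2 * m) 1 1)
      = (∑ i, Zc n m i * Zv n m i) * ∑ k, Wc n m k * Wv n m k := by
        simp only [qpoly, pow_one, sum_fin_two_mul, Zc_mul_Zv, Wc_mul_Wv, map_mul, map_sum,
          map_add, map_pow, map_X]
        rfl
    _ = ∑ i, ∑ k, Zc n m i * Zv n m i * Wc n m k * Wv n m k := by
        simp only [Finset.sum_mul_sum, mul_assoc]
    _ = _ := by
        simp only [herm, ite_and, apply_ite C, map_one, map_zero, ite_mul, one_mul, zero_mul,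
          Finset.sum_ite_irrel, Finset.sum_const_zero, Finset.sum_ite_eq, Finset.mem_univ, if_true]

lemma qpoly_mem_CF (isR : Bool) : qpoly (2 * n) (2 * m) 1 1 ∈ CF n m isR := by
  refine ⟨_, fun i j k l => ?_, fun _ i j k l => ?_, map_qpoly⟩
  · simp only [eq_comm (a := i), eq_comm (a := k)]
    split_ifs <;> simp
  · split_ifs <;> simp

lemma coeffMap_qpoly (i j : Fin n) (k l : Fin m) :
    coeffMap n m (qpoly (2 * n) (2 * m) 1 1) (i, j, k, l) = if i = j ∧ k = l then 1 else 0 :=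
  coeffMap_of_map_eq_herm map_qpoly i j k l

lemma beval_qpoly (x : Fin (2 * n) → ℝ) (y : Fin (2 * m) → ℝ) :
    beval (qpoly (2 * n) (2 * m) 1 1) x y = (∑ p, x p ^ 2) * ∑ p, y p ^ 2 := by
  simp [beval, qpoly]

lemma ofReal_beval_eq_sum_coeffMap (hf : f ∈ CF n m isR) (x : Fin (2 * n) → ℝ)
    (y : Fin (2 * m) → ℝ) :
    (beval f x y : ℂ) = ∑ i, ∑ j, ∑ k, ∑ l, coeffMap n m f (i, j, k, l) *
      (starRingEnd ℂ) (toComplex x i) * toComplex x j * (starRingEnd ℂ) (toComplex y k) *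
        toComplex y l := by
  rw [ofReal_beval, map_eq_herm_coeffMap hf, eval_splitPoint_herm]

lemma beval_eq_inner (hf : f ∈ CF n m isR) (x : Fin (2 * n) → ℝ) (y : Fin (2 * m) → ℝ) :
    beval f x y = ⟪coeffMap n m f,
      rankOne (tensor (WithLp.toLp 2 (toComplex x)) (WithLp.toLp 2 (toComplex y)))⟫ := by
  rw [inner_rankOne, ← Complex.ofReal_re (beval f x y), ofReal_beval_eq_sum_coeffMap hf]
  simp only [tensor_apply, map_mul]
  refine congrArg Complex.re (Finset.sum_congr rfl fun i _ => Finset.sum_congr rfl fun j _ =>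
    Finset.sum_congr rfl fun k _ => Finset.sum_congr rfl fun l _ => ?_)
  ring

end Polynomials

section Moments

variable {n : ℕ} {σ : Measure (Fin n → ℝ)}

lemma ae_sum_sq_eq_one (hσ : IsSphereMeasure n σ) : ∀ᵐ x ∂σ, ∑ i, x i ^ 2 = 1 :=
  hσ.onSphere

lemma integrable_mul_coord (hσ : IsSphereMeasure n σ) (p q : Fin n) :
    Integrable (fun x => x p * x q) σ := by
  have := hσ.prob
  refine Integrable.of_bound (by fun_prop) 1 ?_
  filter_upwards [ae_sum_sq_eq_one hσ] with x hx
  have hle (i : Fin n) : |x i| ≤ 1 := by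
    rw [← sq_le_one_iff_abs_le_one, ← hx]
    exact Finset.single_le_sum (f := fun i => x i ^ 2) (fun _ _ => sq_nonneg _) (Finset.mem_univ i)
  rw [norm_mul, Real.norm_eq_abs, Real.norm_eq_abs]
  exact mul_le_one₀ (hle p) (abs_nonneg _) (hle q)

lemma integral_mulVec_mul_mulVec (hσ : IsSphereMeasure n σ) {Q : Matrix (Fin n) (Fin n) ℝ}
    (hQ : Q * Q.transpose = 1) (p q : Fin n) :
    ∫ x, Q.mulVec x p * Q.mulVec x q ∂σ = ∫ x, x p * x q ∂σ := by
  have hcont : Continuous Q.mulVec := continuous_const.matrix_mulVec continuous_id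
  conv_rhs => rw [← hσ.invariant Q hQ]
  rw [integral_map hcont.aemeasurable (by fun_prop)]

lemma integral_mul_coord_of_ne (hσ : IsSphereMeasure n σ) {p q : Fin n} (h : p ≠ q) :
    ∫ x, x p * x q ∂σ = 0 := by
  have hreflection := integral_mulVec_mul_mulVec hσ
    (Q := Matrix.diagonal fun i => if i = p then -1 else 1) (by
      rw [Matrix.diagonal_transpose, Matrix.diagonal_mul_diagonal, ← Matrix.diagonal_one]
      congr 1
      funext i
      split_ifs <;> norm_num) p q
  simp only [Matrix.mulVec_diagonal, if_true, if_neg h.symm, one_mul, neg_mul,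
    integral_neg] at hreflection
  linarith

lemma integral_sq_coord_eq (hσ : IsSphereMeasure n σ) (p q : Fin n) :
    ∫ x, x p * x p ∂σ = ∫ x, x q * x q ∂σ := by
  have hswap := integral_mulVec_mul_mulVec hσ (Q := (Equiv.swap p q).permMatrix ℝ) (by
    rw [Matrix.transpose_permMatrix, ← Matrix.permMatrix_mul, inv_mul_cancel,
      Matrix.permMatrix_one]) q q
  simpa only [Matrix.permMatrix_mulVec, Function.comp_apply, Equiv.swap_apply_right] using hswap

lemma integral_mul_coord (hσ : IsSphereMeasure n σ) (p q : Fin n) :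
    ∫ x, x p * x q ∂σ = if p = q then (n : ℝ)⁻¹ else 0 := by
  split_ifs with h
  · subst h
    have := hσ.prob
    refine eq_inv_of_mul_eq_one_right ?_
    calc (n : ℝ) * ∫ x, x p * x p ∂σ = ∑ i, ∫ x, x i * x i ∂σ := by
          simp [integral_sq_coord_eq hσ _ p]
      _ = ∫ x, ∑ i, x i * x i ∂σ :=
          (integral_finsetSum _ fun i _ => integrable_mul_coord hσ i i).symm
      _ = ∫ _, 1 ∂σ := integral_congr_ae <| (ae_sum_sq_eq_one hσ).mono fun x hx => by
          simpa only [← sq] using hx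
      _ = 1 := by simp
  · exact integral_mul_coord_of_ne hσ h

end Moments

section Average

lemma integral_integral_sum_mul_mul {ι α β : Type*} [Fintype ι] [MeasurableSpace α]
    [MeasurableSpace β] {μ : Measure α} {ν : Measure β} (c : ι → ℂ) {u : ι → α → ℂ}
    {v : ι → β → ℂ} (hu : ∀ i, Integrable (u i) μ) (hv : ∀ i, Integrable (v i) ν) :
    ∫ x, ∫ y, ∑ i, c i * u i x * v i y ∂ν ∂μ = ∑ i, c i * (∫ x, u i x ∂μ) * ∫ y, v i y ∂ν := by
  simp only [integral_finsetSum _ fun i _ => (hv i).const_mul _, integral_const_mul]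
  rw [integral_finsetSum _ fun i _ => ((hu i).const_mul _).mul_const _]
  simp only [integral_const_mul, integral_mul_const]

variable {n m : ℕ}

lemma conj_toComplex_mul (x : Fin (2 * n) → ℝ) (i j : Fin n) :
    (starRingEnd ℂ) (toComplex x i) * toComplex x j =
      ((x ⟨i, by omega⟩ * x ⟨j, by omega⟩ + x ⟨n + i, by omega⟩ * x ⟨n + j, by omega⟩ : ℝ) : ℂ) +
      Complex.I * ((x ⟨i, by omega⟩ * x ⟨n + j, by omega⟩ -
        x ⟨n + i, by omega⟩ * x ⟨j, by omega⟩ : ℝ) : ℂ) := by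
  simp only [toComplex, map_add, map_mul, Complex.conj_ofReal, Complex.conj_I]
  push_cast
  linear_combination (-(x ⟨n + i, by omega⟩ : ℂ) * x ⟨n + j, by omega⟩) * Complex.I_mul_I

lemma integrable_conj_toComplex_mul {σ : Measure (Fin (2 * n) → ℝ)}
    (hσ : IsSphereMeasure (2 * n) σ) (i j : Fin n) :
    Integrable (fun x => (starRingEnd ℂ) (toComplex x i) * toComplex x j) σ := by
  simp only [conj_toComplex_mul]
  exact ((integrable_mul_coord hσ _ _).add (integrable_mul_coord hσ _ _)).ofReal.add
    (((integrable_mul_coord hσ _ _).sub (integrable_mul_coord hσ _ _)).ofReal.const_mul _)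

lemma integral_conj_toComplex_mul {σ : Measure (Fin (2 * n) → ℝ)}
    (hσ : IsSphereMeasure (2 * n) σ) (i j : Fin n) :
    ∫ x, (starRingEnd ℂ) (toComplex x i) * toComplex x j ∂σ = if i = j then (n : ℂ)⁻¹ else 0 := by
  have hint (p q : Fin (2 * n)) := integrable_mul_coord hσ p q
  have hij : ¬ (i : ℕ) = n + j := by omega
  have hji : ¬ n + (i : ℕ) = j := by omega
  simp only [conj_toComplex_mul]
  rw [integral_add ((hint _ _).add (hint _ _)).ofReal
      (((hint _ _).sub (hint _ _)).ofReal.const_mul _),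
    integral_const_mul, integral_complex_ofReal, integral_complex_ofReal,
    integral_add (hint _ _) (hint _ _), integral_sub (hint _ _) (hint _ _)]
  simp only [integral_mul_coord hσ, if_neg hij, if_neg hji, Fin.mk.injEq,
    Nat.add_left_cancel_iff, ← Fin.ext_iff]
  split_ifs
  · push_cast
    ring
  · simp

lemma ofReal_bavg {σ₁ : Measure (Fin (2 * n) → ℝ)} {σ₂ : Measure (Fin (2 * m) → ℝ)}
    (hσ₁ : IsSphereMeasure (2 * n) σ₁) (hσ₂ : IsSphereMeasure (2 * m) σ₂)
    {f : MvPolynomial (Fin (2 * n) ⊕ Fin (2 * m)) ℝ} {isR : Bool} (hf : f ∈ CF n m isR) :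
    (bavg σ₁ σ₂ f : ℂ) =
      (n : ℂ)⁻¹ * (m : ℂ)⁻¹ * ∑ i, ∑ k, coeffMap n m f (i, i, k, k) := by
  have hbeval (x : Fin (2 * n) → ℝ) (y : Fin (2 * m) → ℝ) : (beval f x y : ℂ) =
      ∑ p : Fin n × Fin n × Fin m × Fin m, coeffMap n m f p *
        ((starRingEnd ℂ) (toComplex x p.1) * toComplex x p.2.1) *
          ((starRingEnd ℂ) (toComplex y p.2.2.1) * toComplex y p.2.2.2) := by
    rw [ofReal_beval_eq_sum_coeffMap hf, ← sum_prod_four]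
    exact Finset.sum_congr rfl fun p _ => by ring
  simp only [bavg, ← integral_complex_ofReal, hbeval]
  rw [integral_integral_sum_mul_mul _ (fun p => integrable_conj_toComplex_mul hσ₁ _ _)
    fun p => integrable_conj_toComplex_mul hσ₂ _ _]
  simp only [integral_conj_toComplex_mul hσ₁, integral_conj_toComplex_mul hσ₂, mul_ite, ite_mul,
    mul_zero, zero_mul]
  simp only [Fintype.sum_prod_type, Finset.sum_ite_eq, Finset.mem_univ, if_true, Finset.mul_sum]
  refine Finset.sum_congr rfl fun i _ => ?_
  rw [Finset.sum_comm]
  simp only [Finset.sum_ite_eq, Finset.mem_univ, if_true]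
  exact Finset.sum_congr rfl fun k _ => by ring

lemma inner_coeffMap_qpoly (a : Coeffs n m) :
    ⟪coeffMap n m (qpoly (2 * n) (2 * m) 1 1), a⟫ = (∑ i, ∑ k, a (i, i, k, k)).re := by
  rw [real_inner_comm, PiLp.inner_apply]
  simp only [Fintype.sum_prod_type, coeffMap_qpoly, Complex.inner, ite_and]
  simp [apply_ite Complex.re, Finset.sum_ite_irrel]

lemma bavg_eq_inner {σ₁ : Measure (Fin (2 * n) → ℝ)} {σ₂ : Measure (Fin (2 * m) → ℝ)}
    (hσ₁ : IsSphereMeasure (2 * n) σ₁) (hσ₂ : IsSphereMeasure (2 * m) σ₂)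
    {f : MvPolynomial (Fin (2 * n) ⊕ Fin (2 * m)) ℝ} {isR : Bool} (hf : f ∈ CF n m isR) :
    bavg σ₁ σ₂ f = (n : ℝ)⁻¹ * (m : ℝ)⁻¹ *
      ⟪coeffMap n m (qpoly (2 * n) (2 * m) 1 1), coeffMap n m f⟫ := by
  have h := congrArg Complex.re (ofReal_bavg hσ₁ hσ₂ hf)
  rw [Complex.ofReal_re] at h
  rw [h, inner_coeffMap_qpoly, ← Complex.re_ofReal_mul]
  push_cast
  rfl

end Average

section Transport

lemma volume_preimage_le_of_volume_le {G E : Type*} [NormedAddCommGroup G] [NormedSpace ℝ G]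
    [MeasureSpace G] [BorelSpace G] [(volume : Measure G).IsAddHaarMeasure]
    [NormedAddCommGroup E] [InnerProductSpace ℝ E] [FiniteDimensional ℝ E] [MeasurableSpace E]
    [BorelSpace E] (e : G ≃L[ℝ] E) {S T : Set E} {c : ENNReal}
    (h : volume S ≤ c * volume T) : volume (e ⁻¹' S) ≤ c * volume (e ⁻¹' T) := by
  have := e.isAddHaarMeasure_map volume
  let k : ENNReal := Measure.addHaarScalarFactor (Measure.map e volume) (volume : Measure E)
  have hmap (R : Set E) : volume (e ⁻¹' R) = k * volume R := by
    calc volume (e ⁻¹' R) = Measure.map e volume R :=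
          (e.toHomeomorph.toMeasurableEquiv.map_apply R).symm
      _ = k * volume R := by
          rw [Measure.isAddLeftInvariant_eq_smul (Measure.map e volume) volume]
          rfl
  rw [hmap, hmap, mul_left_comm]
  gcongr

variable {F : Type*} [NormedAddCommGroup F] [InnerProductSpace ℝ F] [FiniteDimensional ℝ F]

lemma IsTameFamily.orthogonalProjectionOnto {V : Type*} [NormedAddCommGroup V] {h : V → F}
    (hh : IsTameFamily h) (E : Submodule ℝ F) :
    IsTameFamily fun v => E.orthogonalProjectionOnto (h v) where
  continuous := E.orthogonalProjectionOnto.continuous.comp hh.continuous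
  norm_le v hv := (E.norm_orthogonalProjectionOnto_apply_le _).trans (hh.norm_le v hv)
  abs_inner_sub_inner_le x := by
    simpa only [Submodule.inner_orthogonalProjectionOnto_eq_of_mem_right] using
      hh.abs_inner_sub_inner_le x

lemma mem_polar_image_orthogonalProjectionOnto {V : Type*} [NormedAddCommGroup V] {h : V → F}
    {E : Submodule ℝ F} {x : E} :
    x ∈ (innerₗ E).polar ((fun v => E.orthogonalProjectionOnto (h v)) '' closedBall 0 1) ↔
      ∀ v, ‖v‖ ≤ 1 → |⟪(x : F), h v⟫| ≤ 1 := by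
  simp only [LinearMap.polar_mem_iff, forall_mem_image, mem_closedBall_zero_iff,
    innerₗ_apply_apply, Submodule.inner_orthogonalProjectionOnto_eq_of_mem_right,
    Real.norm_eq_abs, real_inner_comm (x : F)]

variable {V W G : Type*} [NormedAddCommGroup V] [NormedSpace ℝ V] [FiniteDimensional ℝ V]
  [NormedAddCommGroup W] [NormedSpace ℝ W] [FiniteDimensional ℝ W]
  [NormedAddCommGroup G] [NormedSpace ℝ G] [FiniteDimensional ℝ G] [MeasureSpace G] [BorelSpace G]
  [(volume : Measure G).IsAddHaarMeasure]

theorem IsTameFamily.volume_le_of_abs_inner_le {h : V → F} {g : W → F} (hh : IsTameFamily h)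
    (hg : IsTameFamily g) (hball : ∀ v, ‖v‖ ≤ 1 → ‖h v‖ ≤ 1) {N : ℕ} {μ : ℝ} (hN : 9 ≤ N)
    (hμ : 0 < μ) (hV : Module.finrank ℝ V = 2 * N) (hW : 12 ≤ Module.finrank ℝ W)
    (hWμ : Module.finrank ℝ W * μ ≤ 4 * N) (hG : N ^ 2 ≤ 2 * Module.finrank ℝ G)
    {A : G →ₗ[ℝ] F} (hA : Function.Injective A) {S T : Set G}
    (hS : ∀ x ∈ S, ∀ y, (∀ v, ‖v‖ ≤ 1 → |⟪A y, h v⟫| ≤ 1) → |⟪A y, A x⟫| ≤ N)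
    (hT : ∀ x, (∀ w, ‖w‖ ≤ 1 → |⟪A x, g w⟫| ≤ 1) → x ∈ T) :
    volume S ≤ ENNReal.ofReal ((10 ^ 4 / √μ) ^ Module.finrank ℝ G) * volume T := by
  let E := LinearMap.range A
  borelize ↥E
  let e : G ≃L[ℝ] E := (LinearEquiv.ofInjective A hA).toContinuousLinearEquiv
  have hball' : (fun v => E.orthogonalProjectionOnto (h v)) '' closedBall 0 1 ⊆
      closedBall 0 1 := by
    rintro _ ⟨v, hv, rfl⟩
    rw [mem_closedBall_zero_iff] at hv ⊢
    exact (E.norm_orthogonalProjectionOnto_apply_le _).trans (hball v hv)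
  have hvol := volume_preimage_le_of_volume_le e <|
    (hh.orthogonalProjectionOnto E).volume_smul_bipolar_le (hg.orthogonalProjectionOnto E) hball'
      hN hμ hV hW hWμ (by rwa [← e.toLinearEquiv.finrank_eq])
  rw [← e.toLinearEquiv.finrank_eq] at hvol
  refine (measure_mono fun x hx => ?_).trans (hvol.trans (mul_le_mul_right (measure_mono
    fun x hx => hT x (mem_polar_image_orthogonalProjectionOnto.1 hx)) _))
  rw [mem_preimage, mem_smul_polar_innerₗ (by positivity)]
  intro a ha
  obtain ⟨y, rfl⟩ := e.surjective a
  exact hS x hx y (mem_polar_image_orthogonalProjectionOnto.1 ha)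

end Transport

section Cones

variable {n m : ℕ} {isR : Bool} {σ₁ : Measure (Fin (2 * n) → ℝ)} {σ₂ : Measure (Fin (2 * m) → ℝ)}
  {f : MvPolynomial (Fin (2 * n) ⊕ Fin (2 * m)) ℝ}

lemma tildeCF_mono {K L : Set (MvPolynomial (Fin (2 * n) ⊕ Fin (2 * m)) ℝ)} (h : K ⊆ L) :
    tildeCF n m isR σ₁ σ₂ K ⊆ tildeCF n m isR σ₁ σ₂ L := fun _ hf => ⟨hf.1, h hf.2⟩

lemma PosCF_subset_PRSet : PosCF n m true ⊆ PRSet n m := fun _ hf => ⟨hf.1, fun _ _ => hf.2 _ _⟩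

lemma inner_coeffMap_qpoly_rankOne (v : EuclideanSpace ℂ (Fin n × Fin m)) :
    ⟪coeffMap n m (qpoly (2 * n) (2 * m) 1 1), rankOne v⟫ = ‖v‖ ^ 2 := by
  rw [inner_coeffMap_qpoly, EuclideanSpace.norm_sq_eq, Fintype.sum_prod_type,
    ← Complex.ofReal_re (∑ i, ∑ k, ‖v (i, k)‖ ^ 2)]
  simp only [rankOne_apply, Complex.mul_conj']
  push_cast
  rfl

lemma inner_coeffMap_qpoly_self :
    ⟪coeffMap n m (qpoly (2 * n) (2 * m) 1 1), coeffMap n m (qpoly (2 * n) (2 * m) 1 1)⟫ =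
      (n * m : ℕ) := by
  rw [inner_coeffMap_qpoly]
  simp [coeffMap_qpoly]

lemma inner_coeffMap_qpoly_eq_zero (hnm : n * m ≠ 0) (hσ₁ : IsSphereMeasure (2 * n) σ₁)
    (hσ₂ : IsSphereMeasure (2 * m) σ₂) (hf : f ∈ MCF n m isR σ₁ σ₂) :
    ⟪coeffMap n m (qpoly (2 * n) (2 * m) 1 1), coeffMap n m f⟫ = 0 := by
  have havg := hf.2
  rw [bavg_eq_inner hσ₁ hσ₂ hf.1, ← mul_inv, mul_eq_zero, inv_eq_zero] at havg
  exact havg.resolve_left (by exact_mod_cast hnm)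

lemma beval_nonneg_of_mem_SqCF (hf : f ∈ SqCF n m isR) (x : Fin (2 * n) → ℝ)
    (y : Fin (2 * m) → ℝ) : 0 ≤ beval f x y := by
  obtain ⟨N, b, -, hb⟩ := hf
  have hbeval : (beval f x y : ℂ) =
      ((∑ r, ‖∑ i, ∑ k, b r i k * toComplex x i * toComplex y k‖ ^ 2 : ℝ) : ℂ) := by
    rw [ofReal_beval, hb]
    simp only [map_sum, map_mul, eval_C, eval_splitPoint_Zc, eval_splitPoint_Zv,
      eval_splitPoint_Wc, eval_splitPoint_Wv, Complex.ofReal_sum, Complex.ofReal_pow,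
      ← Complex.conj_mul']
  rw [Complex.ofReal_inj.1 hbeval]
  positivity

lemma tildeCF_SqCF_subset_tildeCF_PosCF :
    tildeCF n m isR σ₁ σ₂ (SqCF n m isR) ⊆ tildeCF n m isR σ₁ σ₂ (PosCF n m isR) :=
  fun _ hf => ⟨hf.1, add_mem_CF hf.1.1 (qpoly_mem_CF isR), beval_nonneg_of_mem_SqCF hf.2⟩

/-- An element of `S̃q` is a sum of rank one tensors `rankOne (u r)`, shifted by `q`; its vanishing
mean forces `∑ r, ‖u r‖ ^ 2 = n * m`. -/
lemma abs_inner_coeffMap_add_qpoly_le (hnm : n * m ≠ 0) (hσ₁ : IsSphereMeasure (2 * n) σ₁)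
    (hσ₂ : IsSphereMeasure (2 * m) σ₂) (hf : f ∈ tildeCF n m isR σ₁ σ₂ (SqCF n m isR))
    {g : Coeffs n m} {M : ℝ} (hg : ∀ v, ‖v‖ ≤ 1 → |⟪g, rankOne v⟫| ≤ M) :
    |⟪g, coeffMap n m (f + qpoly (2 * n) (2 * m) 1 1)⟫| ≤ M * (n * m : ℕ) := by
  obtain ⟨hfM, N, b, -, hb⟩ := hf
  set u : Fin N → EuclideanSpace ℂ (Fin n × Fin m) :=
    fun r => WithLp.toLp 2 fun q => (starRingEnd ℂ) (b r q.1 q.2)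
  have hdecomp : coeffMap n m (f + qpoly (2 * n) (2 * m) 1 1) = ∑ r, rankOne (u r) :=
    coeffMap_of_map_eq_sum hb
  have hnorm : ∑ r, ‖u r‖ ^ 2 = (n * m : ℕ) := by
    calc ∑ r, ‖u r‖ ^ 2
        = ⟪coeffMap n m (qpoly (2 * n) (2 * m) 1 1),
            coeffMap n m (f + qpoly (2 * n) (2 * m) 1 1)⟫ := by
          simp only [hdecomp, inner_sum, inner_coeffMap_qpoly_rankOne]
      _ = (n * m : ℕ) := by
          rw [map_add, inner_add_right, inner_coeffMap_qpoly_eq_zero hnm hσ₁ hσ₂ hfM,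
            inner_coeffMap_qpoly_self, zero_add]
  rw [hdecomp, inner_sum, ← hnorm, Finset.mul_sum]
  exact (Finset.abs_sum_le_sum_abs _ _).trans <| Finset.sum_le_sum fun r _ =>
    abs_quadraticForm_le (Q := (innerₗ _ g).compQuadraticMap rankOne) hg (u r)

lemma add_qpoly_mem_PosCF (hf : f ∈ CF n m isR)
    (hle : ∀ z w, ‖z‖ ≤ 1 → ‖w‖ ≤ 1 → |⟪coeffMap n m f, rankOne (tensor z w)⟫| ≤ 1) :
    f + qpoly (2 * n) (2 * m) 1 1 ∈ PosCF n m isR := by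
  refine ⟨add_mem_CF hf (qpoly_mem_CF isR), fun x y => ?_⟩
  have hbound := abs_inner_rankOne_tensor_le hle (WithLp.toLp 2 (toComplex x))
    (WithLp.toLp 2 (toComplex y))
  rw [← beval_eq_inner hf, norm_toLp_toComplex_sq, norm_toLp_toComplex_sq, one_mul,
    ← beval_qpoly] at hbound
  have hadd : beval (f + qpoly (2 * n) (2 * m) 1 1) x y =
      beval f x y + beval (qpoly (2 * n) (2 * m) 1 1) x y := map_add _ _ _
  rw [hadd]
  linarith [neg_le_of_abs_le hbound]

lemma isTameFamily_rankOne :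
    IsTameFamily (rankOne : EuclideanSpace ℂ (Fin n × Fin m) → Coeffs n m) :=
  isTameFamily_quadraticMap continuous_rankOne fun v => (norm_rankOne v).le

lemma isTameFamily_rankOne_tensor :
    IsTameFamily fun p : EuclideanSpace ℂ (Fin n) × EuclideanSpace ℂ (Fin m) =>
      rankOne (tensor p.1 p.2) :=
  isTameFamily_quadraticMap_bilinear continuous_rankOne (fun v => (norm_rankOne v).le)
    continuous_tensor fun z w => (norm_tensor z w).le

lemma two_mul_add_mul_min_le (n m : ℕ) : (2 * n + 2 * m) * min n m ≤ 4 * (n * m) := by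
  have hn := Nat.mul_le_mul_left n (min_le_right n m)
  have hm := Nat.mul_le_mul_right m (min_le_left n m)
  linarith

variable {D : ℕ} {ψ : (Fin D → ℝ) →ₗ[ℝ] MvPolynomial (Fin (2 * n) ⊕ Fin (2 * m)) ℝ}

theorem volume_preimage_SqCF_le (hnm : 9 ≤ n * m) (hσ₁ : IsSphereMeasure (2 * n) σ₁)
    (hσ₂ : IsSphereMeasure (2 * m) σ₂) (hψ : Function.Injective ψ)
    (hrange : Set.range ψ = MCF n m isR σ₁ σ₂) (hD : (n * m) ^ 2 ≤ 2 * D) :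
    volume (⇑ψ ⁻¹' tildeCF n m isR σ₁ σ₂ (SqCF n m isR)) ≤
      ENNReal.ofReal ((10 ^ 4 / √(min n m : ℕ)) ^ D) *
        volume (⇑ψ ⁻¹' tildeCF n m isR σ₁ σ₂ (PosCF n m isR)) := by
  have hmem (c : Fin D → ℝ) : ψ c ∈ MCF n m isR σ₁ σ₂ := hrange ▸ mem_range_self c
  have hinj : Function.Injective (coeffMap n m ∘ₗ ψ) := fun a b hab =>
    hψ (coeffMap_injOn isR (hmem a).1 (hmem b).1 hab)
  have hmin : 0 < min n m := lt_min_iff.2 (CanonicallyOrderedAdd.mul_pos.1 (by omega))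
  have hsum : 6 ≤ n + m := by
    by_contra! h
    nlinarith [four_mul_le_sq_add n m, Nat.le_of_lt_succ h]
  have hV : Module.finrank ℝ (EuclideanSpace ℂ (Fin n × Fin m)) = 2 * (n * m) := by
    simp [finrank_real_euclideanSpace]
  have hW : Module.finrank ℝ (EuclideanSpace ℂ (Fin n) × EuclideanSpace ℂ (Fin m)) =
      2 * n + 2 * m := by
    simp [Module.finrank_prod, finrank_real_euclideanSpace]
  have hvol := isTameFamily_rankOne.volume_le_of_abs_inner_le (A := coeffMap n m ∘ₗ ψ)
    (S := ⇑ψ ⁻¹' tildeCF n m isR σ₁ σ₂ (SqCF n m isR))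
    (T := ⇑ψ ⁻¹' tildeCF n m isR σ₁ σ₂ (PosCF n m isR)) isTameFamily_rankOne_tensor
    (fun v hv => (norm_rankOne v).trans_le (pow_le_one₀ (norm_nonneg v) hv)) hnm
    (μ := (min n m : ℕ)) (by exact_mod_cast hmin) hV (by rw [hW]; linarith)
    (by rw [hW]; exact_mod_cast two_mul_add_mul_min_le n m)
    (by rwa [Module.finrank_fin_fun]) hinj (fun x hx y hy => ?_) fun x hx => ?_
  · rwa [Module.finrank_fin_fun] at hvol
  · have hle := abs_inner_coeffMap_add_qpoly_le (by omega) hσ₁ hσ₂ hx hy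
    have hzero := inner_coeffMap_qpoly_eq_zero (by omega) hσ₁ hσ₂ (hmem y)
    rw [real_inner_comm] at hzero
    rwa [map_add, inner_add_right, LinearMap.comp_apply, hzero, add_zero, one_mul] at hle
  · exact ⟨hmem x, add_qpoly_mem_PosCF (hmem x).1 fun z w hz hw =>
      hx (z, w) (by rw [Prod.norm_mk]; exact max_le hz hw)⟩

end Cones

section Constants

lemma sq_le_two_mul_DCF {n m : ℕ} (isR : Bool) (hnm : 1 < n * m) :
    (n * m) ^ 2 ≤ 2 * DCF n m isR := by
  rw [DCF, ← mul_pow]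
  generalize n * m = N at hnm
  have hsq : 2 * N ≤ N ^ 2 := by nlinarith
  cases isR
  · simp only [Bool.false_eq_true, if_false]
    omega
  · have hmul : N * (N + 1) = N ^ 2 + N := by ring
    have heven : (N * (N + 1)) % 2 = 0 := Nat.even_iff.1 (Nat.even_mul_succ_self N)
    simp only [if_true]
    rw [hmul] at heven ⊢
    omega

/-- The base of the exponential bound, without the factor `√(min n m - 1 / 2)`; the parameter `d`
is `dim_ℝ 𝔽`. -/
def boundConstant (d : ℝ) : ℝ :=
  √((2 : ℝ) ^ ((28 : ℝ) - d)) * (3 : ℝ) ^ (-(5 : ℝ) / 2) * (5 : ℝ) ^ 2 * (10 : ℝ) ^ ((2 : ℝ) / 9)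

lemma le_boundConstant {d : ℝ} (hd : d ≤ 2) : 12800 ≤ boundConstant d := by
  have htwo : (8192 : ℝ) ≤ √((2 : ℝ) ^ ((28 : ℝ) - d)) := by
    refine Real.le_sqrt_of_sq_le ?_
    calc (8192 : ℝ) ^ 2 = (2 : ℝ) ^ (26 : ℝ) := by norm_num
      _ ≤ _ := Real.rpow_le_rpow_of_exponent_le (by norm_num) (by linarith)
  have hthree : (1 / 16 : ℝ) ≤ (3 : ℝ) ^ (-(5 : ℝ) / 2) := by
    rw [neg_div, Real.rpow_neg (by norm_num), one_div]
    refine inv_anti₀ (by positivity) ?_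
    rw [show (5 : ℝ) / 2 = 5 * (1 / 2) by norm_num, Real.rpow_mul (by norm_num),
      ← Real.sqrt_eq_rpow]
    exact (Real.sqrt_le_left (by norm_num)).2 (by norm_num)
  have hten : (1 : ℝ) ≤ (10 : ℝ) ^ ((2 : ℝ) / 9) := Real.one_le_rpow (by norm_num) (by norm_num)
  calc (12800 : ℝ) = 8192 * (1 / 16) * 5 ^ 2 * 1 := by norm_num
    _ ≤ boundConstant d := by unfold boundConstant; gcongr

lemma div_sqrt_lt_boundConstant_div {d μ : ℝ} (hd : d ≤ 2) (hμ : 1 ≤ μ) :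
    10 ^ 4 / √μ < boundConstant d / √(μ - 1 / 2) :=
  div_lt_div₀ (by linarith [le_boundConstant hd]) (Real.sqrt_le_sqrt (by linarith))
    (by linarith [le_boundConstant hd]) (Real.sqrt_pos.2 (by linarith))

lemma one_lt_boundConstant_div {d μ : ℝ} (hd : d ≤ 2) (hμ : 1 ≤ μ) (hμ' : μ ≤ 2) :
    1 < boundConstant d / √(μ - 1 / 2) := by
  rw [one_lt_div (Real.sqrt_pos.2 (by linarith))]
  calc √(μ - 1 / 2) ≤ 2 := Real.sqrt_le_left (by norm_num) |>.2 (by linarith)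
    _ < 12800 := by norm_num
    _ ≤ boundConstant d := le_boundConstant hd

end Constants

section Probability

variable {n m D : ℕ} {isR : Bool} {σ₁ : Measure (Fin (2 * n) → ℝ)}
  {σ₂ : Measure (Fin (2 * m) → ℝ)}
  {ψ : (Fin D → ℝ) →ₗ[ℝ] MvPolynomial (Fin (2 * n) ⊕ Fin (2 * m)) ℝ} {d : ℝ}

lemma volume_SqCF_div_PosCF_lt_of_nine_le (hnm : 9 ≤ n * m) (hD : D = DCF n m isR)
    (hσ₁ : IsSphereMeasure (2 * n) σ₁) (hσ₂ : IsSphereMeasure (2 * m) σ₂)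
    (hψ : IsUnitaryParam (2 * n) (2 * m) D σ₁ σ₂ (MCF n m isR σ₁ σ₂) ψ) (hd : d ≤ 2) :
    volume (⇑ψ ⁻¹' tildeCF n m isR σ₁ σ₂ (SqCF n m isR)) /
        volume (⇑ψ ⁻¹' tildeCF n m isR σ₁ σ₂ (PosCF n m isR)) <
      ENNReal.ofReal (boundConstant d / √((min n m : ℕ) - 1 / 2)) ^ D := by
  have hmin : 0 < min n m := lt_min_iff.2 (CanonicallyOrderedAdd.mul_pos.1 (by omega))
  have hdim : (n * m) ^ 2 ≤ 2 * D := hD ▸ sq_le_two_mul_DCF isR (by omega)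
  have hlt : 10 ^ 4 / √(min n m : ℕ) < boundConstant d / √((min n m : ℕ) - 1 / 2) :=
    div_sqrt_lt_boundConstant_div hd (by exact_mod_cast hmin)
  calc _ ≤ ENNReal.ofReal (10 ^ 4 / √(min n m : ℕ)) ^ D := by
        rw [← ENNReal.ofReal_pow (by positivity)]
        exact ENNReal.div_le_of_le_mul
          (volume_preimage_SqCF_le hnm hσ₁ hσ₂ hψ.inj hψ.range hdim)
    _ < _ := ENNReal.pow_lt_pow_left (by nlinarith)
        ((ENNReal.ofReal_lt_ofReal_iff_of_nonneg (by positivity)).2 hlt)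

lemma volume_SqCF_div_PosCF_lt_of_lt_nine (hnm : 1 < n * m) (hnm' : n * m < 9)
    (hD : D = DCF n m isR) (hd : d ≤ 2) :
    volume (⇑ψ ⁻¹' tildeCF n m isR σ₁ σ₂ (SqCF n m isR)) /
        volume (⇑ψ ⁻¹' tildeCF n m isR σ₁ σ₂ (PosCF n m isR)) <
      ENNReal.ofReal (boundConstant d / √((min n m : ℕ) - 1 / 2)) ^ D := by
  have hmin : 0 < min n m := lt_min_iff.2 (CanonicallyOrderedAdd.mul_pos.1 (by omega))
  have hmin_le : min n m ≤ 2 := by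
    by_contra! h
    nlinarith [lt_min_iff.1 h]
  have hdim : (n * m) ^ 2 ≤ 2 * D := hD ▸ sq_le_two_mul_DCF isR hnm
  have hlt : 1 < boundConstant d / √((min n m : ℕ) - 1 / 2) :=
    one_lt_boundConstant_div hd (by exact_mod_cast hmin) (by exact_mod_cast hmin_le)
  calc _ ≤ 1 := ENNReal.div_le_of_le_mul <| by
        rw [one_mul]
        exact measure_mono (preimage_mono tildeCF_SqCF_subset_tildeCF_PosCF)
    _ < _ := one_lt_pow₀ (ENNReal.one_lt_ofReal.2 hlt) (by nlinarith)

end Probability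

end PositiveMaps

open BiformPaper in
theorem statement8_general (isR : Bool) (n m : ℕ) (hnm : 1 < n * m)
    (D : ℕ) (hD : D = DCF n m isR)
    (σ₁ : Measure (Fin (2 * n) → ℝ)) (σ₂ : Measure (Fin (2 * m) → ℝ))
    (hσ₁ : IsSphereMeasure (2 * n) σ₁) (hσ₂ : IsSphereMeasure (2 * m) σ₂)
    (ψ : (Fin D → ℝ) →ₗ[ℝ] MvPolynomial (Fin (2 * n) ⊕ Fin (2 * m)) ℝ)
    (hψ : IsUnitaryParam (2 * n) (2 * m) D σ₁ σ₂ (MCF n m isR σ₁ σ₂) ψ) :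
    (if isR then
        volume (⇑ψ ⁻¹' tildeCF n m true σ₁ σ₂ (SqCF n m true)) /
          volume (⇑ψ ⁻¹' tildeCF n m true σ₁ σ₂ (PRSet n m))
      else
        volume (⇑ψ ⁻¹' tildeCF n m false σ₁ σ₂ (SqCF n m false)) /
          volume (⇑ψ ⁻¹' tildeCF n m false σ₁ σ₂ (PosCF n m false))) ≤
      volume (⇑ψ ⁻¹' tildeCF n m isR σ₁ σ₂ (SqCF n m isR)) /
        volume (⇑ψ ⁻¹' tildeCF n m isR σ₁ σ₂ (PosCF n m isR)) ∧
    volume (⇑ψ ⁻¹' tildeCF n m isR σ₁ σ₂ (SqCF n m isR)) /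
        volume (⇑ψ ⁻¹' tildeCF n m isR σ₁ σ₂ (PosCF n m isR)) <
      ENNReal.ofReal (Real.sqrt ((2 : ℝ) ^ ((28 : ℝ) - (if isR then (1 : ℝ) else 2))) *
          (3 : ℝ) ^ (-(5 : ℝ) / 2) * (5 : ℝ) ^ 2 * (10 : ℝ) ^ ((2 : ℝ) / 9) /
            Real.sqrt (((min n m : ℕ) : ℝ) - 1 / 2)) ^ D := by
  refine ⟨?_, ?_⟩
  · cases isR
    · exact le_rfl
    · exact ENNReal.div_le_div_left (measure_mono (Set.preimage_mono
        (PositiveMaps.tildeCF_mono PositiveMaps.PosCF_subset_PRSet))) _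
  · have hd : (if isR then (1 : ℝ) else 2) ≤ 2 := by split_ifs <;> norm_num
    rcases lt_or_ge (n * m) 9 with hlt | hle
    · exact PositiveMaps.volume_SqCF_div_PosCF_lt_of_lt_nine hnm hlt hD hd
    · exact PositiveMaps.volume_SqCF_div_PosCF_lt_of_nine_le hle hD hσ₁ hσ₂ hψ hd


open BiformPaper in
/-- **Theorem (probability that a positive map `Φ : M_n(𝔽) → M_m(𝔽)` is completely
positive).**  For `𝔽 ∈ {ℝ, ℂ}` (`isR = true` for `𝔽 = ℝ`, `isR = false` for `𝔽 = ℂ`)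
and integers `n, m ≥ 3`, the probability `p^𝔽_{n,m}` (equal to
`Vol S̃q_{𝒞_ℝ} / Vol 𝒫̃_{𝒞_ℝ}` for `𝔽 = ℝ`, and to `Vol S̃q_{𝒞_ℂ} / Vol P̃os_{𝒞_ℂ}` for
`𝔽 = ℂ`) satisfies
`p^𝔽_{n,m} ≤ Vol S̃q_{𝒞_𝔽} / Vol P̃os_{𝒞_𝔽}
  < ((2^{28−dim_ℝ𝔽})^{1/2}·3^{−5/2}·5²·10^{2/9}/√(min(n,m)−1/2))^{D_{𝓜_{𝒞_𝔽}}}`. -/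
theorem statement8 (isR : Bool) (n m : ℕ) (hn : 3 ≤ n) (hm : 3 ≤ m)
    (D : ℕ) (hD : D = DCF n m isR)
    (σ₁ : Measure (Fin (2 * n) → ℝ)) (σ₂ : Measure (Fin (2 * m) → ℝ))
    (hσ₁ : IsSphereMeasure (2 * n) σ₁) (hσ₂ : IsSphereMeasure (2 * m) σ₂)
    (ψ : (Fin D → ℝ) →ₗ[ℝ] MvPolynomial (Fin (2 * n) ⊕ Fin (2 * m)) ℝ)
    (hψ : IsUnitaryParam (2 * n) (2 * m) D σ₁ σ₂ (MCF n m isR σ₁ σ₂) ψ) :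
    (if isR then
        volume (⇑ψ ⁻¹' tildeCF n m true σ₁ σ₂ (SqCF n m true)) /
          volume (⇑ψ ⁻¹' tildeCF n m true σ₁ σ₂ (PRSet n m))
      else
        volume (⇑ψ ⁻¹' tildeCF n m false σ₁ σ₂ (SqCF n m false)) /
          volume (⇑ψ ⁻¹' tildeCF n m false σ₁ σ₂ (PosCF n m false))) ≤
      volume (⇑ψ ⁻¹' tildeCF n m isR σ₁ σ₂ (SqCF n m isR)) /
        volume (⇑ψ ⁻¹' tildeCF n m isR σ₁ σ₂ (PosCF n m isR)) ∧
    volume (⇑ψ ⁻¹' tildeCF n m isR σ₁ σ₂ (SqCF n m isR)) /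
        volume (⇑ψ ⁻¹' tildeCF n m isR σ₁ σ₂ (PosCF n m isR)) <
      ENNReal.ofReal (Real.sqrt ((2 : ℝ) ^ ((28 : ℝ) - (if isR then (1 : ℝ) else 2))) *
          (3 : ℝ) ^ (-(5 : ℝ) / 2) * (5 : ℝ) ^ 2 * (10 : ℝ) ^ ((2 : ℝ) / 9) /
            Real.sqrt (((min n m : ℕ) : ℝ) - 1 / 2)) ^ D :=
  statement8_general isR n m (by nlinarith) D hD σ₁ σ₂ hσ₁ hσ₂ ψ hψ
end
end
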